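/- Levi's Enlargement Lemma: Let Σ be an arrangement of pseudolines in ℝ² and let a, b be two distinct points of ℝ² such that no pseudoline of Σ contains both a and b. Then there exists a pseudoline σ with a ∈ σ and b ∈ σ such that Σ ∪ {σ} is again an arrangement of pseudolines. -/

import Mathlib

open Set Topology

noncomputable section

abbrev Plane : Type := EuclideanSpace ℝ (Fin 2)

abbrev SpherePt : Type := ↥(Metric.sphere (0 : EuclideanSpace ℝ (Fin 3)) 1)

/-- `γ` crosses the curve `σ` at `p`: `p` lies on both sets, and in every neighbourhood of `p`
there is a smaller neighbourhood `V` such that `V \ σ` splits into two connected "sides",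
both of which meet `γ`. -/
def CrossesAt {X : Type*} [TopologicalSpace X] (σ γ : Set X) (p : X) : Prop :=
  p ∈ σ ∧ p ∈ γ ∧ ∀ U ∈ nhds p, ∃ V ∈ nhds p, V ⊆ U ∧
    ∃ C₁ C₂ : Set X, V \ σ = C₁ ∪ C₂ ∧ Disjoint C₁ C₂ ∧
      IsPreconnected C₁ ∧ IsPreconnected C₂ ∧ (γ ∩ C₁).Nonempty ∧ (γ ∩ C₂).Nonempty

/-- `Δ` is one of the closed regions ("closed discs") bounded by the curve `C`:
it is the union of `C` with a connected component of the complement of `C`. -/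
def IsClosedSide {X : Type*} [TopologicalSpace X] (C Δ : Set X) : Prop :=
  ∃ q, q ∉ C ∧ Δ = connectedComponentIn Cᶜ q ∪ C

/-- `Δ` is one of the open regions ("open discs") bounded by the curve `C`. -/
def IsOpenSide {X : Type*} [TopologicalSpace X] (C Δ : Set X) : Prop :=
  ∃ q, q ∉ C ∧ Δ = connectedComponentIn Cᶜ q

/-- `G` is a face (a connected component of the complement) of the point set `A`. -/
def IsFaceOf {X : Type*} [TopologicalSpace X] (A G : Set X) : Prop :=
  ∃ q, q ∉ A ∧ G = connectedComponentIn Aᶜ q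

/-- A good drawing of the complete graph `K_n` in the space `X`. -/
structure GoodDrawing (n : ℕ) (X : Type*) [TopologicalSpace X] where
  vtx : Fin n → X
  arc : Fin n → Fin n → Set X
  vtx_inj : Function.Injective vtx
  arc_symm : ∀ u v, arc u v = arc v u
  isArc : ∀ u v, u ≠ v → ∃ f : ℝ → X, ContinuousOn f (Set.Icc 0 1) ∧
    Set.InjOn f (Set.Icc 0 1) ∧ f 0 = vtx u ∧ f 1 = vtx v ∧ arc u v = f '' Set.Icc 0 1
  vtx_not_mem : ∀ u v w, u ≠ v → w ≠ u → w ≠ v → vtx w ∉ arc u v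
  adj_arcs : ∀ u v w, u ≠ v → u ≠ w → v ≠ w → arc u v ∩ arc u w = {vtx u}
  indep_arcs : ∀ u v x y : Fin n, u ≠ v → x ≠ y → u ≠ x → u ≠ y → v ≠ x → v ≠ y →
    (arc u v ∩ arc x y).Subsingleton ∧
      ∀ p ∈ arc u v ∩ arc x y,
        CrossesAt (arc u v) (arc x y) p ∧ CrossesAt (arc x y) (arc u v) p
  no_triple_pt : ∀ p : X, p ∉ Set.range vtx → ∀ u v x y s t : Fin n,
    u ≠ v → x ≠ y → s ≠ t →
    ({u, v} : Finset (Fin n)) ≠ {x, y} → ({u, v} : Finset (Fin n)) ≠ {s, t} →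
    ({x, y} : Finset (Fin n)) ≠ {s, t} →
    ¬(p ∈ arc u v ∧ p ∈ arc x y ∧ p ∈ arc s t)

namespace GoodDrawing

variable {n : ℕ} {X : Type*} [TopologicalSpace X]

/-- The point set of the subdrawing induced by the set `W` of vertices. -/
def image (D : GoodDrawing n X) (W : Set (Fin n)) : Set X :=
  (D.vtx '' W) ∪ ⋃ u ∈ W, ⋃ v ∈ W, ⋃ (_ : u ≠ v), D.arc u v

/-- The simple closed curve that is the drawing of the 3-cycle on `a`, `b`, `c`. -/
def tri (D : GoodDrawing n X) (a b c : Fin n) : Set X :=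
  D.arc a b ∪ D.arc b c ∪ D.arc a c

/-- `Δ` is convex: it contains the arc between any two vertex points it contains. -/
def ConvexDisc (D : GoodDrawing n X) (Δ : Set X) : Prop :=
  ∀ x y : Fin n, x ≠ y → D.vtx x ∈ Δ → D.vtx y ∈ Δ → D.arc x y ⊆ Δ

/-- `F` is a face of the drawing `D`. -/
def IsFace (D : GoodDrawing n X) (F : Set X) : Prop :=
  IsFaceOf (D.image Set.univ) F

/-- `D` is face-convex with outer face `F`. -/
def FaceConvex (D : GoodDrawing n X) (F : Set X) : Prop :=
  D.IsFace F ∧ ∀ a b c : Fin n, a ≠ b → a ≠ c → b ≠ c →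
    ∀ Δ : Set X, IsClosedSide (D.tri a b c) Δ → ¬F ⊆ Δ → D.ConvexDisc Δ

/-- `D` is a convex drawing: every 3-cycle has at least one convex closed side. -/
def IsConvex (D : GoodDrawing n X) : Prop :=
  ∀ a b c : Fin n, a ≠ b → a ≠ c → b ≠ c →
    ∃ Δ : Set X, IsClosedSide (D.tri a b c) Δ ∧ D.ConvexDisc Δ

/-- The closed curve drawn by the cycle `c 0, c 1, …, c (m-1), c 0` of `K_n`. -/
def cycCurve (D : GoodDrawing n X) {m : ℕ} [NeZero m] (c : Fin m → Fin n) : Set X :=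
  ⋃ i : Fin m, D.arc (c i) (c (i + 1))

/-- `Δ` is the convex hull `Δ_W` of the vertex set `W` (relative to the outer face `F`):
the face of the subdrawing `D[W]` containing `F` is bounded by a cycle `C_W` on vertices
of `W`, and `Δ` is the closed disc bounded by `D[C_W]` disjoint from `F`. -/
def IsHull (D : GoodDrawing n X) (F : Set X) (W : Set (Fin n)) (Δ : Set X) : Prop :=
  ∃ (m : ℕ) (c : Fin (m + 3) → Fin n), Function.Injective c ∧ (∀ i, c i ∈ W) ∧
    (∃ G : Set X, IsFaceOf (D.image W) G ∧ F ⊆ G ∧ frontier G = D.cycCurve c) ∧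
    IsClosedSide (D.cycCurve c) Δ ∧ Disjoint F Δ

/-- The data of the two local sides `C 0`, `C 1` of the arc `D[uv]` at an interior
point `p` of the arc. -/
def LocalSides (D : GoodDrawing n X) (u v : Fin n) (p : X) (C : Fin 2 → Set X) : Prop :=
  p ∈ D.arc u v ∧ p ≠ D.vtx u ∧ p ≠ D.vtx v ∧
    ∃ V ∈ nhds p, C 0 ∪ C 1 = V \ D.arc u v ∧ Disjoint (C 0) (C 1) ∧
      IsPreconnected (C 0) ∧ IsPreconnected (C 1) ∧ (C 0).Nonempty ∧ (C 1).Nonempty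

/-- Relative to the outer face `F` and the local sides `C` of `D[uv]` at `p`, the
vertex `w` is on side `i` of `uv`: the closed disc bounded by `D[{u,v,w}]` not
containing `F` lies locally on side `i` of `D[uv]`. -/
def OnSide (D : GoodDrawing n X) (F : Set X) (u v : Fin n) (p : X) (C : Fin 2 → Set X)
    (i : Fin 2) (w : Fin n) : Prop :=
  w ≠ u ∧ w ≠ v ∧ ∃ Δ : Set X, IsClosedSide (D.tri u v w) Δ ∧ ¬F ⊆ Δ ∧
    ∃ V ∈ nhds p, C i ∩ V ⊆ Δ

/-- `Side(uv, i)`: the set consisting of `u`, `v` and all vertices on side `i` of `uv`. -/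
def SideSet (D : GoodDrawing n X) (F : Set X) (u v : Fin n) (p : X) (C : Fin 2 → Set X)
    (i : Fin 2) : Set (Fin n) :=
  {u, v} ∪ {w : Fin n | D.OnSide F u v p C i w}

/-- The edge-arcs `D[uv]` and `D[xy]` cross: they share a non-vertex point. -/
def Crosses (D : GoodDrawing n X) (u v x y : Fin n) : Prop :=
  ∃ p : X, p ∈ D.arc u v ∩ D.arc x y ∧ p ∉ Set.range D.vtx

/-- The set of empty triangles of `D`: pairs of a 3-set of vertices together with an
open disc bounded by the corresponding triangle containing no vertex point. -/
def emptyTriangles (D : GoodDrawing n X) : Set (Finset (Fin n) × Set X) :=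
  {T | ∃ a b c : Fin n, a ≠ b ∧ a ≠ c ∧ b ≠ c ∧ T.1 = {a, b, c} ∧
    IsOpenSide (D.tri a b c) T.2 ∧ ∀ i, D.vtx i ∉ T.2}

end GoodDrawing

/-- A pseudoline in the plane. -/
def IsPseudoline (σ : Set Plane) : Prop :=
  IsClosed σ ∧ Nonempty (↥σ ≃ₜ ℝ) ∧ ¬IsPreconnected σᶜ

/-- An arrangement of pseudolines: any two distinct members meet in exactly one
point, at which they cross. -/
def IsArrangement (A : Finset (Set Plane)) : Prop :=
  (∀ σ ∈ A, IsPseudoline σ) ∧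
    ∀ σ ∈ A, ∀ τ ∈ A, σ ≠ τ →
      ∃ p : Plane, σ ∩ τ = {p} ∧ CrossesAt σ τ p ∧ CrossesAt τ σ p

/-- A planar good drawing of `K_n` is pseudolinear if some arrangement of pseudolines
contains, for each edge, a distinct pseudoline containing that edge-arc. -/
def GoodDrawing.Pseudolinear {n : ℕ} (D : GoodDrawing n Plane) : Prop :=
  ∃ (A : Finset (Set Plane)) (L : Fin n → Fin n → Set Plane), IsArrangement A ∧
    (∀ u v, u ≠ v → L u v ∈ A ∧ D.arc u v ⊆ L u v) ∧
    (∀ u v, L u v = L v u) ∧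
    ∀ u v x y : Fin n, u ≠ v → x ≠ y →
      ({u, v} : Finset (Fin n)) ≠ {x, y} → L u v ≠ L x y


namespace Levi
open Filter OnePoint

/-! ### The sphere -/

abbrev Sph : Type := OnePoint ℂ

def sphHomeo : Sph ≃ₜ SpherePt :=
  onePointEquivSphereOfFinrankEq (V := ℂ) (ι := Fin 3) (by simp [Complex.finrank_real_complex])

instance : TopologicalSpace.MetrizableSpace Sph := sphHomeo.isEmbedding.metrizableSpace

instance : LocallyPathConnectedSpace Sph := by
  have : Fact (Module.finrank ℝ (EuclideanSpace ℝ (Fin 3)) = 2 + 1) := ⟨by simp⟩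
  have : LocallyPathConnectedSpace SpherePt :=
    ChartedSpace.locallyPathConnectedSpace (EuclideanSpace ℝ (Fin 2)) SpherePt
  exact sphHomeo.isOpenEmbedding.locallyPathConnectedSpace

lemma exists_homeo_infty (p : Sph) : ∃ T : Sph ≃ₜ Sph, T p = ∞ := by
  set v := sphHomeo p with hv
  set w := sphHomeo ∞ with hw
  have hn : ‖(v : EuclideanSpace ℝ (Fin 3))‖ = ‖(w : EuclideanSpace ℝ (Fin 3))‖ := by
    have h1 := v.2; have h2 := w.2
    simp only [mem_sphere_iff_norm, sub_zero] at h1 h2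
    rw [h1, h2]
  have hr := Submodule.reflection_sub hn
  set ρ := (Submodule.span ℝ {((v : EuclideanSpace ℝ (Fin 3)) - w)})ᗮ.reflection with hρ
  let R : SpherePt ≃ₜ SpherePt := ρ.toHomeomorph.subtype (by
    intro x; simp [mem_sphere_iff_norm])
  refine ⟨(sphHomeo.trans R).trans sphHomeo.symm, ?_⟩
  have : R v = w := Subtype.ext hr
  change sphHomeo.symm (R (sphHomeo p)) = ∞
  rw [← hv, this, hw, Homeomorph.symm_apply_apply]

/-- `x` and `y` lie in a common connected subset of `W`. -/
def Conn {X : Type*} [TopologicalSpace X] (W : Set X) (x y : X) : Prop :=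
  ∃ C ⊆ W, IsPreconnected C ∧ x ∈ C ∧ y ∈ C

section Conn
variable {X Y : Type*} [TopologicalSpace X] [TopologicalSpace Y] {W W' : Set X} {x y z : X}

lemma Conn.symm (h : Conn W x y) : Conn W y x := by
  obtain ⟨C, h1, h2, h3, h4⟩ := h; exact ⟨C, h1, h2, h4, h3⟩

lemma Conn.trans (h : Conn W x y) (h' : Conn W y z) : Conn W x z := by
  obtain ⟨C, h1, h2, h3, h4⟩ := h
  obtain ⟨D, k1, k2, k3, k4⟩ := h'
  exact ⟨C ∪ D, union_subset h1 k1, h2.union y h4 k3 k2, Or.inl h3, Or.inr k4⟩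

lemma Conn.refl (h : x ∈ W) : Conn W x x := ⟨{x}, by simpa using h, isPreconnected_singleton, rfl, rfl⟩

lemma Conn.mono (h : Conn W x y) (hW : W ⊆ W') : Conn W' x y := by
  obtain ⟨C, h1, h2, h3, h4⟩ := h; exact ⟨C, h1.trans hW, h2, h3, h4⟩

lemma Conn.left (h : Conn W x y) : x ∈ W := by
  obtain ⟨C, h1, h2, h3, h4⟩ := h; exact h1 h3

lemma Conn.right (h : Conn W x y) : y ∈ W := h.symm.left

lemma Conn.image (h : Conn W x y) {f : X → Y} (hf : ContinuousOn f W) :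
    Conn (f '' W) (f x) (f y) := by
  obtain ⟨C, h1, h2, h3, h4⟩ := h
  exact ⟨f '' C, image_mono h1, h2.image f (hf.mono h1), mem_image_of_mem _ h3,
    mem_image_of_mem _ h4⟩

lemma isPreconnected_of_conn (h : ∀ x ∈ W, ∀ y ∈ W, Conn W x y) : IsPreconnected W :=
  isPreconnected_of_forall_pair fun x hx y hy => by
    obtain ⟨C, h1, h2, h3, h4⟩ := h x hx y hy; exact ⟨C, h1, h3, h4, h2⟩

lemma Conn.of_pre (h : IsPreconnected W) (hx : x ∈ W) (hy : y ∈ W) : Conn W x y :=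
  ⟨W, subset_rfl, h, hx, hy⟩

lemma conn_iff_mem (hx : x ∈ W) : Conn W x y ↔ y ∈ connectedComponentIn W x := by
  constructor
  · rintro ⟨C, h1, h2, h3, h4⟩
    exact h2.subset_connectedComponentIn h3 h1 h4
  · intro h
    exact ⟨_, connectedComponentIn_subset _ _, isPreconnected_connectedComponentIn,
      mem_connectedComponentIn hx, h⟩

end Conn

/-! ### Logarithms -/

/-- The rational function `(z - y) / (z - x)` on the sphere. -/
def rat (x y : ℂ) (z : Sph) : ℂ := z.elim 1 (fun z => (z - y) / (z - x))

@[simp] lemma rat_infty (x y : ℂ) : rat x y ∞ = 1 := rfl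
@[simp] lemma rat_coe (x y z : ℂ) : rat x y (z : Sph) = (z - y) / (z - x) := rfl

lemma tendsto_ratio (x y : ℂ) : Tendsto (fun z : ℂ => (z - y) / (z - x)) (cocompact ℂ) (𝓝 1) := by
  have h1 : Tendsto (fun z : ℂ => (z - x)⁻¹) (cocompact ℂ) (𝓝 0) := by
    have : Tendsto (fun z : ℂ => z - x) (cocompact ℂ) (cocompact ℂ) :=
      (Homeomorph.subRight x).isClosedEmbedding.tendsto_cocompact
    have h2 := tendsto_inv₀_cobounded (α := ℂ)
    rw [← Metric.cobounded_eq_cocompact] at this ⊢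
    exact h2.comp this
  have h2 : Tendsto (fun z : ℂ => 1 + (x - y) * (z - x)⁻¹) (cocompact ℂ) (𝓝 1) := by
    simpa using (h1.const_mul (x - y)).const_add 1
  refine h2.congr' ?_
  have : ∀ᶠ z in cocompact ℂ, z ∈ ({x} : Set ℂ)ᶜ := isCompact_singleton.compl_mem_cocompact
  filter_upwards [this] with z hz
  have : z - x ≠ 0 := sub_ne_zero.2 hz
  field_simp
  ring

lemma rat_continuousAt (x y : ℂ) {z : Sph} (hz : z ≠ x) : ContinuousAt (rat x y) z := by
  induction z using OnePoint.rec with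
  | infty =>
    rw [OnePoint.continuousAt_infty', coclosedCompact_eq_cocompact]
    exact tendsto_ratio x y
  | coe z =>
    rw [OnePoint.continuousAt_coe]
    have : z ≠ x := fun h => hz (by rw [h])
    have h : z - x ≠ 0 := sub_ne_zero.2 this
    change ContinuousAt (fun z : ℂ => (z - y) / (z - x)) z
    fun_prop (disch := assumption)

lemma rat_ne_zero {x y : ℂ} {z : Sph} (hx : z ≠ x) (hy : z ≠ y) : rat x y z ≠ 0 := by
  induction z using OnePoint.rec with
  | infty => simp
  | coe z =>
    have h1 : z - x ≠ 0 := sub_ne_zero.2 fun h => hx (by rw [h])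
    have h2 : z - y ≠ 0 := sub_ne_zero.2 fun h => hy (by rw [h])
    simp [h1, h2]

lemma rat_mul (x y w : ℂ) {z : Sph} (hz : z ≠ y) : rat x y z * rat y w z = rat x w z := by
  induction z using OnePoint.rec with
  | infty => simp
  | coe z =>
    have h1 : z - y ≠ 0 := sub_ne_zero.2 fun h => hz (by rw [h])
    simp only [rat_coe]
    field_simp

def HasLog (K : Set Sph) (f : Sph → ℂ) : Prop :=
  ∃ g : Sph → ℂ, ContinuousOn g K ∧ ∀ z ∈ K, Complex.exp (g z) = f z

lemma HasLog.mul {K : Set Sph} {f g : Sph → ℂ} (hf : HasLog K f) (hg : HasLog K g) :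
    HasLog K (fun z => f z * g z) := by
  obtain ⟨u, hu, hu'⟩ := hf
  obtain ⟨v, hv, hv'⟩ := hg
  exact ⟨fun z => u z + v z, hu.add hv, fun z hz => by rw [Complex.exp_add, hu' z hz, hv' z hz]⟩

lemma HasLog.congr {K : Set Sph} {f g : Sph → ℂ} (hf : HasLog K f) (h : ∀ z ∈ K, f z = g z) :
    HasLog K g := by
  obtain ⟨u, hu, hu'⟩ := hf
  exact ⟨u, hu, fun z hz => by rw [hu' z hz, h z hz]⟩

lemma hasLog_near {K : Set Sph} {x y : ℂ} {r : ℝ} (hK : ∀ z : ℂ, (z : Sph) ∈ K → r ≤ dist z x)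
    (hy : dist y x < r) : HasLog K (rat x y) := by
  have key : ∀ z ∈ K, rat x y z ∈ Complex.slitPlane := by
    intro z hz
    induction z using OnePoint.rec with
    | infty => simp
    | coe z =>
      have h1 := hK z hz
      have h0 : z - x ≠ 0 := by
        intro h
        have : z = x := sub_eq_zero.1 h
        rw [this, dist_self] at h1
        linarith [dist_nonneg (x := y) (y := x)]
      have hs := Complex.mem_slitPlane_of_norm_lt_one (z := (z - y) / (z - x) - 1) ?_
      · rw [add_sub_cancel] at hs
        exact hs
      have : (z - y) / (z - x) - 1 = (x - y) / (z - x) := by field_simp; ring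
      rw [this, norm_div, div_lt_one (norm_pos_iff.2 h0), ← dist_eq_norm, ← dist_eq_norm, dist_comm]
      linarith
  refine ⟨fun z => Complex.log (rat x y z), ?_, fun z hz =>
    Complex.exp_log (Complex.slitPlane_ne_zero (key z hz))⟩
  intro z hz
  refine ContinuousAt.continuousWithinAt ?_
  refine (rat_continuousAt x y ?_).clog (key z hz)
  rintro rfl
  have := hK x hz
  rw [dist_self] at this
  linarith [dist_nonneg (x := y) (y := x)]

lemma exists_dist {K : Set Sph} (hK : IsClosed K) {x : ℂ} (hx : (x : Sph) ∉ K) :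
    ∃ r > 0, ∀ z : ℂ, (z : Sph) ∈ K → r ≤ dist z x := by
  have h1 : IsOpen ((fun z : ℂ => (z : Sph)) ⁻¹' Kᶜ) := hK.isOpen_compl.preimage continuous_coe
  obtain ⟨r, hr, h⟩ := Metric.isOpen_iff.1 h1 x hx
  refine ⟨r, hr, fun z hz => ?_⟩
  by_contra hlt
  exact h (Metric.mem_ball.2 (not_le.1 hlt)) hz

/-- If `x`, `y` are in the same component of the complement of `K`, the ratio has a logarithm. -/
lemma hasLog_of_conn {K : Set Sph} (hK : IsClosed K) (hi : ∞ ∈ K) {x y : ℂ}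
    (h : Conn Kᶜ (x : Sph) y) : HasLog K (rat x y) := by
  obtain ⟨C, h1, h2, h3, h4⟩ := h
  have hx : (x : Sph) ∉ K := h1 h3
  let P : Set Sph := {w | ∃ y : ℂ, w = y ∧ w ∉ K ∧ HasLog K (rat x y)}
  let Q : Set Sph := {w | ∃ y : ℂ, w = y ∧ w ∉ K ∧ ¬ HasLog K (rat x y)}
  have nb : ∀ y : ℂ, (y : Sph) ∉ K → ∃ r > 0, ∀ w : ℂ, dist w y < r → (w : Sph) ∉ K ∧
      (HasLog K (rat x y) ↔ HasLog K (rat x w)) := by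
    intro y hy
    obtain ⟨r, hr, hd⟩ := exists_dist hK hy
    refine ⟨r / 2, by linarith, fun w hw => ?_⟩
    have hwK : (w : Sph) ∉ K := fun hwK => by linarith [hd w hwK]
    refine ⟨hwK, ?_⟩
    have hA : HasLog K (rat y w) := hasLog_near hd (by linarith)
    have hB : HasLog K (rat w y) := hasLog_near (r := r / 2) (fun z hz => by
      have := hd z hz
      have := dist_triangle z w y
      linarith) (by rw [dist_comm]; exact hw)
    constructor
    · intro h
      exact (h.mul hA).congr fun z hz => rat_mul x y w (fun e => hy (e ▸ hz))
    · intro h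
      exact (h.mul hB).congr fun z hz => rat_mul x w y (fun e => hwK (e ▸ hz))
  have hP : IsOpen P := by
    rw [isOpen_iff_mem_nhds]
    rintro _ ⟨y, rfl, hy, hl⟩
    obtain ⟨r, hr, hh⟩ := nb y hy
    rw [OnePoint.nhds_coe_eq, mem_map]
    filter_upwards [Metric.ball_mem_nhds y hr] with w hw
    exact ⟨w, rfl, (hh w hw).1, (hh w hw).2.1 hl⟩
  have hQ : IsOpen Q := by
    rw [isOpen_iff_mem_nhds]
    rintro _ ⟨y, rfl, hy, hl⟩
    obtain ⟨r, hr, hh⟩ := nb y hy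
    rw [OnePoint.nhds_coe_eq, mem_map]
    filter_upwards [Metric.ball_mem_nhds y hr] with w hw
    exact ⟨w, rfl, (hh w hw).1, fun h => hl ((hh w hw).2.2 h)⟩
  have hCPQ : C ⊆ P ∪ Q := by
    intro w hw
    have hwK := h1 hw
    induction w using OnePoint.rec with
    | infty => exact absurd hi hwK
    | coe w =>
      by_cases hl : HasLog K (rat x w)
      · exact Or.inl ⟨w, rfl, hwK, hl⟩
      · exact Or.inr ⟨w, rfl, hwK, hl⟩
  have hxP : (x : Sph) ∈ P := by
    obtain ⟨r, hr, hd⟩ := exists_dist hK hx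
    exact ⟨x, rfl, hx, hasLog_near hd (by simpa using hr)⟩
  by_contra hn
  have := h2 P Q hP hQ hCPQ ⟨x, h3, hxP⟩ ⟨y, h4, y, rfl, h1 h4, hn⟩
  obtain ⟨w, -, ⟨a, ha, -, ha'⟩, ⟨b, hb, -, hb'⟩⟩ := this
  rw [ha, OnePoint.coe_eq_coe] at hb
  exact hb' (hb ▸ ha')

end Levi

namespace Levi
open Filter OnePoint

lemma exp_const {X : Type*} [TopologicalSpace X] {S : Set X} (hS : IsPreconnected S) {f : X → ℂ}
    (hf : ContinuousOn f S) {c : ℂ} (hc : ∀ z ∈ S, Complex.exp (f z) = c) {x y : X} (hx : x ∈ S)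
    (hy : y ∈ S) : f x = f y := by
  have h1 : (f '' S).Countable := by
    refine Set.Countable.mono (s₂ := range fun n : ℤ => f x + n * (2 * Real.pi * Complex.I)) ?_
      (countable_range _)
    rintro _ ⟨z, hz, rfl⟩
    obtain ⟨n, hn⟩ := Complex.exp_eq_exp_iff_exists_int.1 ((hc z hz).trans (hc x hx).symm)
    exact ⟨n, hn.symm⟩
  exact h1.isTotallyDisconnected (f '' S) subset_rfl (hS.image f hf) (mem_image_of_mem f hx)
    (mem_image_of_mem f hy)

lemma exists_log {X : Type*} [TopologicalSpace X] [SimplyConnectedSpace X]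
    [LocallyPathConnectedSpace X] {f : X → ℂ} (hf : Continuous f) (h0 : ∀ x, f x ≠ 0) :
    ∃ g : X → ℂ, Continuous g ∧ ∀ x, Complex.exp (g x) = f x := by
  obtain ⟨x0⟩ : Nonempty X := inferInstance
  obtain ⟨g, ⟨-, hg⟩, -⟩ := Complex.isCoveringMapOn_exp.existsUnique_continuousMap_lifts
    (f := ⟨f, hf⟩) (a₀ := x0) (e₀ := Complex.log (f x0)) (Complex.exp_log (h0 x0))
    (fun x => h0 x)
  exact ⟨g, g.continuous, fun x => congrFun hg x⟩

lemma circle_log {R : ℝ} (hR : 0 < R) {m : ℤ} {h : ℂ → ℂ} (hc : ContinuousOn h (Metric.sphere 0 R))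
    (he : ∀ z ∈ Metric.sphere (0 : ℂ) R, Complex.exp (h z) = z ^ m) : m = 0 := by
  have hs : ∀ θ : ℝ, (R : ℂ) * Complex.exp (θ * Complex.I) ∈ Metric.sphere (0 : ℂ) R := by
    intro θ
    rw [mem_sphere_iff_norm, sub_zero, norm_mul, Complex.norm_exp_ofReal_mul_I]
    simp [abs_of_pos hR]
  have hf : ContinuousOn (fun θ : ℝ => h ((R : ℂ) * Complex.exp (θ * Complex.I)) -
      m * (θ * Complex.I)) univ := by
    refine ContinuousOn.sub (hc.comp (Continuous.continuousOn (by fun_prop)) fun θ _ => hs θ)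
      (Continuous.continuousOn (by fun_prop))
  have := exp_const isPreconnected_univ hf (c := (R : ℂ) ^ m) (fun θ _ => by
    rw [Complex.exp_sub, he _ (hs θ), mul_zpow, Complex.exp_int_mul]
    field_simp [Complex.exp_ne_zero]) (mem_univ 0) (mem_univ (2 * Real.pi))
  simp only [Complex.ofReal_mul, Complex.ofReal_ofNat, Complex.exp_two_pi_mul_I] at this
  simp only [Complex.ofReal_zero, zero_mul, Complex.exp_zero, mul_zero, sub_zero] at this
  have h2 : (m : ℂ) * (2 * Real.pi * Complex.I) = 0 := by linear_combination this
  have h3 := Complex.two_pi_I_ne_zero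
  exact_mod_cast (mul_eq_zero.1 h2).resolve_right h3

/-- Eilenberg's criterion. -/
lemma eilenberg {K : Set Sph} (hK : IsClosed K) (hi : ∞ ∈ K) {x y w : ℂ} {m n : ℤ}
    (hx : (x : Sph) ∉ K) (hy : (y : Sph) ∉ K) (hw : (w : Sph) ∉ K)
    (hl : HasLog K (fun z => rat x y z ^ m * rat x w z ^ n))
    (hyx : ¬ Conn Kᶜ (y : Sph) x) (hyw : ¬ Conn Kᶜ (y : Sph) w) : m = 0 := by
  classical
  set V := connectedComponentIn Kᶜ (y : Sph) with hV
  have hVo : IsOpen V := hK.isOpen_compl.connectedComponentIn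
  have hVK : ∀ z ∈ closure V, z ∉ V → z ∈ K := by
    intro z hz hzV
    by_contra hzK
    apply hzV
    have h1 : IsPreconnected (insert z V) :=
      isPreconnected_connectedComponentIn.subset_closure (subset_insert _ _)
        (insert_subset hz subset_closure)
    exact h1.subset_connectedComponentIn (mem_insert_of_mem _ (mem_connectedComponentIn hy))
      (insert_subset hzK (connectedComponentIn_subset _ _)) (mem_insert _ _)
  have hyV : (y : Sph) ∈ V := mem_connectedComponentIn hy
  have hxV : (x : Sph) ∉ closure V := fun h => hyx <| by
    rw [conn_iff_mem hy]
    by_contra h'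
    exact hx (hVK _ h h')
  have hwV : (w : Sph) ∉ closure V := fun h => hyw <| by
    rw [conn_iff_mem hy]
    by_contra h'
    exact hw (hVK _ h h')
  obtain ⟨g, hg, hge⟩ := hl
  obtain ⟨G, hG⟩ := ContinuousMap.exists_restrict_eq hK ⟨K.domRestrict g, hg.domRestrict⟩
  have hGg : ∀ z ∈ K, G z = g z := fun z hz => congrArg (fun f => f ⟨z, hz⟩) hG
  have hGi : Complex.exp (G ∞) = 1 := by
    rw [hGg _ hi, hge _ hi]; simp
  let U : Set ℂ := (fun z : ℂ => (z : Sph)) ⁻¹' V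
  have hUo : IsOpen U := hVo.preimage continuous_coe
  have hUc : ∀ z ∈ closure U, (z : Sph) ∈ closure V := fun z hz =>
    map_mem_closure continuous_coe hz fun a ha => ha
  let F1 : ℂ → ℂ := fun z => Complex.exp (G z) * (z - x) ^ (m + n) * (z - w) ^ (-n)
  let F2 : ℂ → ℂ := fun z => (z - y) ^ m
  let Φ : ℂ → ℂ := fun z => if z ∈ U then F1 z else F2 z
  have nx : ∀ z ∈ closure U, z - x ≠ 0 := fun z hz h => hxV (by
    rw [← sub_eq_zero.1 h]; exact hUc z hz)
  have nw : ∀ z ∈ closure U, z - w ≠ 0 := fun z hz h => hwV (by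
    rw [← sub_eq_zero.1 h]; exact hUc z hz)
  have ny : ∀ z ∉ U, z - y ≠ 0 := fun z hz h => hz (by
    rw [sub_eq_zero.1 h]; exact hyV)
  have hΦc : Continuous Φ := by
    rw [← continuousOn_univ]
    refine ContinuousOn.if ?_ ?_ ?_
    · rintro z ⟨-, hz⟩
      rw [Set.ofPred_mem_eq, hUo.frontier_eq] at hz
      have hzK : (z : Sph) ∈ K := hVK _ (hUc z hz.1) hz.2
      have e := hge _ hzK
      rw [← hGg _ hzK] at e
      have n1 := nx z hz.1
      have n2 := nw z hz.1
      have n3 := ny z hz.2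
      simp only [F1, F2, e, rat_coe]
      rw [div_zpow, div_zpow, zpow_add₀ n1, zpow_neg]
      have := zpow_ne_zero m n1
      have := zpow_ne_zero n n1
      have := zpow_ne_zero n n2
      field_simp
    · rw [univ_inter, Set.ofPred_mem_eq]
      refine ContinuousOn.mul (ContinuousOn.mul ?_ ?_) ?_
      · exact (Complex.continuous_exp.comp (G.continuous.comp continuous_coe)).continuousOn
      · exact ContinuousOn.zpow₀ (by fun_prop) _ fun z hz => Or.inl (nx z hz)
      · exact ContinuousOn.zpow₀ (by fun_prop) _ fun z hz => Or.inl (nw z hz)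
    · rw [univ_inter]
      have : closure {a | a ∉ U} = Uᶜ := hUo.isClosed_compl.closure_eq
      rw [this]
      exact ContinuousOn.zpow₀ (by fun_prop) _ fun z hz => Or.inl (ny z hz)
  have hΦ0 : ∀ z, Φ z ≠ 0 := by
    intro z
    by_cases hz : z ∈ U
    · simp only [Φ, hz, if_true, F1]
      exact mul_ne_zero (mul_ne_zero (Complex.exp_ne_zero _)
        (zpow_ne_zero _ (nx z (subset_closure hz)))) (zpow_ne_zero _ (nw z (subset_closure hz)))
    · simp only [Φ, hz, if_false, F2]
      exact zpow_ne_zero _ (ny z hz)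
  have tr : ∀ (a : ℂ) (k : ℤ), Tendsto (fun z : ℂ => ((z - a) / z) ^ k) (cocompact ℂ) (𝓝 1) := by
    intro a k
    have := (tendsto_ratio 0 a).zpow₀ k (Or.inl one_ne_zero)
    simpa using this
  have hcz : ∀ᶠ z in cocompact ℂ, z ∈ ({0} : Set ℂ)ᶜ := isCompact_singleton.compl_mem_cocompact
  have hΦt : Tendsto (fun z => Φ z / z ^ m) (cocompact ℂ) (𝓝 1) := by
    have h1 : Tendsto (fun z => F1 z / z ^ m) (cocompact ℂ) (𝓝 1) := by
      have e1 : Tendsto (fun z : ℂ => Complex.exp (G z)) (cocompact ℂ) (𝓝 1) := by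
        rw [← hGi]
        have hc : ContinuousAt (fun z : Sph => Complex.exp (G z)) ∞ := by fun_prop
        rw [OnePoint.continuousAt_infty', coclosedCompact_eq_cocompact] at hc
        exact hc
      have e2 := (e1.mul (tr x (m + n))).mul (tr w (-n))
      simp only [mul_one] at e2
      refine e2.congr' ?_
      filter_upwards [hcz] with z hz
      have hz0 : z ≠ 0 := hz
      simp only [F1]
      rw [div_zpow, div_zpow, zpow_neg z, zpow_add₀ hz0]
      have := zpow_ne_zero m hz0
      have := zpow_ne_zero n hz0
      field_simp
    have h2 : Tendsto (fun z => F2 z / z ^ m) (cocompact ℂ) (𝓝 1) := by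
      refine (tr y m).congr fun z => ?_
      simp only [F2, div_zpow]
    refine (Tendsto.if' (p := fun z => z ∈ U) h1 h2).congr fun z => ?_
    by_cases hz : z ∈ U <;> simp [Φ, hz]
  obtain ⟨lam, hlc, hle⟩ := exists_log hΦc hΦ0
  have hsl : ∀ᶠ z in cocompact ℂ, Φ z / z ^ m ∈ Complex.slitPlane :=
    hΦt.eventually (Complex.isOpen_slitPlane.mem_nhds (by simp))
  rw [← Metric.cobounded_eq_cocompact] at hsl
  obtain ⟨R, hR, hRs⟩ := (hasBasis_cobounded_norm (E := ℂ)).eventually_iff.1 hsl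
  set R' := max R 1
  have hR' : 0 < R' := lt_max_of_lt_right one_pos
  have hnR : ∀ z ∈ Metric.sphere (0 : ℂ) R', ‖z‖ = R' := fun z hz => by simpa using hz
  have hz0 : ∀ z ∈ Metric.sphere (0 : ℂ) R', z ≠ 0 := fun z hz h => by
    have := hnR z hz
    rw [h, norm_zero] at this
    linarith
  have hsp : ∀ z ∈ Metric.sphere (0 : ℂ) R', Φ z / z ^ m ∈ Complex.slitPlane := fun z hz =>
    hRs (by
      show R ≤ ‖z‖
      rw [hnR z hz]; exact le_max_left _ _)
  refine circle_log (R := R') hR' (h := fun z => lam z - Complex.log (Φ z / z ^ m)) ?_ ?_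
  · refine hlc.continuousOn.sub (ContinuousOn.clog ?_ hsp)
    exact hΦc.continuousOn.div (ContinuousOn.zpow₀ continuousOn_id _ fun z hz => Or.inl (hz0 z hz))
      fun z hz => zpow_ne_zero _ (hz0 z hz)
  · intro z hz
    rw [Complex.exp_sub, hle, Complex.exp_log (Complex.slitPlane_ne_zero (hsp z hz))]
    have := hΦ0 z
    field_simp

/-- Janiszewski's theorem, based at infinity. -/
lemma janiszewski0 {K₁ K₂ : Set Sph} (h1 : IsClosed K₁) (h2 : IsClosed K₂) (i1 : ∞ ∈ K₁)
    (i2 : ∞ ∈ K₂) (hp : IsPreconnected (K₁ ∩ K₂)) {x y : Sph} (c1 : Conn K₁ᶜ x y)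
    (c2 : Conn K₂ᶜ x y) : Conn (K₁ ∪ K₂)ᶜ x y := by
  classical
  have hx1 := c1.left; have hx2 := c2.left
  have hy1 := c1.right; have hy2 := c2.right
  induction x using OnePoint.rec with
  | infty => exact absurd i1 hx1
  | coe x =>
  induction y using OnePoint.rec with
  | infty => exact absurd i1 hy1
  | coe y =>
  obtain ⟨g1, hg1, he1⟩ := hasLog_of_conn h1 i1 c1
  obtain ⟨g2, hg2, he2⟩ := hasLog_of_conn h2 i2 c2
  have hd : ∀ z ∈ K₁ ∩ K₂, Complex.exp (g1 z - g2 z) = 1 := fun z hz => by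
    have h0 := Complex.exp_ne_zero (g2 z)
    rw [Complex.exp_sub, he1 z hz.1, ← he2 z hz.2, div_self h0]
  set c := g1 ∞ - g2 ∞ with hc
  have hcz : ∀ z ∈ K₁ ∩ K₂, g1 z = g2 z + c := fun z hz => by
    have := exp_const hp ((hg1.mono inter_subset_left).sub (hg2.mono inter_subset_right)) hd hz
      ⟨i1, i2⟩
    simp only [Pi.sub_apply] at this
    rw [hc, ← this]; ring
  have hec : Complex.exp c = 1 := hd _ ⟨i1, i2⟩
  have hL : HasLog (K₁ ∪ K₂) (rat x y) := by
    refine ⟨fun z => if z ∈ K₁ then g1 z else g2 z + c, ?_, ?_⟩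
    · refine ContinuousOn.union_of_isClosed ?_ ?_ h1 h2
      · exact hg1.congr fun z hz => by simp [hz]
      · refine (hg2.add (continuousOn_const (c := c))).congr fun z hz => ?_
        by_cases h : z ∈ K₁
        · simp [h, hcz z ⟨h, hz⟩]
        · simp [h]
    · intro z hz
      by_cases h : z ∈ K₁
      · simp [h, he1 z h]
      · have hz2 : z ∈ K₂ := hz.resolve_left h
        simp [h, Complex.exp_add, hec, he2 z hz2]
  by_contra hn
  have hxK : (x : Sph) ∉ K₁ ∪ K₂ := fun h => h.elim hx1 hx2
  have hyK : (y : Sph) ∉ K₁ ∪ K₂ := fun h => h.elim hy1 hy2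
  have := eilenberg (h1.union h2) (Or.inl i1) (m := 1) (n := 0) hxK hyK hxK
    (by simpa using hL) (fun h => hn h.symm) (fun h => hn h.symm)
  exact one_ne_zero this

/-- Janiszewski's theorem. -/
lemma janiszewski {K₁ K₂ : Set Sph} (h1 : IsClosed K₁) (h2 : IsClosed K₂)
    (hne : (K₁ ∩ K₂).Nonempty) (hp : IsPreconnected (K₁ ∩ K₂)) {x y : Sph} (c1 : Conn K₁ᶜ x y)
    (c2 : Conn K₂ᶜ x y) : Conn (K₁ ∪ K₂)ᶜ x y := by
  obtain ⟨p, hp1, hp2⟩ := hne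
  obtain ⟨T, hT⟩ := exists_homeo_infty p
  have e : ∀ K : Set Sph, T '' Kᶜ = (T '' K)ᶜ := fun K => image_compl_eq T.bijective
  have := janiszewski0 (K₁ := T '' K₁) (K₂ := T '' K₂) (T.isClosedMap _ h1) (T.isClosedMap _ h2)
    ⟨p, hp1, hT⟩ ⟨p, hp2, hT⟩ (by
      rw [← image_inter T.injective]; exact hp.image _ T.continuous.continuousOn)
    (x := T x) (y := T y) (by rw [← e]; exact c1.image T.continuous.continuousOn)
    (by rw [← e]; exact c2.image T.continuous.continuousOn)
  rw [← image_union, ← e] at this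
  have := this.image (f := T.symm) T.symm.continuous.continuousOn
  simpa [image_image] using this

end Levi

namespace Levi
open Filter OnePoint

lemma conn_of_hasLog {K : Set Sph} (hK : IsClosed K) (hi : ∞ ∈ K) {x y : ℂ}
    (hx : (x : Sph) ∉ K) (hy : (y : Sph) ∉ K) (hl : HasLog K (rat x y)) :
    Conn Kᶜ (x : Sph) y := by
  by_contra hn
  have := eilenberg hK hi (m := 1) (n := 0) hx hy hx
    (by simpa using hl) (fun h => hn h.symm) (fun h => hn h.symm)
  exact one_ne_zero this

lemma exists_coe {K : Set Sph} (hi : ∞ ∈ K) {x : Sph} (hx : x ∉ K) : ∃ z : ℂ, x = z := by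
  induction x using OnePoint.rec with
  | infty => exact absurd hi hx
  | coe z => exact ⟨z, rfl⟩

lemma hasLog_arc {p : unitInterval → Sph} (hp : Continuous p) (hinj : Function.Injective p)
    {f : Sph → ℂ} (hf : ContinuousOn f (range p)) (h0 : ∀ z ∈ range p, f z ≠ 0) :
    HasLog (range p) f := by
  have : ContractibleSpace unitInterval :=
    (convex_Icc (0 : ℝ) 1).contractibleSpace ⟨0, by simp⟩
  have : LocallyPathConnectedSpace unitInterval := (convex_Icc (0 : ℝ) 1).locallyPathConnectedSpace
  obtain ⟨g, hg, hge⟩ := exists_log (f := fun t => f (p t))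
    (hf.comp_continuous hp fun t => mem_range_self t) (fun t => h0 _ (mem_range_self t))
  have he : IsClosedEmbedding p := hp.isClosedEmbedding hinj
  let e := he.isEmbedding.toHomeomorph
  refine ⟨Function.extend p g 0, ?_, ?_⟩
  · rw [continuousOn_iff_continuous_domRestrict]
    have : (range p).domRestrict (Function.extend p g 0) = g ∘ e.symm := by
      ext z
      obtain ⟨t, rfl⟩ := e.surjective z
      simp only [Function.comp_apply, Homeomorph.symm_apply_apply, domRestrict_apply]
      exact hinj.extend_apply g 0 t
    rw [this]
    exact hg.comp e.symm.continuous
  · rintro _ ⟨t, rfl⟩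
    rw [hinj.extend_apply, hge]

/-- A closed curve through infinity, parametrised by the reals off infinity. -/
structure IsCurve (γ : ℝ → Sph) : Prop where
  cont : Continuous γ
  inj : Function.Injective γ
  ne_inf : ∀ t, γ t ≠ ∞
  top : Tendsto γ atTop (𝓝 ∞)
  bot : Tendsto γ atBot (𝓝 ∞)

lemma IsCurve.neg {γ : ℝ → Sph} (h : IsCurve γ) : IsCurve (fun t => γ (-t)) :=
  { cont := h.cont.comp continuous_neg
    inj := fun a b hab => neg_injective (h.inj hab)
    ne_inf := fun t => h.ne_inf _
    top := h.bot.comp tendsto_neg_atTop_atBot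
    bot := h.top.comp tendsto_neg_atBot_atTop }

lemma IsCurve.add {γ : ℝ → Sph} (h : IsCurve γ) (c : ℝ) : IsCurve (fun t => γ (c + t)) :=
  ⟨h.cont.comp (by fun_prop), h.inj.comp (add_right_injective c), fun t => h.ne_inf _,
    h.top.comp (tendsto_atTop_add_const_left _ _ tendsto_id),
    h.bot.comp (tendsto_atBot_add_const_left _ _ tendsto_id)⟩

lemma tendsto_one_sub : Tendsto (fun s : ℝ => s / (1 - s)) (𝓝[<] 1) atTop := by
  have h1 : Tendsto (fun s : ℝ => 1 - s) (𝓝[<] 1) (𝓝[>] 0) := by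
    refine tendsto_nhdsWithin_iff.2 ⟨?_, ?_⟩
    · have : Tendsto (fun s : ℝ => 1 - s) (𝓝 1) (𝓝 (1 - 1)) := (continuous_const.sub continuous_id).tendsto 1
      rw [sub_self] at this
      exact this.mono_left nhdsWithin_le_nhds
    · filter_upwards [self_mem_nhdsWithin] with s hs
      simpa using hs
  have h2 := tendsto_inv_nhdsGT_zero.comp h1
  have h3 : Tendsto (fun s : ℝ => s) (𝓝[<] 1) (𝓝 1) := tendsto_id.mono_left nhdsWithin_le_nhds
  exact h3.pos_mul_atTop one_pos h2

/-- The parametrised upper ray. -/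
lemma IsCurve.exists_ray {γ : ℝ → Sph} (h : IsCurve γ) (c : ℝ) :
    ∃ p : unitInterval → Sph, Continuous p ∧ Function.Injective p ∧
      range p = insert ∞ (γ '' Ici c) ∧ p 0 = γ c ∧ p 1 = ∞ := by
  let q : ℝ → Sph := fun s => if s = 1 then ∞ else γ (c + s / (1 - s))
  have hq : ContinuousOn q (Icc 0 1) := by
    intro s hs
    rcases eq_or_lt_of_le hs.2 with rfl | hlt
    · have h1 : Tendsto (fun s : ℝ => γ (c + s / (1 - s))) (𝓝[<] 1) (𝓝 ∞) :=
        (h.add c).top.comp tendsto_one_sub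
      have h2 : Tendsto q (𝓝[<] 1) (𝓝 ∞) := h1.congr' (by
        filter_upwards [self_mem_nhdsWithin] with s hs
        simp [q, ne_of_lt (show s < 1 from hs)])
      have h3 : ContinuousWithinAt q (Iio 1) 1 := by
        simpa [ContinuousWithinAt, q] using h2
      have h4 := continuousWithinAt_insert_self.2 h3
      refine h4.mono fun x hx => ?_
      rcases eq_or_lt_of_le hx.2 with rfl | hlt
      · exact mem_insert _ _
      · exact mem_insert_of_mem _ hlt
    · have hne : (1 : ℝ) - s ≠ 0 := by linarith
      have h1 : ContinuousAt (fun s : ℝ => γ (c + s / (1 - s))) s :=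
        h.cont.continuousAt.comp' (by fun_prop (disch := assumption))
      refine (h1.congr ?_).continuousWithinAt
      filter_upwards [Iio_mem_nhds hlt] with x hx
      simp [q, ne_of_lt (show x < 1 from hx)]
  refine ⟨fun s => q s, hq.comp_continuous continuous_subtype_val fun s => s.2, ?_, ?_, ?_, ?_⟩
  · rintro ⟨s, hs0, hs1⟩ ⟨t, ht0, ht1⟩ hst
    ext
    simp only [q] at hst ⊢
    by_cases h1 : s = 1 <;> by_cases h2 : t = 1
    · rw [h1, h2]
    · simp only [h1, h2, if_true, if_false] at hst
      exact absurd hst.symm (h.ne_inf _)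
    · simp only [h1, h2, if_true, if_false] at hst
      exact absurd hst (h.ne_inf _)
    · simp only [h1, h2, if_false] at hst
      have := add_left_cancel (h.inj hst)
      have e1 : (1 : ℝ) - s ≠ 0 := fun h => h1 (by linarith)
      have e2 : (1 : ℝ) - t ≠ 0 := fun h => h2 (by linarith)
      rw [div_eq_div_iff e1 e2] at this
      linarith
  · ext z
    constructor
    · rintro ⟨⟨s, hs0, hs1⟩, rfl⟩
      by_cases h1 : s = 1
      · simp [q, h1]
      · right
        refine ⟨c + s / (1 - s), ?_, by simp [q, h1]⟩
        have : 0 < 1 - s := by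
          rcases lt_or_eq_of_le hs1 with h | h
          · linarith
          · exact absurd h h1
        simp only [mem_Ici, le_add_iff_nonneg_right]
        positivity
    · rintro (rfl | ⟨t, ht, rfl⟩)
      · exact ⟨1, by simp [q]⟩
      · have ht : 0 ≤ t - c := by simpa using ht
        have hpos : 0 < 1 + (t - c) := by linarith
        have hlt : (t - c) / (1 + (t - c)) < 1 := by rw [div_lt_one hpos]; linarith
        refine ⟨⟨(t - c) / (1 + (t - c)), by positivity, hlt.le⟩, ?_⟩
        simp only [q, hlt.ne, if_false]
        congr 1
        field_simp
        ring
  · simp [q]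
  · simp [q]

lemma IsCurve.exists_ray' {γ : ℝ → Sph} (h : IsCurve γ) (c : ℝ) :
    ∃ p : unitInterval → Sph, Continuous p ∧ Function.Injective p ∧
      range p = insert ∞ (γ '' Iic c) ∧ p 0 = γ c ∧ p 1 = ∞ := by
  obtain ⟨p, h1, h2, h3, h4, h5⟩ := h.neg.exists_ray (-c)
  refine ⟨p, h1, h2, ?_, by simpa using h4, h5⟩
  rw [h3]
  congr 1
  ext z
  constructor
  · rintro ⟨t, ht, rfl⟩
    exact ⟨-t, by simp only [mem_Ici, mem_Iic] at *; linarith, rfl⟩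
  · rintro ⟨t, ht, rfl⟩
    exact ⟨-t, by simp only [mem_Ici, mem_Iic] at *; linarith, by simp⟩


lemma IsCurve.closed_up {γ : ℝ → Sph} (h : IsCurve γ) (c : ℝ) : IsClosed (insert ∞ (γ '' Ici c)) := by
  obtain ⟨p, h1, h2, h3, -⟩ := h.exists_ray c
  rw [← h3]; exact (isCompact_range h1).isClosed

lemma IsCurve.closed_down {γ : ℝ → Sph} (h : IsCurve γ) (c : ℝ) : IsClosed (insert ∞ (γ '' Iic c)) := by
  obtain ⟨p, h1, h2, h3, -⟩ := h.exists_ray' c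
  rw [← h3]; exact (isCompact_range h1).isClosed

lemma IsCurve.range_eq {γ : ℝ → Sph} (h : IsCurve γ) (c : ℝ) :
    insert ∞ (range γ) = insert ∞ (γ '' Iic c) ∪ insert ∞ (γ '' Ici c) := by
  rw [insert_union, union_insert, insert_idem, ← image_union, Iic_union_Ici, image_univ]

lemma IsCurve.closed {γ : ℝ → Sph} (h : IsCurve γ) : IsClosed (insert ∞ (range γ)) := by
  rw [h.range_eq 0]; exact (h.closed_down 0).union (h.closed_up 0)

lemma hasLog_ray {p : unitInterval → Sph} {K : Set Sph} (hp : Continuous p)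
    (hinj : Function.Injective p) (hr : range p = K) {x y : ℂ} (hx : (x : Sph) ∉ K)
    (hy : (y : Sph) ∉ K) : HasLog K (rat x y) := by
  subst hr
  refine hasLog_arc hp hinj (fun z hz => (rat_continuousAt x y ?_).continuousWithinAt) fun z hz =>
    rat_ne_zero ?_ ?_
  · rintro rfl; exact hx hz
  · rintro rfl; exact hx hz
  · rintro rfl; exact hy hz

lemma IsCurve.hasLog_up {γ : ℝ → Sph} (h : IsCurve γ) (c : ℝ) {x y : ℂ} (hx : (x : Sph) ∉ insert ∞ (γ '' Ici c))
    (hy : (y : Sph) ∉ insert ∞ (γ '' Ici c)) : HasLog (insert ∞ (γ '' Ici c)) (rat x y) := by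
  obtain ⟨p, h1, h2, h3, -⟩ := h.exists_ray c
  exact hasLog_ray h1 h2 h3 hx hy

lemma IsCurve.hasLog_down {γ : ℝ → Sph} (h : IsCurve γ) (c : ℝ) {x y : ℂ} (hx : (x : Sph) ∉ insert ∞ (γ '' Iic c))
    (hy : (y : Sph) ∉ insert ∞ (γ '' Iic c)) : HasLog (insert ∞ (γ '' Iic c)) (rat x y) := by
  obtain ⟨p, h1, h2, h3, -⟩ := h.exists_ray' c
  exact hasLog_ray h1 h2 h3 hx hy

/-- Removing an open subarc of the curve leaves a non-separating set. -/
lemma IsCurve.conn_gap {γ : ℝ → Sph} (h : IsCurve γ) {c d : ℝ} (hcd : c < d) {x y : Sph}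
    (hx : x ∉ insert ∞ (γ '' Iic c) ∪ insert ∞ (γ '' Ici d))
    (hy : y ∉ insert ∞ (γ '' Iic c) ∪ insert ∞ (γ '' Ici d)) :
    Conn (insert ∞ (γ '' Iic c) ∪ insert ∞ (γ '' Ici d))ᶜ x y := by
  rw [mem_union, not_or] at hx hy
  obtain ⟨x, rfl⟩ := exists_coe (mem_insert _ _) hx.1
  obtain ⟨y, rfl⟩ := exists_coe (mem_insert _ _) hy.1
  refine janiszewski0 (h.closed_down c) (h.closed_up d) (mem_insert _ _) (mem_insert _ _) ?_ ?_ ?_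
  · have : insert ∞ (γ '' Iic c) ∩ insert ∞ (γ '' Ici d) = {∞} := by
      rw [← insert_inter_distrib, ← image_inter h.inj, Iic_inter_Ici, Icc_eq_empty (by linarith)]
      simp
    rw [this]; exact isPreconnected_singleton
  · exact conn_of_hasLog (h.closed_down c) (mem_insert _ _) hx.1 hy.1 (h.hasLog_down c hx.1 hy.1)
  · exact conn_of_hasLog (h.closed_up d) (mem_insert _ _) hx.2 hy.2 (h.hasLog_up d hx.2 hy.2)

lemma IsCurve.mem_closure_comp {γ : ℝ → Sph} (h : IsCurve γ) {x : Sph} (hx : x ∉ insert ∞ (range γ)) (t : ℝ) :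
    γ t ∈ closure (connectedComponentIn (insert ∞ (range γ))ᶜ x) := by
  set S := connectedComponentIn (insert ∞ (range γ))ᶜ x with hS
  have hSo : IsOpen S := h.closed.isOpen_compl.connectedComponentIn
  have hxS : x ∈ S := mem_connectedComponentIn hx
  have hcl : ∀ z ∈ closure S, z ∉ insert ∞ (range γ) → z ∈ S := by
    intro z hz hzK
    have h1 : IsPreconnected (insert z S) :=
      isPreconnected_connectedComponentIn.subset_closure (subset_insert _ _)
        (insert_subset hz subset_closure)
    exact h1.subset_connectedComponentIn (mem_insert_of_mem _ hxS)
      (insert_subset hzK (connectedComponentIn_subset _ _)) (mem_insert _ _)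
  by_contra hn
  have hN : γ ⁻¹' (closure S)ᶜ ∈ 𝓝 t :=
    h.cont.continuousAt.preimage_mem_nhds (isClosed_closure.isOpen_compl.mem_nhds hn)
  obtain ⟨c, d, ⟨hc, hd⟩, hcd⟩ := mem_nhds_iff_exists_Ioo_subset.1 hN
  have hcov : ∀ z, z ∉ insert ∞ (γ '' Iic c) ∪ insert ∞ (γ '' Ici d) →
      z ∉ insert ∞ (range γ) ∨ ∃ s ∈ Ioo c d, γ s = z := by
    intro z hz
    by_cases hzK : z ∈ insert ∞ (range γ)
    · right
      rcases hzK with rfl | ⟨s, rfl⟩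
      · exact absurd (Or.inl (mem_insert _ _)) hz
      · refine ⟨s, ⟨?_, ?_⟩, rfl⟩
        · by_contra hs
          exact hz (Or.inl (Or.inr ⟨s, not_lt.1 hs, rfl⟩))
        · by_contra hs
          exact hz (Or.inr (Or.inr ⟨s, not_lt.1 hs, rfl⟩))
    · exact Or.inl hzK
  have hx' : x ∉ insert ∞ (γ '' Iic c) ∪ insert ∞ (γ '' Ici d) := by
    rintro ((rfl | ⟨s, -, rfl⟩) | (rfl | ⟨s, -, rfl⟩)) <;> exact hx (by simp)
  have ht' : γ t ∉ insert ∞ (γ '' Iic c) ∪ insert ∞ (γ '' Ici d) := by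
    rintro ((e | ⟨s, hs, e⟩) | (e | ⟨s, hs, e⟩))
    · exact h.ne_inf _ e
    · rw [h.inj e] at hs; exact absurd hs (not_le.2 hc)
    · exact h.ne_inf _ e
    · rw [h.inj e] at hs; exact absurd hs (not_le.2 hd)
  obtain ⟨C, hC1, hC2, hC3, hC4⟩ := h.conn_gap (hc.trans hd) hx' ht'
  obtain ⟨z, -, hz1, hz2⟩ := hC2 S (closure S)ᶜ hSo isClosed_closure.isOpen_compl (fun z hz => by
      rcases hcov z (hC1 hz) with h' | ⟨s, hs, rfl⟩
      · by_cases hz' : z ∈ closure S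
        · exact Or.inl (hcl z hz' h')
        · exact Or.inr hz'
      · exact Or.inr (hcd hs)) ⟨x, hC3, hxS⟩ ⟨_, hC4, hn⟩
  exact hz2 (subset_closure hz1)

/-- There are at most two sides. -/
lemma IsCurve.two_sides {γ : ℝ → Sph} (h : IsCurve γ) {x y w : Sph} (hx : x ∉ insert ∞ (range γ)) (hy : y ∉ insert ∞ (range γ))
    (hw : w ∉ insert ∞ (range γ)) (hxy : ¬ Conn (insert ∞ (range γ))ᶜ x y)
    (hxw : ¬ Conn (insert ∞ (range γ))ᶜ x w) : Conn (insert ∞ (range γ))ᶜ y w := by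
  classical
  obtain ⟨x, rfl⟩ := exists_coe (mem_insert _ _) hx
  obtain ⟨y, rfl⟩ := exists_coe (mem_insert _ _) hy
  obtain ⟨w, rfl⟩ := exists_coe (mem_insert _ _) hw
  by_contra hyw
  have hcl := h.closed
  have hxy' : ¬ Conn (insert ∞ (range γ))ᶜ (y : Sph) x := fun h => hxy h.symm
  have hxw' : ¬ Conn (insert ∞ (range γ))ᶜ (w : Sph) x := fun h => hxw h.symm
  have hcd := h.closed_down 0
  have hcu := h.closed_up 0
  rw [h.range_eq 0] at hx hy hw hxy' hxw' hyw hcl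
  set K₁ := insert ∞ (γ '' Iic (0 : ℝ)) with hK₁
  set K₂ := insert ∞ (γ '' Ici (0 : ℝ)) with hK₂
  rw [mem_union, not_or] at hx hy hw
  have g1 : ∞ ∈ K₁ := mem_insert _ _
  have g2 : ∞ ∈ K₂ := mem_insert _ _
  have z1 : γ 0 ∈ K₁ := Or.inr ⟨0, by simp, rfl⟩
  have z2 : γ 0 ∈ K₂ := Or.inr ⟨0, by simp, rfl⟩
  have hmeet : ∀ z, z ∈ K₁ → z ∈ K₂ → z = ∞ ∨ z = γ 0 := by
    rintro z (rfl | ⟨s, hs, rfl⟩) (h2 | ⟨r, hr, e⟩)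
    · exact Or.inl rfl
    · exact Or.inl rfl
    · exact Or.inl h2
    · have e' := h.inj e
      subst e'
      right
      rw [le_antisymm (mem_Iic.1 hs) (mem_Ici.1 hr)]
  -- normalised logarithms
  have key : ∀ y : ℂ, (y : Sph) ∉ K₁ → (y : Sph) ∉ K₂ → ∃ (a1 a2 : Sph → ℂ) (p : ℤ),
      ContinuousOn a1 K₁ ∧ ContinuousOn a2 K₂ ∧ (∀ z ∈ K₁, Complex.exp (a1 z) = rat x y z) ∧
      (∀ z ∈ K₂, Complex.exp (a2 z) = rat x y z) ∧ a1 ∞ = 0 ∧ a2 ∞ = 0 ∧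
      a1 (γ 0) = a2 (γ 0) + p * (2 * Real.pi * Complex.I) := by
    intro y hy1 hy2
    obtain ⟨a1, hc1, he1⟩ := h.hasLog_down 0 hx.1 hy1
    obtain ⟨a2, hc2, he2⟩ := h.hasLog_up 0 hx.2 hy2
    have i1 : Complex.exp (a1 ∞) = 1 := by rw [he1 _ g1]; simp
    have i2 : Complex.exp (a2 ∞) = 1 := by rw [he2 _ g2]; simp
    have e : Complex.exp (a1 (γ 0) - a1 ∞) = Complex.exp (a2 (γ 0) - a2 ∞) := by
      rw [Complex.exp_sub, Complex.exp_sub, i1, i2, he1 _ z1, he2 _ z2]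
    obtain ⟨p, hp⟩ := Complex.exp_eq_exp_iff_exists_int.1 e
    exact ⟨fun z => a1 z - a1 ∞, fun z => a2 z - a2 ∞, p, hc1.sub continuousOn_const,
      hc2.sub continuousOn_const, fun z hz => by rw [Complex.exp_sub, i1, he1 z hz, div_one],
      fun z hz => by rw [Complex.exp_sub, i2, he2 z hz, div_one], by simp, by simp, hp⟩
  obtain ⟨a1, a2, p, ca1, ca2, ea1, ea2, ia1, ia2, hp⟩ := key y hy.1 hy.2
  obtain ⟨b1, b2, q, cb1, cb2, eb1, eb2, ib1, ib2, hq⟩ := key w hw.1 hw.2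
  have glue : ∀ (m n : ℤ), m * p + n * q = 0 →
      HasLog (K₁ ∪ K₂) (fun z => rat x y z ^ m * rat x w z ^ n) := by
    intro m n hmn
    have hmn' : (m : ℂ) * p + n * q = 0 := by exact_mod_cast hmn
    have ec1 : ContinuousOn (fun z => m * a1 z + n * b1 z) K₁ :=
      (continuousOn_const.mul ca1).add (continuousOn_const.mul cb1)
    have ec2 : ContinuousOn (fun z => m * a2 z + n * b2 z) K₂ :=
      (continuousOn_const.mul ca2).add (continuousOn_const.mul cb2)
    refine ⟨fun z => if z ∈ K₁ then m * a1 z + n * b1 z else m * a2 z + n * b2 z, ?_, ?_⟩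
    · refine ContinuousOn.union_of_isClosed ?_ ?_ hcd hcu
      · exact ec1.congr fun z hz => by simp [hz]
      · refine ec2.congr fun z hz => ?_
        by_cases hz1 : z ∈ K₁
        · simp only [hz1, if_true]
          rcases hmeet z hz1 hz with rfl | rfl
          · rw [ia1, ia2, ib1, ib2]
          · rw [hp, hq]
            linear_combination (2 * Real.pi * Complex.I) * hmn'
        · simp [hz1]
    · intro z hz
      by_cases hz1 : z ∈ K₁
      · simp only [hz1, if_true, Complex.exp_add, Complex.exp_int_mul, ea1 z hz1, eb1 z hz1]
      · have hz2 : z ∈ K₂ := hz.resolve_left hz1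
        simp only [hz1, if_false, Complex.exp_add, Complex.exp_int_mul, ea2 z hz2, eb2 z hz2]
  have nx : (x : Sph) ∉ K₁ ∪ K₂ := fun h => h.elim hx.1 hx.2
  have ny : (y : Sph) ∉ K₁ ∪ K₂ := fun h => h.elim hy.1 hy.2
  have nw : (w : Sph) ∉ K₁ ∪ K₂ := fun h => h.elim hw.1 hw.2
  have hq0 : q = 0 := eilenberg hcl (Or.inl g1) nx ny nw (glue q (-p) (by ring)) hxy' hyw
  have := glue 0 1 (by rw [hq0]; ring)
  have : (1 : ℤ) = 0 := eilenberg hcl (Or.inl g1) (n := 0) nx nw nx (by simpa using this) hxw' hxw'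
  exact one_ne_zero this


/-- logarithm of `z - p` off an arc joining `p` to infinity -/
lemma log_off_arc {p : unitInterval → Sph} (hp : Continuous p) {P : ℂ} (h0 : p 0 = P)
    (h1 : p 1 = ∞) {z0 : ℂ} (hz0 : (z0 : Sph) ∉ range p) :
    ∃ l : ℂ → ℂ, ContinuousOn l {z | (z : Sph) ∉ range p} ∧
      ∀ z : ℂ, (z : Sph) ∉ range p → Complex.exp (l z) = z - P := by
  classical
  let W : Set ℂ := {z | (z : Sph) ∉ range p}
  let Hf : unitInterval × W → ℂ := fun q => 1 + (z0 - q.2) *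
    (rat z0 (z0 - 1) (p (unitInterval.symm q.1)) - 1)
  have hHf : Continuous Hf := by
    have hr : Continuous fun q : unitInterval × W =>
        rat z0 (z0 - 1) (p (unitInterval.symm q.1)) := by
      have hc : ContinuousOn (rat z0 (z0 - 1)) (range p) := fun z hz =>
        (rat_continuousAt _ _ (by rintro rfl; exact hz0 hz)).continuousWithinAt
      exact hc.comp_continuous (by fun_prop) fun q => mem_range_self _
    have : Continuous fun q : unitInterval × W => (q.2 : ℂ) :=
      continuous_subtype_val.comp continuous_snd
    fun_prop
  have hval : ∀ (z w : ℂ), w ≠ z0 → 1 + (z0 - z) * (rat z0 (z0 - 1) (w : Sph) - 1) =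
      (w - z) / (w - z0) := by
    intro z w hw
    have : w - z0 ≠ 0 := sub_ne_zero.2 hw
    rw [rat_coe]
    field_simp
    ring
  have hH0 : ∀ q, Hf q ≠ 0 := by
    rintro ⟨t, z, hz⟩
    simp only [Hf]
    rcases hpt : p (unitInterval.symm t) with _ | w
    · change 1 + (z0 - z) * (rat z0 (z0 - 1) ∞ - 1) ≠ 0
      simp
    · have hw : (w : Sph) ∈ range p := ⟨_, hpt⟩
      change 1 + (z0 - z) * (rat z0 (z0 - 1) (w : Sph) - 1) ≠ 0
      rw [hval z w (by rintro rfl; exact hz0 hw)]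
      refine div_ne_zero (sub_ne_zero.2 ?_) (sub_ne_zero.2 ?_)
      · rintro rfl; exact hz hw
      · rintro rfl; exact hz0 hw
  let H : C(unitInterval × W, {z : ℂ // z ≠ 0}) := ⟨fun q => ⟨Hf q, hH0 q⟩, by fun_prop⟩
  have hs : ∀ a, H (0, a) = (⟨_, Complex.exp_ne_zero ((ContinuousMap.const W (0 : ℂ)) a)⟩ :
      {z : ℂ // z ≠ 0}) := by
    intro a
    ext
    simp [H, Hf, h1]
  let Λ := Complex.isCoveringMap_exp.liftHomotopy H (ContinuousMap.const W 0) hs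
  have hΛ := Complex.isCoveringMap_exp.liftHomotopy_lifts H (ContinuousMap.const W 0) hs
  have hPz : P ≠ z0 := by rintro rfl; exact hz0 ⟨0, h0⟩
  have hΛ1 : ∀ z : W, Complex.exp (Λ (1, z)) = (P - z) / (P - z0) := by
    intro z
    have := congrArg Subtype.val (congrFun hΛ (1, z))
    refine this.trans ?_
    change 1 + (z0 - (z : ℂ)) * (rat z0 (z0 - 1) (p (unitInterval.symm 1)) - 1) = _
    rw [unitInterval.symm_one, h0, hval _ _ hPz]
  refine ⟨fun z => if hz : z ∈ W then Λ (1, ⟨z, hz⟩) + Complex.log (z0 - P) else 0, ?_, ?_⟩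
  · rw [continuousOn_iff_continuous_domRestrict]
    have : Continuous fun z : W => Λ (1, z) + Complex.log (z0 - P) := by fun_prop
    refine this.congr fun z => ?_
    have hz : (z : ℂ) ∈ W := z.2
    simp [hz]
  · intro z hz
    have hz' : z ∈ W := hz
    simp only [hz', dif_pos]
    have e1 : P - z0 ≠ 0 := sub_ne_zero.2 hPz
    have e2 : z0 - P ≠ 0 := sub_ne_zero.2 hPz.symm
    rw [Complex.exp_add, hΛ1, Complex.exp_log e2]
    field_simp
    ring

/-- Jordan separation. -/
lemma IsCurve.not_pre {γ : ℝ → Sph} (h : IsCurve γ) : ¬ IsPreconnected (insert ∞ (range γ))ᶜ := by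
  classical
  intro hpre
  obtain ⟨p1, c1, -, r1, s1, f1⟩ := h.exists_ray' 0
  obtain ⟨p2, c2, -, r2, s2, f2⟩ := h.exists_ray 0
  have hco : ∀ t, ∃ z : ℂ, γ t = z := fun t => exists_coe (K := {∞}) rfl (h.ne_inf t)
  obtain ⟨P, hP⟩ := hco 0
  obtain ⟨z1, hz1⟩ := hco 1
  obtain ⟨z2, hz2⟩ := hco (-1)
  obtain ⟨l1, hc1, he1⟩ := log_off_arc c1 (s1.trans hP) f1 (z0 := z1) (by
    rw [r1, ← hz1]
    rintro (e | ⟨s, hs, e⟩)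
    · exact h.ne_inf _ e
    · rw [h.inj e] at hs; norm_num at hs)
  obtain ⟨l2, hc2, he2⟩ := log_off_arc c2 (s2.trans hP) f2 (z0 := z2) (by
    rw [r2, ← hz2]
    rintro (e | ⟨s, hs, e⟩)
    · exact h.ne_inf _ e
    · rw [h.inj e] at hs; norm_num at hs)
  set W1 : Set ℂ := {z | (z : Sph) ∉ range p1}
  set W2 : Set ℂ := {z | (z : Sph) ∉ range p2}
  have hW1 : IsOpen W1 := (isCompact_range c1).isClosed.isOpen_compl.preimage continuous_coe
  have hW2 : IsOpen W2 := (isCompact_range c2).isClosed.isOpen_compl.preimage continuous_coe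
  have hWe : (fun z : ℂ => (z : Sph)) '' (W1 ∩ W2) = (insert ∞ (range γ))ᶜ := by
    rw [h.range_eq 0, ← r1, ← r2]
    ext z
    constructor
    · rintro ⟨z, ⟨h1, h2⟩, rfl⟩
      exact fun h => h.elim h1 h2
    · intro hz
      obtain ⟨z, rfl⟩ := exists_coe (K := range p1 ∪ range p2) (Or.inl ⟨1, f1⟩) hz
      exact ⟨z, ⟨fun h => hz (Or.inl h), fun h => hz (Or.inr h)⟩, rfl⟩
  have hWp : IsPreconnected (W1 ∩ W2) := by
    rw [← hWe] at hpre
    exact (OnePoint.isOpenEmbedding_coe.isInducing.isPreconnected_image).1 hpre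
  have hcov : ∀ z : ℂ, z ≠ P → z ∈ W1 ∪ W2 := by
    intro z hz
    by_contra hn
    simp only [mem_union, not_or, W1, W2, mem_ofPred_eq, not_not, r1, r2] at hn
    obtain ⟨e1 | ⟨s, hs, e1⟩, e2 | ⟨r, hr, e2⟩⟩ := hn
    · exact OnePoint.coe_ne_infty _ e1
    · exact OnePoint.coe_ne_infty _ e1
    · exact OnePoint.coe_ne_infty _ e2
    · have := h.inj (e1.trans e2.symm)
      subst this
      rw [le_antisymm (mem_Iic.1 hs) (mem_Ici.1 hr), hP] at e1
      exact hz (OnePoint.coe_eq_coe.1 e1).symm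
  have hne : ∀ z ∈ W1 ∪ W2, z ≠ P := by
    rintro z (hz | hz) rfl
    · exact hz ⟨0, s1.trans hP⟩
    · exact hz ⟨0, s2.trans hP⟩
  obtain ⟨c, hec, hcz⟩ : ∃ c : ℂ, Complex.exp c = 1 ∧ ∀ z ∈ W1 ∩ W2, l1 z = l2 z + c := by
    have hd : ∀ z ∈ W1 ∩ W2, Complex.exp (l1 z - l2 z) = 1 := fun z hz => by
      rw [Complex.exp_sub, he1 z hz.1, he2 z hz.2]
      exact div_self (sub_ne_zero.2 (hne z (Or.inl hz.1)))
    rcases (W1 ∩ W2).eq_empty_or_nonempty with h0 | ⟨w, hw⟩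
    · exact ⟨0, by simp, by simp [h0]⟩
    · refine ⟨l1 w - l2 w, hd w hw, fun z hz => ?_⟩
      have := exp_const hWp ((hc1.mono inter_subset_left).sub (hc2.mono inter_subset_right)) hd hz hw
      simp only [Pi.sub_apply] at this
      rw [← this]; ring
  let l : ℂ → ℂ := fun z => if z ∈ W1 then l1 z else l2 z + c
  have hl : ContinuousOn l (W1 ∪ W2) := by
    refine ContinuousOn.union_of_isOpen ?_ ?_ hW1 hW2
    · exact hc1.congr fun z hz => by simp [l, hz]
    · refine (hc2.add (continuousOn_const (c := c))).congr fun z hz => ?_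
      by_cases h : z ∈ W1
      · simp [l, h, hcz z ⟨h, hz⟩]
      · simp [l, h]
  have hle : ∀ z ∈ W1 ∪ W2, Complex.exp (l z) = z - P := by
    intro z hz
    by_cases h : z ∈ W1
    · simp [l, h, he1 z h]
    · have hz2 : z ∈ W2 := hz.resolve_left h
      simp [l, h, Complex.exp_add, hec, he2 z hz2]
  have hsp : ∀ z ∈ Metric.sphere (0 : ℂ) 1, z + P ∈ W1 ∪ W2 := by
    intro z hz
    refine hcov _ fun e => ?_
    have : z = 0 := by simpa using e
    rw [this] at hz
    simp at hz
  have := circle_log one_pos (m := 1) (h := fun z => l (z + P))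
    (hl.comp (by fun_prop) hsp) (fun z hz => by rw [hle _ (hsp z hz)]; simp)
  exact one_ne_zero this

end Levi

namespace Levi
open Filter OnePoint

/-- A pseudoline on the sphere together with its two sides. -/
structure PL where
  γ : ℝ → Sph
  curve : IsCurve γ
  side : Bool → Set Sph
  side_open : ∀ b, IsOpen (side b)
  side_pre : ∀ b, IsPreconnected (side b)
  disj : Disjoint (side true) (side false)
  union : side true ∪ side false = (insert ∞ (range γ))ᶜ
  cl : ∀ b t, γ t ∈ closure (side b)

/-- The curve of a pseudoline, including infinity. -/
def PL.K (P : PL) : Set Sph := insert ∞ (range P.γ)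

namespace PL
variable (P : PL)

lemma inf_mem : ∞ ∈ P.K := mem_insert _ _
lemma γ_mem (t : ℝ) : P.γ t ∈ P.K := Or.inr ⟨t, rfl⟩
lemma K_closed : IsClosed P.K := P.curve.closed

lemma not_both {b : Bool} {z : Sph} (h : z ∈ P.side b) (h' : z ∈ P.side (!b)) : False := by
  cases b
  · exact disjoint_left.1 P.disj h' h
  · exact disjoint_left.1 P.disj h h'

lemma not_K {b : Bool} {z : Sph} (h : z ∈ P.side b) : z ∉ P.K := by
  have : z ∈ (insert ∞ (range P.γ))ᶜ := by
    rw [← P.union]; cases b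
    · exact Or.inr h
    · exact Or.inl h
  exact this

lemma mem_side {z : Sph} (h : z ∉ P.K) (b : Bool) : z ∈ P.side b ∨ z ∈ P.side (!b) := by
  have : z ∈ P.side true ∪ P.side false := by rw [P.union]; exact h
  cases b
  · exact this.symm
  · exact this

lemma exists_side {z : Sph} (h : z ∉ P.K) : ∃ b, z ∈ P.side b := by
  rcases P.mem_side h true with h | h
  exacts [⟨_, h⟩, ⟨_, h⟩]

lemma side_eq {b c : Bool} {z : Sph} (h : z ∈ P.side b) (h' : z ∈ P.side c) : b = c := by
  by_contra hne
  have : c = !b := by cases b <;> cases c <;> simp_all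
  subst this
  exact P.not_both h h'

lemma mem_not {b : Bool} {z : Sph} (h : z ∉ P.K) (h' : z ∉ P.side b) : z ∈ P.side (!b) :=
  (P.mem_side h b).resolve_left h'

lemma K_cl {z : Sph} (hz : z ∈ P.K) (b : Bool) : z ∈ closure (P.side b) := by
  rcases hz with rfl | ⟨t, rfl⟩
  · have h1 : ∀ᶠ t in atTop, P.γ t ∈ closure (P.side b) := Eventually.of_forall (P.cl b)
    exact isClosed_closure.mem_of_tendsto P.curve.top h1
  · exact P.cl b t

lemma side_ne (b : Bool) : (P.side b).Nonempty :=
  closure_nonempty_iff.1 ⟨_, P.cl b 0⟩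

lemma cl_side {b : Bool} {z : Sph} (hz : z ∈ closure (P.side b)) : z ∉ P.side (!b) := by
  intro h
  obtain ⟨w, h1, h2⟩ := mem_closure_iff.1 hz _ (P.side_open (!b)) h
  exact P.not_both h2 h1

lemma side_of_pre {C : Set Sph} (hC : IsPreconnected C) (hK : Disjoint C P.K) {b : Bool} {x : Sph}
    (hx : x ∈ C) (hb : x ∈ P.side b) : C ⊆ P.side b := by
  intro y hy
  by_contra hn
  have hy' : y ∈ P.side (!b) := P.mem_not (disjoint_left.1 hK hy) hn
  obtain ⟨z, -, h1, h2⟩ := hC _ _ (P.side_open b) (P.side_open (!b))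
    (fun z hz => P.mem_side (disjoint_left.1 hK hz) b) ⟨x, hx, hb⟩ ⟨y, hy, hy'⟩
  exact P.not_both h1 h2

lemma conn_side {W : Set Sph} {x y : Sph} (h : Conn (W ∩ P.Kᶜ) x y) {b : Bool}
    (hb : x ∈ P.side b) : Conn (W ∩ P.side b) x y := by
  obtain ⟨C, h1, h2, h3, h4⟩ := h
  refine ⟨C, fun z hz => ⟨(h1 hz).1, ?_⟩, h2, h3, h4⟩
  exact P.side_of_pre h2 (disjoint_left.2 fun z hz => (h1 hz).2) h3 hb hz

end PL

/-- Every curve is the curve of a pseudoline. -/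
lemma IsCurve.exists_PL {γ : ℝ → Sph} (h : IsCurve γ) : ∃ P : PL, P.γ = γ := by
  obtain ⟨x, hx, y, hy, hxy⟩ : ∃ x ∉ insert ∞ (range γ), ∃ y ∉ insert ∞ (range γ),
      ¬ Conn (insert ∞ (range γ))ᶜ x y := by
    by_contra hn
    push Not at hn
    exact h.not_pre (isPreconnected_of_conn fun x hx y hy => hn x hx y hy)
  refine ⟨⟨γ, h, fun b => connectedComponentIn (insert ∞ (range γ))ᶜ (if b then x else y),
    fun b => h.closed.isOpen_compl.connectedComponentIn,
    fun b => isPreconnected_connectedComponentIn, ?_, ?_, ?_⟩, rfl⟩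
  · rw [disjoint_left]
    intro z h1 h2
    simp only [if_true, Bool.false_eq_true, if_false] at h1 h2
    rw [← conn_iff_mem hx] at h1
    rw [← conn_iff_mem hy] at h2
    exact hxy (h1.trans h2.symm)
  · ext z
    simp only [if_true, Bool.false_eq_true, if_false]
    constructor
    · rintro (h1 | h1) <;> exact connectedComponentIn_subset _ _ h1
    · intro hz
      by_cases hxz : Conn (insert ∞ (range γ))ᶜ x z
      · left; rwa [← conn_iff_mem hx]
      · right; rw [← conn_iff_mem hy]
        exact h.two_sides hx hy hz hxy hxz
  · intro b t
    exact h.mem_closure_comp (by cases b <;> simp only [if_true, Bool.false_eq_true, if_false] <;> assumption) t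

/-- An indexed arrangement of pseudolines on the sphere. -/
def IsArr {ι : Type} (L : ι → PL) : Prop :=
  ∀ i j, i ≠ j → ∃ (t : ℝ) (b : Bool), (∀ s < t, (L i).γ s ∈ (L j).side b) ∧
    (L i).γ t ∈ (L j).K ∧ ∀ s > t, (L i).γ s ∈ (L j).side (!b)

section Arr
variable {ι : Type} {L : ι → PL}

lemma IsArr.cut (hL : IsArr L) {i j : ι} (hij : i ≠ j) : ∃ (t : ℝ) (b : Bool), ∀ s,
    ((L i).γ s ∈ (L j).side b ↔ s < t) ∧ ((L i).γ s ∈ (L j).K ↔ s = t) ∧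
    ((L i).γ s ∈ (L j).side (!b) ↔ t < s) := by
  obtain ⟨t, b, h1, h2, h3⟩ := hL i j hij
  refine ⟨t, b, fun s => ?_⟩
  rcases lt_trichotomy s t with h | rfl | h
  · have := h1 s h
    refine ⟨⟨fun _ => h, fun _ => this⟩, ⟨fun h' => absurd h' ((L j).not_K this),
      fun h' => absurd h' h.ne⟩, ⟨fun h' => ((L j).not_both this h').elim, fun h' => ?_⟩⟩
    exact absurd h' (not_lt.2 h.le)
  · refine ⟨⟨fun h' => absurd h2 ((L j).not_K h'), fun h => absurd h (lt_irrefl _)⟩,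
      ⟨fun _ => rfl, fun _ => h2⟩, ⟨fun h' => absurd h2 ((L j).not_K h'), fun h =>
        absurd h (lt_irrefl _)⟩⟩
  · have := h3 s h
    refine ⟨⟨fun h' => ((L j).not_both h' this).elim, fun h' => ?_⟩,
      ⟨fun h' => absurd h' ((L j).not_K this), fun h' => absurd h' h.ne'⟩,
      ⟨fun _ => h, fun _ => this⟩⟩
    exact absurd h' (not_lt.2 (le_of_lt h))

/-- Cells of (sub)arrangements. -/
def cell (L : ι → PL) (I : Finset ι) (s : ι → Bool) : Set Sph :=
  {z | ∀ i ∈ I, z ∈ (L i).side (s i)}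

lemma cell_open (I : Finset ι) (s : ι → Bool) : IsOpen (cell L I s) := by
  have : cell L I s = ⋂ i ∈ I, (L i).side (s i) := by
    ext z; simp [cell]
  rw [this]
  exact isOpen_biInter_finset fun i _ => (L i).side_open _

lemma cell_empty (s : ι → Bool) : cell L ∅ s = univ := by ext; simp [cell]

lemma cell_insert [DecidableEq ι] (I : Finset ι) (i : ι) (s : ι → Bool) :
    cell L (insert i I) s = cell L I s ∩ (L i).side (s i) := by
  ext z; simp [cell, and_comm]

lemma cell_mono {I I' : Finset ι} (h : I ⊆ I') (s : ι → Bool) : cell L I' s ⊆ cell L I s :=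
  fun _ hz i hi => hz i (h hi)

lemma cell_congr {I : Finset ι} {s s' : ι → Bool} (h : ∀ i ∈ I, s i = s' i) :
    cell L I s = cell L I s' := by
  ext z
  exact ⟨fun hz i hi => h i hi ▸ hz i hi, fun hz i hi => (h i hi).symm ▸ hz i hi⟩

lemma inf_not_cell {I : Finset ι} (hI : I.Nonempty) (s : ι → Bool) : ∞ ∉ cell L I s := by
  obtain ⟨i, hi⟩ := hI
  exact fun h => (L i).not_K (h i hi) (L i).inf_mem

lemma IsArr.ordConnected (hL : IsArr L) {i : ι} {I : Finset ι} (hi : i ∉ I) (s : ι → Bool) :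
    OrdConnected ((L i).γ ⁻¹' cell L I s) := by
  have : (L i).γ ⁻¹' cell L I s = ⋂ j ∈ I, {t | (L i).γ t ∈ (L j).side (s j)} := by
    ext z; simp [cell]
  rw [this]
  refine ordConnected_biInter fun j hj => ?_
  have hij : i ≠ j := by rintro rfl; exact hi hj
  obtain ⟨t, b, h⟩ := hL.cut hij
  by_cases hb : s j = b
  · have : {t | (L i).γ t ∈ (L j).side (s j)} = Iio t := by
      ext r; rw [hb]; exact (h r).1
    rw [this]; exact ordConnected_Iio
  · have : {t | (L i).γ t ∈ (L j).side (s j)} = Ioi t := by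
      have hb' : s j = !b := by cases b <;> simp_all
      ext r; rw [hb']; exact (h r).2.2
    rw [this]; exact ordConnected_Ioi

lemma IsCurve.pre_compl {γ : ℝ → Sph} (h : IsCurve γ) {J : Set ℝ} (hJ : OrdConnected J) :
    IsPreconnected (insert ∞ (γ '' Jᶜ)) := by
  refine isPreconnected_of_forall ∞ ?_
  rintro z (rfl | ⟨t, ht, rfl⟩)
  · exact ⟨{∞}, by simp, rfl, rfl, isPreconnected_singleton⟩
  · by_cases hd : ∀ s ≤ t, s ∉ J
    · obtain ⟨p, h1, -, h3, -⟩ := h.exists_ray' t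
      refine ⟨insert ∞ (γ '' Iic t), insert_subset_insert (image_mono hd), mem_insert _ _,
        Or.inr ⟨t, mem_Iic.2 le_rfl, rfl⟩, ?_⟩
      rw [← h3]; exact isPreconnected_range h1
    · push Not at hd
      obtain ⟨r, hrt, hr⟩ := hd
      obtain ⟨p, h1, -, h3, -⟩ := h.exists_ray t
      refine ⟨insert ∞ (γ '' Ici t), insert_subset_insert (image_mono fun s hs hsJ => ht ?_),
        mem_insert _ _, Or.inr ⟨t, mem_Ici.2 le_rfl, rfl⟩, ?_⟩
      · exact hJ.out hr hsJ ⟨hrt, hs⟩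
      · rw [← h3]; exact isPreconnected_range h1

lemma IsArr.cell_pre (hL : IsArr L) (I : Finset ι) (hI : I.Nonempty) (s : ι → Bool) :
    IsPreconnected (cell L I s) := by
  classical
  induction hI using Finset.Nonempty.cons_induction with
  | singleton i =>
    have : cell L {i} s = (L i).side (s i) := by ext; simp [cell]
    rw [this]; exact (L i).side_pre _
  | cons i I hi hI ih =>
    rw [Finset.cons_eq_insert, cell_insert]
    refine isPreconnected_of_conn fun x hx y hy => ?_
    refine (L i).conn_side ?_ hx.2
    have hK : (cell L I s ∩ (L i).Kᶜ) = ((cell L I s)ᶜ ∪ (L i).K)ᶜ := by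
      rw [compl_union, compl_compl]
    rw [hK]
    refine janiszewski0 (cell_open I s).isClosed_compl (L i).K_closed (inf_not_cell hI s)
      (L i).inf_mem ?_ ?_ ?_
    · have : (cell L I s)ᶜ ∩ (L i).K = insert ∞ ((L i).γ '' ((L i).γ ⁻¹' cell L I s)ᶜ) := by
        ext z
        constructor
        · rintro ⟨h1, rfl | ⟨t, rfl⟩⟩
          · exact mem_insert _ _
          · exact Or.inr ⟨t, h1, rfl⟩
        · rintro (rfl | ⟨t, h1, rfl⟩)
          · exact ⟨inf_not_cell hI s, (L i).inf_mem⟩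
          · exact ⟨h1, (L i).γ_mem t⟩
      rw [this]
      exact (L i).curve.pre_compl (hL.ordConnected hi s)
    · rw [compl_compl]; exact Conn.of_pre ih hx.1 hy.1
    · exact (Conn.of_pre ((L i).side_pre _) hx.2 hy.2).mono fun z hz => (L i).not_K hz

/-- Local connectedness of cells at all points. -/
lemma IsArr.LC (hL : IsArr L) (I : Finset ι) (s : ι → Bool) : ∀ u : Sph, ∀ U ∈ 𝓝 u,
    ∃ V ∈ 𝓝 u, V ⊆ U ∧ ∀ x ∈ V ∩ cell L I s, ∀ y ∈ V ∩ cell L I s,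
      Conn (U ∩ cell L I s) x y := by
  classical
  induction I using Finset.induction_on with
  | empty =>
    intro u U hU
    obtain ⟨V, hV, hVU⟩ := (locallyConnectedSpace_iff_connected_subsets.1 inferInstance) u U hU
    refine ⟨V, hV, hVU.2, fun x hx y hy => ?_⟩
    exact ⟨V, fun z hz => ⟨hVU.2 hz, by simp [cell]⟩, hVU.1, hx.1, hy.1⟩
  | insert i I hi ih =>
    intro u U hU
    -- the general step
    have step : ∀ A : Set Sph, IsClosed A → u ∉ A → A ⊆ (L i).K →
        (((interior U ∩ Aᶜ ∩ cell L I s)ᶜ ∩ (L i).K).Nonempty →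
          IsPreconnected ((interior U ∩ Aᶜ ∩ cell L I s)ᶜ ∩ (L i).K)) →
        ((interior U ∩ Aᶜ ∩ cell L I s)ᶜ ∩ (L i).K).Nonempty →
        ∃ V ∈ 𝓝 u, V ⊆ U ∧ ∀ x ∈ V ∩ cell L (insert i I) s, ∀ y ∈ V ∩ cell L (insert i I) s,
          Conn (U ∩ cell L (insert i I) s) x y := by
      intro A hA huA hAK hpre hne
      obtain ⟨V, hV, hVU, hc⟩ := ih u (interior U ∩ Aᶜ)
        (inter_mem (interior_mem_nhds.2 hU) (hA.isOpen_compl.mem_nhds huA))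
      refine ⟨V, hV, hVU.trans (inter_subset_left.trans interior_subset), ?_⟩
      rw [cell_insert]
      intro x hx y hy
      rw [← inter_assoc]
      refine (L i).conn_side ?_ hx.2.2
      have c1 := hc x ⟨hx.1, hx.2.1⟩ y ⟨hy.1, hy.2.1⟩
      have c2 : Conn (L i).Kᶜ x y :=
        (Conn.of_pre ((L i).side_pre _) hx.2.2 hy.2.2).mono fun z hz => (L i).not_K hz
      have o1 : IsOpen (interior U ∩ Aᶜ ∩ cell L I s) :=
        (isOpen_interior.inter hA.isOpen_compl).inter (cell_open I s)
      have := janiszewski o1.isClosed_compl (L i).K_closed hne (hpre hne)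
        (by rw [compl_compl]; exact c1) c2
      refine this.mono ?_
      rw [compl_union, compl_compl]
      exact inter_subset_inter_left _ fun z hz => ⟨interior_subset hz.1.1, hz.2⟩
    by_cases huK : u ∈ (L i).K
    · rcases huK with rfl | ⟨t0, rfl⟩
      · -- at infinity
        have ev1 : ∀ᶠ t in atTop, (L i).γ t ∈ interior U :=
          (L i).curve.top (interior_mem_nhds.2 hU)
        have ev2 : ∀ᶠ t in atBot, (L i).γ t ∈ interior U :=
          (L i).curve.bot (interior_mem_nhds.2 hU)
        obtain ⟨R1, hR1⟩ := eventually_atTop.1 ev1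
        obtain ⟨R2, hR2⟩ := eventually_atBot.1 ev2
        obtain ⟨R3, hR3⟩ : ∃ R3 : ℝ, ∀ R ≥ R3, I.Nonempty →
            OrdConnected ((Icc (-R) R)ᶜ ∩ (L i).γ ⁻¹' cell L I s) := by
          rcases I.eq_empty_or_nonempty with rfl | ⟨j, hj⟩
          · exact ⟨0, fun R _ h => absurd h (by simp)⟩
          · have hij : i ≠ j := by rintro rfl; exact hi hj
            obtain ⟨t, b, h⟩ := hL.cut hij
            refine ⟨|t|, fun R hR _ => ?_⟩
            have ht := abs_le.1 (show |t| ≤ R from hR)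
            have hoc := hL.ordConnected hi s
            by_cases hb : s j = b
            · have : (Icc (-R) R)ᶜ ∩ (L i).γ ⁻¹' cell L I s =
                  Iio (-R) ∩ (L i).γ ⁻¹' cell L I s := by
                ext r
                simp only [mem_inter_iff, mem_compl_iff, mem_Icc, not_and, not_le, mem_Iio]
                refine and_congr_left fun hr => ?_
                have : r < t := (h r).1.1 (hb ▸ hr j hj)
                refine ⟨fun h' => ?_, fun h' h'' => absurd h' (not_lt.2 h'')⟩
                by_contra hn
                have := h' (not_lt.1 hn)
                linarith [ht.2]
              rw [this]; exact ordConnected_Iio.inter hoc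
            · have : (Icc (-R) R)ᶜ ∩ (L i).γ ⁻¹' cell L I s =
                  Ioi R ∩ (L i).γ ⁻¹' cell L I s := by
                have hb' : s j = !b := by cases b <;> simp_all
                ext r
                simp only [mem_inter_iff, mem_compl_iff, mem_Icc, not_and, not_le, mem_Ioi]
                refine and_congr_left fun hr => ?_
                have : t < r := (h r).2.2.1 (hb' ▸ hr j hj)
                refine ⟨fun h' => h' (by linarith [ht.1]), fun h' _ => h'⟩
              rw [this]; exact ordConnected_Ioi.inter hoc
        set R := max (max R1 (-R2)) (max R3 0) with hR
        have hRR1 : R1 ≤ R := (le_max_left _ _).trans (le_max_left _ _)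
        have hRR2 : -R2 ≤ R := (le_max_right _ _).trans (le_max_left _ _)
        have hRR3 : R3 ≤ R := (le_max_left _ _).trans (le_max_right _ _)
        have hRR0 : 0 ≤ R := (le_max_right _ _).trans (le_max_right _ _)
        have hout : ∀ t ∉ Icc (-R) R, (L i).γ t ∈ interior U := by
          intro t ht
          rw [mem_Icc, not_and, not_le] at ht
          by_cases h' : -R ≤ t
          · exact hR1 t (hRR1.trans (ht h').le)
          · exact hR2 t (by linarith)
        have hiA : ∞ ∉ (L i).γ '' Icc (-R) R := by
          rintro ⟨t, -, e⟩; exact (L i).curve.ne_inf t e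
        refine step ((L i).γ '' Icc (-R) R) (isCompact_Icc.image (L i).curve.cont).isClosed
          hiA ?_ ?_ ⟨(L i).γ 0, ?_, (L i).γ_mem 0⟩
        · rintro _ ⟨t, -, rfl⟩; exact (L i).γ_mem t
        · intro _
          rcases I.eq_empty_or_nonempty with hIe | hIn
          · have : (interior U ∩ ((L i).γ '' Icc (-R) R)ᶜ ∩ cell L I s)ᶜ ∩ (L i).K =
                (L i).γ '' Icc (-R) R := by
              rw [hIe, cell_empty, inter_univ]
              ext z
              constructor
              · rintro ⟨h1, rfl | ⟨t, rfl⟩⟩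
                · exact absurd ⟨mem_interior_iff_mem_nhds.2 hU, hiA⟩ h1
                · by_contra h2
                  exact h1 ⟨hout t fun h3 => h2 ⟨t, h3, rfl⟩, h2⟩
              · intro hz
                refine ⟨fun h => h.2 hz, ?_⟩
                obtain ⟨t, -, rfl⟩ := hz
                exact (L i).γ_mem t
            rw [this]
            exact isPreconnected_Icc.image _ (L i).curve.cont.continuousOn
          · have : (interior U ∩ ((L i).γ '' Icc (-R) R)ᶜ ∩ cell L I s)ᶜ ∩ (L i).K =
                insert ∞ ((L i).γ '' ((Icc (-R) R)ᶜ ∩ (L i).γ ⁻¹' cell L I s)ᶜ) := by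
              ext z
              constructor
              · rintro ⟨h1, rfl | ⟨t, rfl⟩⟩
                · exact mem_insert _ _
                · refine Or.inr ⟨t, fun h2 => h1 ⟨⟨hout t h2.1, ?_⟩, h2.2⟩, rfl⟩
                  rintro ⟨r, hr, e⟩
                  rw [(L i).curve.inj e] at hr
                  exact h2.1 hr
              · rintro (rfl | ⟨t, h1, rfl⟩)
                · exact ⟨fun h => inf_not_cell hIn s h.2, (L i).inf_mem⟩
                · exact ⟨fun h => h1 ⟨fun h' => h.1.2 ⟨t, h', rfl⟩, h.2⟩, (L i).γ_mem t⟩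
            rw [this]
            exact (L i).curve.pre_compl (hR3 R hRR3 hIn)
        · exact fun h => h.1.2 ⟨0, ⟨by linarith, hRR0⟩, rfl⟩
      · -- at a point of the curve
        have hN : (L i).γ ⁻¹' interior U ∈ 𝓝 t0 :=
          (L i).curve.cont.continuousAt.preimage_mem_nhds (interior_mem_nhds.2 hU)
        obtain ⟨c, d, ⟨hc, hd⟩, hcd⟩ := mem_nhds_iff_exists_Ioo_subset.1 hN
        set A := insert ∞ ((L i).γ '' (Ioo c d)ᶜ) with hA
        have hAc : IsClosed A := by
          have : A = insert ∞ ((L i).γ '' Iic c) ∪ insert ∞ ((L i).γ '' Ici d) := by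
            rw [insert_union, union_insert, insert_idem, ← image_union, hA]
            congr 2
            ext r
            simp only [mem_compl_iff, mem_Ioo, not_and, not_lt, mem_union, mem_Iic, mem_Ici]
            constructor
            · intro h
              by_cases h' : c < r
              · exact Or.inr (h h')
              · exact Or.inl (not_lt.1 h')
            · rintro (h | h) h'
              · linarith
              · exact h
          rw [this]
          exact ((L i).curve.closed_down c).union ((L i).curve.closed_up d)
        have htA : ∀ t, (L i).γ t ∈ A ↔ t ∉ Ioo c d := by
          intro t
          constructor
          · rintro (e | ⟨r, hr, e⟩)
            · exact absurd e ((L i).curve.ne_inf t)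
            · rw [← (L i).curve.inj e]; exact hr
          · exact fun h => Or.inr ⟨t, h, rfl⟩
        refine step A hAc (fun h => (htA t0).1 h ⟨hc, hd⟩) ?_ ?_
          ⟨∞, fun h => h.1.2 (mem_insert _ _), (L i).inf_mem⟩
        · rintro z (rfl | ⟨t, -, rfl⟩)
          exacts [(L i).inf_mem, (L i).γ_mem t]
        · intro _
          have : (interior U ∩ Aᶜ ∩ cell L I s)ᶜ ∩ (L i).K =
              insert ∞ ((L i).γ '' (Ioo c d ∩ (L i).γ ⁻¹' cell L I s)ᶜ) := by
            ext z
            constructor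
            · rintro ⟨h1, rfl | ⟨t, rfl⟩⟩
              · exact mem_insert _ _
              · refine Or.inr ⟨t, fun h2 => h1 ⟨⟨hcd h2.1, fun h3 => (htA t).1 h3 h2.1⟩, h2.2⟩, rfl⟩
            · rintro (rfl | ⟨t, h1, rfl⟩)
              · exact ⟨fun h => h.1.2 (mem_insert _ _), (L i).inf_mem⟩
              · refine ⟨fun h => h1 ⟨?_, h.2⟩, (L i).γ_mem t⟩
                by_contra h3
                exact h.1.2 ((htA t).2 h3)
          rw [this]
          exact (L i).curve.pre_compl (ordConnected_Ioo.inter (hL.ordConnected hi s))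
    · -- off the curve
      obtain ⟨V, hV, hVU, hc⟩ := ih u (U ∩ (L i).Kᶜ)
        (inter_mem hU ((L i).K_closed.isOpen_compl.mem_nhds huK))
      refine ⟨V, hV, hVU.trans inter_subset_left, ?_⟩
      rw [cell_insert]
      intro x hx y hy
      rw [← inter_assoc]
      refine (L i).conn_side ?_ hx.2.2
      refine (hc x ⟨hx.1, hx.2.1⟩ y ⟨hy.1, hy.2.1⟩).mono ?_
      rintro z ⟨⟨h1, h2⟩, h3⟩
      exact ⟨⟨h1, h3⟩, h2⟩

end Arr
end Levi

namespace Levi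
open Filter OnePoint

/-! ### Paths contain arcs -/

section Arc
variable {X : Type*} [TopologicalSpace X]

/-- Closed sets whose gaps are loops of `f`. -/
def Sel (f : ℝ → X) (K : Set ℝ) : Prop :=
  IsClosed K ∧ K ⊆ Icc 0 1 ∧ (0:ℝ) ∈ K ∧ (1:ℝ) ∈ K ∧
    ∀ a ∈ K, ∀ b ∈ K, a < b → Disjoint (Ioo a b) K → f a = f b

lemma exists_lastIn {K : Set ℝ} (hK : IsClosed K) {a t : ℝ} (ha : a ∈ K) (hat : a ≤ t) :
    ∃ r ∈ K, a ≤ r ∧ r ≤ t ∧ ∀ x ∈ K, x ≤ t → x ≤ r := by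
  have hc : IsCompact (K ∩ Icc a t) := isCompact_Icc.inter_left hK
  obtain ⟨r, hr⟩ := hc.exists_isGreatest ⟨a, ha, le_rfl, hat⟩
  refine ⟨r, hr.1.1, hr.1.2.1, hr.1.2.2, fun x hx hxt => ?_⟩
  by_cases h : a ≤ x
  · exact hr.2 ⟨hx, h, hxt⟩
  · exact (not_le.1 h).le.trans hr.1.2.1

lemma exists_firstIn {K : Set ℝ} (hK : IsClosed K) {b t : ℝ} (hb : b ∈ K) (hbt : t ≤ b) :
    ∃ r ∈ K, r ≤ b ∧ t ≤ r ∧ ∀ x ∈ K, t ≤ x → r ≤ x := by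
  have hc : IsCompact (K ∩ Icc t b) := isCompact_Icc.inter_left hK
  obtain ⟨r, hr⟩ := hc.exists_isLeast ⟨b, hb, hbt, le_rfl⟩
  refine ⟨r, hr.1.1, hr.1.2.2, hr.1.2.1, fun x hx hxt => ?_⟩
  by_cases h : x ≤ b
  · exact hr.2 ⟨hx, hxt, h⟩
  · exact hr.1.2.2.trans (not_le.1 h).le

lemma sel_Icc (f : ℝ → X) : Sel f (Icc 0 1) := by
  refine ⟨isClosed_Icc, subset_rfl, by simp, by simp, fun a ha b hb hab hd => ?_⟩
  obtain ⟨c, h1, h2⟩ := exists_between hab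
  exact absurd (⟨ha.1.trans h1.le, h2.le.trans hb.2⟩ : c ∈ Icc (0:ℝ) 1)
    (disjoint_left.1 hd ⟨h1, h2⟩)

lemma exists_minSel [T2Space X] {f : ℝ → X} (hf : Continuous f) :
    ∃ K, Sel f K ∧ ∀ s ∈ K, ∀ t ∈ K, s < t → f s = f t → Disjoint (Ioo s t) K := by
  have hz := zorn_superset_nonempty {K | Sel f K} ?_ (Icc 0 1) (sel_Icc f)
  · obtain ⟨K, -, hK, hmin⟩ := hz
    refine ⟨K, hK, fun s hs t ht hst e => ?_⟩
    obtain ⟨k1, k2, k3, k4, k5⟩ := hK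
    have hS : Sel f (K \ Ioo s t) := by
      have i0 := k2 hs
      have i1 := k2 ht
      refine ⟨k1.sdiff isOpen_Ioo, sdiff_subset.trans k2, ⟨k3, fun h => ?_⟩, ⟨k4, fun h => ?_⟩, ?_⟩
      · exact absurd h.1 (not_lt.2 i0.1)
      · exact absurd h.2 (not_lt.2 i1.2)
      · intro a ha b hb hab hd
        by_cases hk : Disjoint (Ioo a b) K
        · exact k5 a ha.1 b hb.1 hab hk
        · obtain ⟨k, hk1, hk2⟩ := not_disjoint_iff.1 hk
          have hk3 : k ∈ Ioo s t := by
            by_contra h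
            exact disjoint_left.1 hd hk1 ⟨hk2, h⟩
          have hs' : s ∉ Ioo a b := fun h => disjoint_left.1 hd h ⟨hs, fun h => lt_irrefl _ h.1⟩
          have ht' : t ∉ Ioo a b := fun h => disjoint_left.1 hd h ⟨ht, fun h => lt_irrefl _ h.2⟩
          have ha' := ha.2
          have hb' := hb.2
          simp only [mem_Ioo, not_and, not_lt] at hs' ht' ha' hb' hk1 hk3
          have e1 : a = s := by
            refine le_antisymm ?_ ?_
            · by_contra h; have := ha' (not_le.1 h); linarith
            · by_contra h; have := hs' (not_le.1 h); linarith
          have e2 : b = t := by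
            refine le_antisymm ?_ ?_
            · by_contra h; have := ht' (by linarith); linarith
            · by_contra h; have := hb' (by linarith); linarith
          rw [e1, e2, e]
    have := hmin hS sdiff_subset
    exact disjoint_right.2 fun x hx hx' => (this hx).2 hx'
  · intro c hc hch hne
    refine ⟨⋂₀ c, ⟨isClosed_sInter fun K hK => (hc hK).1, ?_, ?_, ?_, ?_⟩,
      fun s hs => sInter_subset_of_mem hs⟩
    · obtain ⟨K, hK⟩ := hne
      exact (sInter_subset_of_mem hK).trans (hc hK).2.1
    · exact fun K hK => (hc hK).2.2.1
    · exact fun K hK => (hc hK).2.2.2.1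
    · intro a ha b hb hab hd
      by_contra hn
      obtain ⟨U, V, hU, hV, hfU, hfV, hUV⟩ := t2_separation hn
      obtain ⟨e1, h1, h1'⟩ := Metric.isOpen_iff.1 (hU.preimage hf) a hfU
      obtain ⟨e2, h2, h2'⟩ := Metric.isOpen_iff.1 (hV.preimage hf) b hfV
      set e := min (min e1 e2) (b - a) / 3 with he
      have m1 : min (min e1 e2) (b - a) ≤ e1 := (min_le_left _ _).trans (min_le_left _ _)
      have m2 : min (min e1 e2) (b - a) ≤ e2 := (min_le_left _ _).trans (min_le_right _ _)
      have m3 : min (min e1 e2) (b - a) ≤ b - a := min_le_right _ _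
      have m0 : 0 < min (min e1 e2) (b - a) := lt_min (lt_min h1 h2) (by linarith)
      obtain ⟨K, hK, hKd⟩ : ∃ K ∈ c, Disjoint (Icc (a + e) (b - e)) K := by
        by_contra hno
        push Not at hno
        have : (⋂₀ ((fun K => Icc (a + e) (b - e) ∩ K) '' c)).Nonempty := by
          refine IsCompact.nonempty_sInter_of_directed_nonempty_isCompact_isClosed
            (hS := (hne.image _).to_subtype) ?_ ?_ ?_ ?_
          · rintro _ ⟨A, hA, rfl⟩ _ ⟨B, hB, rfl⟩
            rcases hch.total hA hB with h | h
            · exact ⟨_, ⟨A, hA, rfl⟩, subset_rfl, inter_subset_inter_right _ h⟩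
            · exact ⟨_, ⟨B, hB, rfl⟩, inter_subset_inter_right _ h, subset_rfl⟩
          · rintro _ ⟨A, hA, rfl⟩
            exact not_disjoint_iff_nonempty_inter.1 (hno A hA)
          · rintro _ ⟨A, hA, rfl⟩
            exact isCompact_Icc.inter_right (hc hA).1
          · rintro _ ⟨A, hA, rfl⟩
            exact isClosed_Icc.inter (hc hA).1
        obtain ⟨x, hx⟩ := this
        obtain ⟨K0, hK0⟩ := hne
        have hx1 := (hx _ ⟨K0, hK0, rfl⟩).1
        refine disjoint_left.1 hd (show x ∈ Ioo a b from ⟨by linarith [hx1.1], by linarith [hx1.2]⟩) ?_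
        exact fun K hK => (hx _ ⟨K, hK, rfl⟩).2
      obtain ⟨r, r1, r2, r3, r4⟩ := exists_lastIn (hc hK).1 (ha K hK) (show a ≤ a + e by linarith)
      obtain ⟨q, q1, q2, q3, q4⟩ := exists_firstIn (hc hK).1 (hb K hK) (show b - e ≤ b by linarith)
      have : f r = f q := by
        refine (hc hK).2.2.2.2 r r1 q q1 (by linarith) (disjoint_right.2 fun x hx hx' => ?_)
        by_cases g1 : x ≤ a + e
        · exact absurd (r4 x hx g1) (not_le.2 hx'.1)
        by_cases g2 : b - e ≤ x
        · exact absurd (q4 x hx g2) (not_le.2 hx'.2)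
        exact disjoint_left.1 hKd ⟨(not_le.1 g1).le, (not_le.1 g2).le⟩ hx
      have u1 : f r ∈ U := h1' (by rw [Metric.mem_ball, Real.dist_eq, abs_lt]; constructor <;> linarith)
      have u2 : f q ∈ V := h2' (by rw [Metric.mem_ball, Real.dist_eq, abs_lt]; constructor <;> linarith)
      rw [this] at u1
      exact disjoint_left.1 hUV u1 u2

/-- A path contains a path with order-connected fibres. -/
lemma exists_monotone_path [T2Space X] {f : ℝ → X} (hf : Continuous f) :
    ∃ g : ℝ → X, ContinuousOn g (Icc 0 1) ∧ g 0 = f 0 ∧ g 1 = f 1 ∧ g '' Icc 0 1 ⊆ f '' Icc 0 1 ∧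
      ∀ s ∈ Icc (0:ℝ) 1, ∀ t ∈ Icc (0:ℝ) 1, s ≤ t → g s = g t → ∀ x ∈ Icc s t, g x = g s := by
  obtain ⟨K, ⟨k1, k2, k3, k4, k5⟩, hmin⟩ := exists_minSel hf
  have hr : ∀ t : ℝ, ∃ r, t ∈ Icc (0:ℝ) 1 → r ∈ K ∧ r ≤ t ∧ ∀ x ∈ K, x ≤ t → x ≤ r := by
    intro t
    by_cases ht : t ∈ Icc (0:ℝ) 1
    · obtain ⟨r, h1, h2, h3, h4⟩ := exists_lastIn k1 k3 ht.1
      exact ⟨r, fun _ => ⟨h1, h3, h4⟩⟩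
    · exact ⟨0, fun h => absurd h ht⟩
  choose r hr using hr
  have hrK : ∀ t ∈ K, r t = t := fun t ht =>
    le_antisymm (hr t (k2 ht)).2.1 ((hr t (k2 ht)).2.2 t ht le_rfl)
  have hmono : ∀ s ∈ Icc (0:ℝ) 1, ∀ t ∈ Icc (0:ℝ) 1, s ≤ t → r s ≤ r t := fun s hs t ht hst =>
    (hr t ht).2.2 _ (hr s hs).1 ((hr s hs).2.1.trans hst)
  refine ⟨fun t => f (r t), ?_, by simp [hrK 0 k3], by simp [hrK 1 k4], ?_, ?_⟩
  · intro t ht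
    by_cases htK : t ∈ K
    · -- at a point of `K`
      rw [ContinuousWithinAt, hrK t htK]
      intro U hU
      obtain ⟨e, he, hb⟩ := Metric.mem_nhds_iff.1 (hf.continuousAt.preimage_mem_nhds hU)
      refine mem_map.2 (mem_nhdsWithin_iff_exists_mem_nhds_inter.2 ⟨Metric.ball t e, Metric.ball_mem_nhds _ he, ?_⟩)
      rintro s ⟨hs, hs'⟩
      rw [Metric.mem_ball, Real.dist_eq, abs_lt] at hs
      have hb' : ∀ x, |x - t| < e → f x ∈ U := fun x hx => hb (by rwa [Metric.mem_ball, Real.dist_eq])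
      change f (r s) ∈ U
      by_cases hts : t ≤ s
      · refine hb' _ (abs_lt.2 ⟨?_, ?_⟩)
        · have := (hr s hs').2.2 t htK hts; linarith
        · have := (hr s hs').2.1; linarith
      · obtain ⟨q, q1, q2, q3, q4⟩ := exists_firstIn k1 htK (not_le.1 hts).le
        have : f (r s) = f q := by
          rcases eq_or_lt_of_le ((hr s hs').2.1.trans q3) with h | h
          · rw [h]
          · refine k5 _ (hr s hs').1 _ q1 h (disjoint_right.2 fun x hx hx' => ?_)
            rcases le_total x s with h' | h'
            · exact absurd ((hr s hs').2.2 x hx h') (not_le.2 hx'.1)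
            · exact absurd (q4 x hx h') (not_le.2 hx'.2)
        rw [this]
        exact hb' _ (abs_lt.2 ⟨by linarith, by linarith⟩)
    · -- in a gap
      have hev : ∀ᶠ s in 𝓝[Icc 0 1] t, f (r s) = f (r t) := by
        obtain ⟨e, he, hb⟩ := Metric.isOpen_iff.1 k1.isOpen_compl t htK
        have hb' : ∀ x, |x - t| < e → x ∉ K := fun x hx => hb (by rwa [Metric.mem_ball, Real.dist_eq])
        refine mem_nhdsWithin_iff_exists_mem_nhds_inter.2 ⟨Metric.ball t e, Metric.ball_mem_nhds _ he, ?_⟩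
        rintro s ⟨hs, hs'⟩
        rw [Metric.mem_ball, Real.dist_eq, abs_lt] at hs
        change f (r s) = f (r t)
        congr 1
        have a1 := hr s hs'
        have a2 := hr t ht
        rcases le_total s t with h | h
        · refine le_antisymm (hmono _ hs' _ ht h) (a1.2.2 _ a2.1 ?_)
          by_contra hn
          exact hb' (r t) (abs_lt.2 ⟨by linarith, by linarith [a2.2.1]⟩) a2.1
        · refine le_antisymm (a2.2.2 _ a1.1 ?_) (hmono _ ht _ hs' h)
          by_contra hn
          exact hb' (r s) (abs_lt.2 ⟨by linarith, by linarith [a1.2.1]⟩) a1.1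
      exact (continuousWithinAt_const (b := f (r t))).congr_of_eventuallyEq hev rfl
  · rintro _ ⟨t, ht, rfl⟩
    exact ⟨r t, k2 (hr t ht).1, rfl⟩
  · intro s hs t ht hst e x hx
    have hx' : x ∈ Icc (0:ℝ) 1 := ⟨hs.1.trans hx.1, hx.2.trans ht.2⟩
    change f (r s) = f (r t) at e
    change f (r x) = f (r s)
    have a1 := hmono _ hs _ hx' hx.1
    have a2 := hmono _ hx' _ ht hx.2
    rcases eq_or_lt_of_le a1 with h | h
    · rw [h]
    rcases eq_or_lt_of_le a2 with h' | h'
    · rw [h', e]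
    exact absurd (hr x hx').1
      (disjoint_left.1 (hmin _ (hr s hs).1 _ (hr t ht).1 (h.trans h') e) ⟨h, h'⟩)

end Arc

section Arc2
variable {X : Type*} [MetricSpace X]

lemma exists_weight {g : ℝ → X} (hg : Continuous g)
    (hfib : ∀ s ∈ Icc (0:ℝ) 1, ∀ t ∈ Icc (0:ℝ) 1, s ≤ t → g s = g t → ∀ x ∈ Icc s t, g x = g s) :
    ∃ C : ℝ → ℝ, Continuous C ∧ ∀ s ∈ Icc (0:ℝ) 1, ∀ t ∈ Icc (0:ℝ) 1, s ≤ t →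
      (g s = g t → C s = C t) ∧ (g s ≠ g t → C s < C t) := by
  set m : X → ℝ → ℝ := fun x t => sInf ((fun r => dist x (g (r * t))) '' Icc (0:ℝ) 1) with hm
  have mc : ∀ x, Continuous (m x) := by
    intro x
    refine IsCompact.continuous_sInf (f := fun t r => dist x (g (r * t))) isCompact_Icc ?_
    change Continuous fun q : ℝ × ℝ => dist x (g (q.2 * q.1))
    fun_prop
  have mle : ∀ x, ∀ t ∈ Icc (0:ℝ) 1, ∀ r ∈ Icc 0 t, m x t ≤ dist x (g r) := by
    intro x t ht r hr
    refine csInf_le ⟨0, by rintro _ ⟨_, _, rfl⟩; exact dist_nonneg⟩ ?_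
    rcases eq_or_lt_of_le ht.1 with h | h
    · refine ⟨0, by simp, ?_⟩
      have : r = 0 := le_antisymm (h ▸ hr.2) hr.1
      simp [this]
    · refine ⟨r / t, ⟨div_nonneg hr.1 h.le, (div_le_one h).2 hr.2⟩, ?_⟩
      simp only
      rw [div_mul_cancel₀ _ h.ne']
  have mat : ∀ x, ∀ t ∈ Icc (0:ℝ) 1, ∃ r ∈ Icc 0 t, m x t = dist x (g r) := by
    intro x t ht
    have hc : IsCompact ((fun r => dist x (g (r * t))) '' Icc (0:ℝ) 1) :=
      isCompact_Icc.image (by fun_prop)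
    obtain ⟨r, hr, e⟩ := hc.sInf_mem ((nonempty_Icc.2 zero_le_one).image _)
    exact ⟨r * t, ⟨mul_nonneg hr.1 ht.1, by nlinarith [hr.2, ht.1]⟩, e.symm⟩
  have mnn : ∀ x, ∀ t ∈ Icc (0:ℝ) 1, 0 ≤ m x t := by
    intro x t ht
    obtain ⟨r, -, e⟩ := mat x t ht
    rw [e]; exact dist_nonneg
  have manti : ∀ x, ∀ s ∈ Icc (0:ℝ) 1, ∀ t ∈ Icc (0:ℝ) 1, s ≤ t → m x t ≤ m x s := by
    intro x s hs t ht hst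
    obtain ⟨r, hr, e⟩ := mat x s hs
    rw [e]
    exact mle x t ht r ⟨hr.1, hr.2.trans hst⟩
  set xs : ℕ → X := fun n => g (TopologicalSpace.denseSeq ℝ n) with hxs
  set F : ℕ → ℝ → ℝ := fun n t => (1/2)^n * max 0 (min 1 (m (xs n) t)) with hF
  have hsum : Summable fun n : ℕ => ((1:ℝ)/2)^n := summable_geometric_two
  have hFb : ∀ n t, ‖F n t‖ ≤ (1/2)^n := by
    intro n t
    have h0 : 0 ≤ max 0 (min 1 (m (xs n) t)) := le_max_left _ _
    have h1 : max 0 (min 1 (m (xs n) t)) ≤ 1 := max_le zero_le_one (min_le_left _ _)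
    have hp : (0:ℝ) ≤ (1/2)^n := by positivity
    rw [Real.norm_eq_abs, abs_of_nonneg (mul_nonneg hp h0)]
    nlinarith
  have hFs : ∀ t, Summable fun n => F n t := fun t =>
    Summable.of_norm_bounded hsum (fun n => hFb n t)
  have hFm : ∀ n, ∀ s ∈ Icc (0:ℝ) 1, ∀ t ∈ Icc (0:ℝ) 1, s ≤ t → F n t ≤ F n s := by
    intro n s hs t ht hst
    have := manti (xs n) s hs t ht hst
    simp only [hF]
    gcongr
  refine ⟨fun t => - ∑' n, F n t, ?_, ?_⟩
  · refine Continuous.neg (continuous_tsum (fun n => ?_) hsum hFb)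
    have := mc (xs n)
    fun_prop
  · intro s hs t ht hst
    refine ⟨fun e => ?_, fun hne => ?_⟩
    · have : ∀ n, F n s = F n t := by
        intro n
        have : m (xs n) s = m (xs n) t := by
          refine le_antisymm ?_ (manti _ s hs t ht hst)
          obtain ⟨r, hr, e'⟩ := mat (xs n) t ht
          rw [e']
          by_cases h : r ≤ s
          · exact mle _ s hs r ⟨hr.1, h⟩
          · rw [hfib s hs t ht hst e r ⟨(not_le.1 h).le, hr.2⟩]
            exact mle _ s hs s ⟨hs.1, le_rfl⟩
        simp only [hF, this]
      simp only [this]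
    · have hlt : ∃ n, F n t < F n s := by
        -- the point `g t` is far from the initial part
        have hcl : IsClosed (g '' Icc 0 s) := (isCompact_Icc.image hg).isClosed
        have hnot : g t ∉ g '' Icc 0 s := by
          rintro ⟨r, hr, e⟩
          have hr' : r ∈ Icc (0:ℝ) 1 := ⟨hr.1, hr.2.trans hs.2⟩
          have h1 := hfib r hr' t ht (hr.2.trans hst) e s ⟨hr.2, hst⟩
          exact hne (h1.trans e)
        obtain ⟨δ, hδ, hball⟩ := Metric.isOpen_iff.1 hcl.isOpen_compl _ hnot
        set η := min δ 1 / 3 with hη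
        have e1 : min δ 1 ≤ δ := min_le_left _ _
        have e2 : min δ 1 ≤ 1 := min_le_right _ _
        have e0 : 0 < min δ 1 := lt_min hδ one_pos
        obtain ⟨n, hn⟩ : ∃ n, dist (xs n) (g t) < η := by
          have ho : IsOpen (g ⁻¹' Metric.ball (g t) η) := Metric.isOpen_ball.preimage hg
          obtain ⟨n, h1⟩ := (TopologicalSpace.denseRange_denseSeq ℝ).exists_mem_open ho
            ⟨t, Metric.mem_ball_self (by positivity)⟩
          exact ⟨n, h1⟩
        refine ⟨n, ?_⟩
        have a1 : m (xs n) t < η := (mle _ t ht t ⟨ht.1, le_rfl⟩).trans_lt hn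
        have a2 : 2 * η ≤ m (xs n) s := by
          obtain ⟨r, hr, e'⟩ := mat (xs n) s hs
          rw [e']
          by_contra hcon
          refine hball (a := g r) ?_ ⟨r, hr, rfl⟩
          rw [Metric.mem_ball]
          have := dist_triangle_left (g r) (g t) (xs n)
          linarith
        have : max 0 (min 1 (m (xs n) t)) < max 0 (min 1 (m (xs n) s)) := by
          refine lt_of_le_of_lt (b := η) (max_le (by positivity) ((min_le_right _ _).trans a1.le)) ?_
          refine lt_max_of_lt_right (lt_min ?_ ?_) <;> linarith
        simp only [hF]
        gcongr
      obtain ⟨n, hn⟩ := hlt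
      have := (hFs t).tsum_lt_tsum (i := n) (fun k => hFm k s hs t ht hst) hn (hFs s)
      exact neg_lt_neg this

/-- A path between distinct points contains an arc. -/
lemma exists_arc {f : ℝ → X} (hf : Continuous f) (h01 : f 0 ≠ f 1) :
    ∃ p : ℝ → X, Continuous p ∧ InjOn p (Icc 0 1) ∧ p 0 = f 0 ∧ p 1 = f 1 ∧
      p '' Icc 0 1 ⊆ f '' Icc 0 1 := by
  obtain ⟨g0, g1, g2, g3, g4, g5⟩ := exists_monotone_path hf
  set g : ℝ → X := fun t => g0 (projIcc 0 1 zero_le_one t) with hgdef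
  have hgg : ∀ t ∈ Icc (0:ℝ) 1, g t = g0 t := fun t ht => by
    simp only [hgdef]; rw [projIcc_of_mem _ ht]
  have i0 : (0:ℝ) ∈ Icc (0:ℝ) 1 := by simp
  have i1 : (1:ℝ) ∈ Icc (0:ℝ) 1 := by simp
  have hg : Continuous g := (continuousOn_iff_continuous_domRestrict.1 g1).comp continuous_projIcc
  have hfib : ∀ s ∈ Icc (0:ℝ) 1, ∀ t ∈ Icc (0:ℝ) 1, s ≤ t → g s = g t →
      ∀ x ∈ Icc s t, g x = g s := by
    intro s hs t ht hst e x hx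
    rw [hgg s hs, hgg t ht] at e
    rw [hgg s hs, hgg x ⟨hs.1.trans hx.1, hx.2.trans ht.2⟩]
    exact g5 s hs t ht hst e x hx
  obtain ⟨C, hC, hw⟩ := exists_weight hg hfib
  have hCi : ∀ s ∈ Icc (0:ℝ) 1, ∀ t ∈ Icc (0:ℝ) 1, C s = C t → g s = g t := by
    intro s hs t ht e
    by_contra hne
    rcases le_total s t with h | h
    · exact absurd e ((hw s hs t ht h).2 hne).ne
    · exact absurd e ((hw t ht s hs h).2 (Ne.symm hne)).ne'
  have hCm : ∀ s ∈ Icc (0:ℝ) 1, ∀ t ∈ Icc (0:ℝ) 1, s ≤ t → C s ≤ C t := by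
    intro s hs t ht h
    by_cases e : g s = g t
    · exact ((hw s hs t ht h).1 e).le
    · exact ((hw s hs t ht h).2 e).le
  have hC01 : C 0 < C 1 := (hw 0 i0 1 i1 zero_le_one).2 (by rw [hgg 0 i0, hgg 1 i1, g2, g3]; exact h01)
  have hd : 0 < C 1 - C 0 := by linarith
  -- the normalised weight
  let φ : Icc (0:ℝ) 1 → Icc (0:ℝ) 1 := fun t => ⟨(C t - C 0) / (C 1 - C 0),
    div_nonneg (by linarith [hCm 0 i0 t t.2 t.2.1]) hd.le,
    (div_le_one hd).2 (by linarith [hCm t t.2 1 i1 t.2.2])⟩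
  have hφ : Continuous φ := by
    refine Continuous.subtype_mk ?_ _
    fun_prop
  have hφs : Function.Surjective φ := by
    rintro ⟨y, hy⟩
    have : y * (C 1 - C 0) + C 0 ∈ Icc (C 0) (C 1) :=
      ⟨by nlinarith [hy.1], by nlinarith [hy.2]⟩
    obtain ⟨t, ht, e⟩ := intermediate_value_Icc zero_le_one hC.continuousOn this
    refine ⟨⟨t, ht⟩, Subtype.ext ?_⟩
    change (C t - C 0) / (C 1 - C 0) = y
    rw [e]; field_simp; ring
  have hφe : ∀ s t : Icc (0:ℝ) 1, φ s = φ t ↔ g s = g t := by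
    intro s t
    have h1 : φ s = φ t ↔ C s = C t := by
      rw [Subtype.ext_iff]
      change (C s - C 0) / (C 1 - C 0) = (C t - C 0) / (C 1 - C 0) ↔ _
      rw [div_left_inj' hd.ne']
      constructor <;> intro h <;> linarith
    rw [h1]
    refine ⟨hCi s s.2 t t.2, fun e => ?_⟩
    rcases le_total (s:ℝ) t with h | h
    · exact (hw s s.2 t t.2 h).1 e
    · exact ((hw t t.2 s s.2 h).1 e.symm).symm
  have hq : IsQuotientMap φ := hφ.isClosedMap.isQuotientMap hφ hφs
  choose ψ hψ using hφs
  have hp : Continuous fun y => g (ψ y) := by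
    rw [hq.continuous_iff]
    have : (fun y => g (ψ y)) ∘ φ = fun t : Icc (0:ℝ) 1 => g t := by
      ext t
      exact (hφe _ _).1 (hψ (φ t))
    rw [this]
    exact hg.comp continuous_subtype_val
  refine ⟨fun y => g (ψ (projIcc 0 1 zero_le_one y)), hp.comp continuous_projIcc, ?_, ?_, ?_, ?_⟩
  · intro x hx y hy e
    have := (hφe _ _).2 e
    rw [hψ, hψ, projIcc_of_mem _ hx, projIcc_of_mem _ hy] at this
    exact congrArg Subtype.val this
  · rw [← g2, ← hgg 0 i0]
    have : φ ⟨0, i0⟩ = projIcc 0 1 zero_le_one 0 := by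
      rw [projIcc_of_mem _ i0]; exact Subtype.ext (by simp [φ])
    exact (hφe _ ⟨0, i0⟩).1 (by rw [hψ, this])
  · rw [← g3, ← hgg 1 i1]
    have : φ ⟨1, i1⟩ = projIcc 0 1 zero_le_one 1 := by
      rw [projIcc_of_mem _ i1]; exact Subtype.ext (by simp [φ, hd.ne'])
    exact (hφe _ ⟨1, i1⟩).1 (by rw [hψ, this])
  · rintro _ ⟨y, -, rfl⟩
    refine g4 ⟨_, (ψ (projIcc 0 1 zero_le_one y)).2, ?_⟩
    exact (hgg _ (ψ _).2).symm

end Arc2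

/-! ### Accessibility -/

section Acc
variable {X : Type*} [TopologicalSpace X]

/-- Concatenation of the first `n + 1` paths. -/
def cat (p : ℕ → ℝ → X) : ℕ → ℝ → X
  | 0 => p 0
  | n + 1 => fun t => if t ≤ (n : ℝ) + 1 then cat p n t else p (n + 1) (t - (n + 1))

lemma cat_end (p : ℕ → ℝ → X) (n : ℕ) : cat p n (n + 1) = p n 1 := by
  cases n with
  | zero => simp [cat]
  | succ n =>
    have h : ¬ ((n:ℝ) + 1 + 1 ≤ n + 1) := by linarith
    simp [cat]

lemma cat_cont {p : ℕ → ℝ → X} (hp : ∀ n, Continuous (p n)) (h : ∀ n, p n 1 = p (n + 1) 0)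
    (n : ℕ) : Continuous (cat p n) := by
  induction n with
  | zero => exact hp 0
  | succ n ih =>
    refine Continuous.if_le ih ((hp (n+1)).comp (by fun_prop)) continuous_id continuous_const ?_
    intro t ht
    rw [ht, cat_end, h]; simp

lemma cat_stable (p : ℕ → ℝ → X) {n m : ℕ} (hnm : n ≤ m) {t : ℝ} (ht : t ≤ n + 1) :
    cat p m t = cat p n t := by
  induction m, hnm using Nat.le_induction with
  | base => rfl
  | succ m hm ih =>
    have : (n:ℝ) ≤ m := by exact_mod_cast hm
    simp only [cat]
    rw [if_pos (by linarith), ih]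

lemma cat_val (p : ℕ → ℝ → X) (n : ℕ) {t : ℝ} (ht : 0 ≤ t) :
    ∃ j ≤ n, (j:ℝ) ≤ t ∧ (t ≤ j + 1 ∨ j = n) ∧ cat p n t = p j (t - j) := by
  induction n with
  | zero => exact ⟨0, le_rfl, by simpa using ht, Or.inr rfl, by simp [cat]⟩
  | succ n ih =>
    by_cases h : t ≤ n + 1
    · obtain ⟨j, h1, h2, h3, h4⟩ := ih
      refine ⟨j, by omega, h2, Or.inl ?_, by simp only [cat]; rw [if_pos h, h4]⟩
      rcases h3 with h3 | rfl
      exacts [h3, h]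
    · refine ⟨n + 1, le_rfl, ?_, Or.inr rfl, by simp only [cat]; rw [if_neg h]; push_cast; rfl⟩
      push_cast; linarith

lemma exists_cat {p : ℕ → ℝ → X} (hp : ∀ n, Continuous (p n)) (h : ∀ n, p n 1 = p (n + 1) 0) :
    ∃ F : ℝ → X, Continuous F ∧ F 0 = p 0 0 ∧
      ∀ t : ℝ, 0 ≤ t → ∃ j : ℕ, t - 1 ≤ j ∧ ∃ s ∈ Icc (0:ℝ) 1, F t = p j s := by
  refine ⟨fun t => cat p ⌈t⌉₊ t, ?_, by simp [cat], ?_⟩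
  · rw [continuous_iff_continuousAt]
    intro t
    obtain ⟨n, hn⟩ := exists_nat_gt t
    refine (cat_cont hp h n).continuousAt.congr ?_
    filter_upwards [Iio_mem_nhds hn] with s hs
    refine cat_stable p (Nat.ceil_le.2 (le_of_lt hs)) ?_
    linarith [Nat.le_ceil s]
  · intro t ht
    obtain ⟨j, h1, h2, h3, h4⟩ := cat_val p ⌈t⌉₊ ht
    have h5 : t ≤ j + 1 := by
      rcases h3 with h3 | h3
      · exact h3
      · have := Nat.le_ceil t; rw [h3]; linarith
    exact ⟨j, by linarith, t - j, ⟨by linarith, by linarith⟩, h4⟩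

lemma conn_path [LocallyPathConnectedSpace X] {W : Set X} (hW : IsOpen W) {x y : X}
    (h : Conn W x y) : ∃ p : ℝ → X, Continuous p ∧ p 0 = x ∧ p 1 = y ∧ ∀ t, p t ∈ W := by
  have hx := h.left
  have h1 : y ∈ connectedComponentIn W x := (conn_iff_mem hx).1 h
  have h2 : IsConnected (connectedComponentIn W x) := isConnected_connectedComponentIn_iff.2 hx
  have h3 : IsPathConnected (connectedComponentIn W x) :=
    hW.connectedComponentIn.isConnected_iff_isPathConnected.1 h2
  obtain ⟨p, hp⟩ := h3.joinedIn x (mem_connectedComponentIn hx) y h1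
  refine ⟨p.extend, p.continuous_extend, p.extend_zero, p.extend_one, fun t => ?_⟩
  exact connectedComponentIn_subset _ _ (hp (projIcc 0 1 zero_le_one t))

end Acc

section OArc
variable {ι : Type} {L : ι → PL}

lemma close_up {F : ℝ → Sph} (hF : Continuous F) {u : Sph} (hu : Tendsto F atTop (𝓝 u)) :
    Continuous fun s : ℝ => if s < 1 then F (s / (1 - s)) else u := by
  rw [continuous_iff_continuousAt]
  intro s
  rcases lt_trichotomy s 1 with h | rfl | h
  · have : ContinuousAt (fun s => F (s / (1 - s))) s := by
      refine hF.continuousAt.comp ?_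
      exact ContinuousAt.div continuousAt_id (by fun_prop) (by linarith)
    refine this.congr ?_
    filter_upwards [Iio_mem_nhds h] with r hr
    rw [if_pos (mem_Iio.1 hr)]
  · rw [continuousAt_iff_continuous_left'_right']
    constructor
    · rw [ContinuousWithinAt, if_neg (lt_irrefl _)]
      refine (hu.comp tendsto_one_sub).congr' ?_
      filter_upwards [self_mem_nhdsWithin] with r hr
      rw [if_pos (mem_Iio.1 hr)]; rfl
    · rw [ContinuousWithinAt, if_neg (lt_irrefl _)]
      refine tendsto_const_nhds.congr' ?_
      filter_upwards [self_mem_nhdsWithin] with r hr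
      rw [if_neg (not_lt.2 (le_of_lt (mem_Ioi.1 hr)))]
  · refine (continuousAt_const (y := u)).congr ?_
    filter_upwards [Ioi_mem_nhds h] with r hr
    rw [if_neg (not_lt.2 (le_of_lt (mem_Ioi.1 hr)))]

lemma IsArr.access (hL : IsArr L) {I : Finset ι} (hI : I.Nonempty) {s : ι → Bool} {u x : Sph}
    (hu : u ∈ closure (cell L I s)) (hx : x ∈ cell L I s) :
    ∃ f : ℝ → Sph, Continuous f ∧ f 0 = x ∧ f 1 = u ∧ ∀ t ∈ Ico (0:ℝ) 1, f t ∈ cell L I s := by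
  obtain ⟨U, hU⟩ := (𝓝 u).exists_antitone_basis
  have hV := fun n => hL.LC I s u (interior (U n)) (interior_mem_nhds.2 (hU.mem n))
  choose V hV1 hV2 hV3 using hV
  have hxs : ∀ n : ℕ, ∃ z, z ∈ cell L I s ∧ ∀ k ≤ n, z ∈ V k := by
    intro n
    have : (⋂ k ∈ Finset.range (n+1), V k) ∈ 𝓝 u :=
      (biInter_finset_mem _).2 fun k _ => hV1 k
    obtain ⟨z, h1, h2⟩ := mem_closure_iff_nhds.1 hu _ this
    refine ⟨z, h2, fun k hk => ?_⟩
    exact mem_iInter₂.1 h1 k (Finset.mem_range.2 (by omega))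
  choose xs hxs1 hxs2 using hxs
  obtain ⟨p0, q1, q2, q3, q4⟩ := conn_path (cell_open I s)
    (Conn.of_pre (hL.cell_pre I hI s) hx (hxs1 0))
  have hpn := fun n => conn_path (isOpen_interior.inter (cell_open I s))
    (hV3 n (xs n) ⟨hxs2 n n le_rfl, hxs1 n⟩ (xs (n+1)) ⟨hxs2 (n+1) n (by omega), hxs1 (n+1)⟩)
  choose p k1 k2 k3 k4 using hpn
  obtain ⟨F, hF, hF0, hF1⟩ := exists_cat (p := fun n => Nat.casesOn n p0 p)
    (by rintro (_ | n); exacts [q1, k1 n])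
    (by rintro (_ | n)
        · change p0 1 = p 0 0; rw [q3, k2]
        · change p n 1 = p (n+1) 0; rw [k2, k3])
  have hFc : ∀ t ≥ 0, F t ∈ cell L I s := by
    intro t ht
    obtain ⟨j, -, r, -, e⟩ := hF1 t ht
    rw [e]
    cases j with
    | zero => exact q4 r
    | succ j => exact (k4 j r).2
  have hFu : Tendsto F atTop (𝓝 u) := by
    rw [hU.1.tendsto_right_iff]
    intro n _
    filter_upwards [eventually_ge_atTop ((n:ℝ) + 2)] with t ht
    obtain ⟨j, hj, r, -, e⟩ := hF1 t (by have : (0:ℝ) ≤ n := n.cast_nonneg; linarith)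
    have hj' : n + 1 ≤ j := by
      have : (n:ℝ) + 1 ≤ j := by linarith
      exact_mod_cast this
    rw [e]
    cases j with
    | zero => omega
    | succ j => exact hU.2 (by omega : n ≤ j) (interior_subset (k4 j r).1)
  refine ⟨_, close_up hF hFu, ?_, ?_, ?_⟩
  · simp only [if_pos zero_lt_one, zero_div, hF0]; exact q2
  · simp
  · intro t ht
    simp only [if_pos ht.2]
    exact hFc _ (div_nonneg ht.1 (by linarith [ht.2]))

/-- `O` is an open arc with endpoints `u`, `v`. -/
def OArc (u v : Sph) (O : Set Sph) : Prop :=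
  ∃ p : ℝ → Sph, Continuous p ∧ InjOn p (Icc 0 1) ∧ p 0 = u ∧ p 1 = v ∧ O = p '' Ioo 0 1

lemma OArc.symm {u v : Sph} {O : Set Sph} (h : OArc u v O) : OArc v u O := by
  obtain ⟨p, h1, h2, h3, h4, h5⟩ := h
  refine ⟨fun t => p (1 - t), h1.comp (by fun_prop), ?_, by simpa, by simpa, ?_⟩
  · intro x hx y hy e
    have := h2 (x₁ := 1 - x) (x₂ := 1 - y) ⟨by linarith [hx.2], by linarith [hx.1]⟩
      ⟨by linarith [hy.2], by linarith [hy.1]⟩ e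
    linarith
  · rw [h5]
    ext z
    constructor
    · rintro ⟨t, ht, rfl⟩
      exact ⟨1 - t, ⟨by linarith [ht.2], by linarith [ht.1]⟩, by simp⟩
    · rintro ⟨t, ht, rfl⟩
      exact ⟨1 - t, ⟨by linarith [ht.2], by linarith [ht.1]⟩, rfl⟩

lemma OArc.left_cl {u v : Sph} {O : Set Sph} (h : OArc u v O) : u ∈ closure O := by
  obtain ⟨p, h1, h2, rfl, h4, rfl⟩ := h
  refine image_closure_subset_closure_image h1 ⟨0, ?_, rfl⟩
  rw [closure_Ioo zero_ne_one]; simp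

lemma OArc.right_cl {u v : Sph} {O : Set Sph} (h : OArc u v O) : v ∈ closure O := h.symm.left_cl

lemma OArc.left_not {u v : Sph} {O : Set Sph} (h : OArc u v O) : u ∉ O := by
  obtain ⟨p, h1, h2, rfl, h4, rfl⟩ := h
  rintro ⟨t, ht, e⟩
  exact ht.1.ne' (h2 ⟨ht.1.le, ht.2.le⟩ (by simp) e)

lemma OArc.right_not {u v : Sph} {O : Set Sph} (h : OArc u v O) : v ∉ O := h.symm.left_not

lemma OArc.pre {u v : Sph} {O : Set Sph} (h : OArc u v O) : IsPreconnected O := by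
  obtain ⟨p, h1, h2, rfl, h4, rfl⟩ := h
  exact isPreconnected_Ioo.image _ h1.continuousOn

lemma OArc.glue {u v w : Sph} {O₁ O₂ : Set Sph} (h₁ : OArc u v O₁) (h₂ : OArc v w O₂)
    (hd : Disjoint O₁ O₂) (hu : u ∉ O₂) (hw : w ∉ O₁) (huw : u ≠ w) :
    OArc u w (O₁ ∪ {v} ∪ O₂) := by
  have hv1 := h₁.right_not
  have hv2 := h₂.left_not
  obtain ⟨p, p1, p2, p3, p4, p5⟩ := h₁
  obtain ⟨q, q1, q2, q3, q4, q5⟩ := h₂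
  have key : ∀ s ∈ Icc (0:ℝ) 1, ∀ t ∈ Ioc (0:ℝ) 1, p s ≠ q t := by
    intro s hs t ht e
    rcases eq_or_lt_of_le hs.2 with h | h
    · rw [h, p4, ← q3] at e
      exact ht.1.ne (q2 (by simp) ⟨ht.1.le, ht.2⟩ e)
    rcases eq_or_lt_of_le hs.1 with h' | h'
    · rw [← h', p3] at e
      rcases eq_or_lt_of_le ht.2 with g | g
      · rw [g, q4] at e; exact huw e
      · exact hu (by rw [q5, e]; exact ⟨t, ⟨ht.1, g⟩, rfl⟩)
    · have : p s ∈ O₁ := by rw [p5]; exact ⟨s, ⟨h', h⟩, rfl⟩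
      rcases eq_or_lt_of_le ht.2 with g | g
      · rw [e, g, q4] at this; exact hw this
      · refine disjoint_left.1 hd this ?_
        rw [q5, e]; exact ⟨t, ⟨ht.1, g⟩, rfl⟩
  set r : ℝ → Sph := fun t => if t ≤ 1/2 then p (2 * t) else q (2 * t - 1) with hr
  have r1 : ∀ t ≤ (1:ℝ)/2, r t = p (2 * t) := fun t ht => if_pos ht
  have r2 : ∀ t > (1:ℝ)/2, r t = q (2 * t - 1) := fun t ht => if_neg (not_le.2 ht)
  refine ⟨r, ?_, ?_, ?_, ?_, ?_⟩
  · refine Continuous.if_le (p1.comp (by fun_prop)) (q1.comp (by fun_prop)) continuous_id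
      continuous_const ?_
    rintro t rfl
    norm_num [p4, q3]
  · intro s hs t ht e
    rcases le_or_gt s (1/2) with h | h <;> rcases le_or_gt t (1/2) with h' | h'
    · rw [r1 s h, r1 t h'] at e
      have := p2 (x₁ := 2 * s) (x₂ := 2 * t) ⟨by linarith [hs.1], by linarith⟩ ⟨by linarith [ht.1], by linarith⟩ e
      linarith
    · rw [r1 s h, r2 t h'] at e
      exact absurd e (key _ ⟨by linarith [hs.1], by linarith⟩ _ ⟨by linarith, by linarith [ht.2]⟩)
    · rw [r2 s h, r1 t h'] at e
      exact absurd e.symm (key _ ⟨by linarith [ht.1], by linarith⟩ _ ⟨by linarith, by linarith [hs.2]⟩)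
    · rw [r2 s h, r2 t h'] at e
      have := q2 (x₁ := 2 * s - 1) (x₂ := 2 * t - 1) ⟨by linarith, by linarith [hs.2]⟩ ⟨by linarith, by linarith [ht.2]⟩ e
      linarith
  · rw [r1 0 (by norm_num)]; simpa
  · rw [r2 1 (by norm_num)]; norm_num [q4]
  · rw [p5, q5]
    ext z
    constructor
    · rintro ((⟨t, ht, rfl⟩ | rfl) | ⟨t, ht, rfl⟩)
      · refine ⟨t / 2, ⟨by linarith [ht.1], by linarith [ht.2]⟩, ?_⟩
        rw [r1 _ (by linarith [ht.2])]; congr 1; ring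
      · refine ⟨1 / 2, ⟨by norm_num, by norm_num⟩, ?_⟩
        rw [r1 _ le_rfl]; norm_num [p4]
      · refine ⟨(t + 1) / 2, ⟨by linarith [ht.1], by linarith [ht.2]⟩, ?_⟩
        rw [r2 _ (by linarith [ht.1])]; congr 1; ring
    · rintro ⟨t, ht, rfl⟩
      rcases lt_trichotomy t (1/2) with h | rfl | h
      · rw [r1 t h.le]; exact Or.inl (Or.inl ⟨2 * t, ⟨by linarith [ht.1], by linarith⟩, rfl⟩)
      · rw [r1 _ le_rfl]; left; right; norm_num [p4]
      · rw [r2 t h]; exact Or.inr ⟨2 * t - 1, ⟨by linarith, by linarith [ht.2]⟩, rfl⟩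

/-- Two distinct points in the closure of a cell are joined by an open arc inside the cell. -/
lemma IsArr.cell_arc (hL : IsArr L) {I : Finset ι} (hI : I.Nonempty) {s : ι → Bool} {u v : Sph}
    (hu : u ∈ closure (cell L I s)) (hv : v ∈ closure (cell L I s)) (huv : u ≠ v) :
    ∃ O, OArc u v O ∧ O ⊆ cell L I s := by
  letI : MetricSpace Sph := TopologicalSpace.metrizableSpaceMetric Sph
  obtain ⟨x, hx⟩ := closure_nonempty_iff.1 ⟨u, hu⟩
  obtain ⟨f, f1, f2, f3, f4⟩ := hL.access hI hu hx
  obtain ⟨g, g1, g2, g3, g4⟩ := hL.access hI hv hx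
  set r : ℝ → Sph := fun t => if t ≤ 1/2 then f (1 - 2 * t) else g (2 * t - 1) with hr
  have r1 : ∀ t ≤ (1:ℝ)/2, r t = f (1 - 2 * t) := fun t ht => if_pos ht
  have r2 : ∀ t > (1:ℝ)/2, r t = g (2 * t - 1) := fun t ht => if_neg (not_le.2 ht)
  have rc : Continuous r := by
    refine Continuous.if_le (f1.comp (by fun_prop)) (g1.comp (by fun_prop)) continuous_id
      continuous_const ?_
    rintro t rfl
    norm_num [f2, g2]
  have r0 : r 0 = u := by rw [r1 0 (by norm_num)]; simpa
  have r1' : r 1 = v := by rw [r2 1 (by norm_num)]; norm_num [g3]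
  obtain ⟨p, p1, p2, p3, p4, p5⟩ := exists_arc rc (by rw [r0, r1']; exact huv)
  refine ⟨p '' Ioo 0 1, ⟨p, p1, p2, p3.trans r0, p4.trans r1', rfl⟩, ?_⟩
  rintro _ ⟨t, ht, rfl⟩
  obtain ⟨y, hy, e⟩ := p5 ⟨t, ⟨ht.1.le, ht.2.le⟩, rfl⟩
  have hy0 : y ≠ 0 := by
    rintro rfl
    rw [← p3] at e
    exact ht.1.ne (p2 (by simp) ⟨ht.1.le, ht.2.le⟩ e)
  have hy1 : y ≠ 1 := by
    rintro rfl
    rw [← p4] at e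
    exact ht.2.ne' (p2 (by simp) ⟨ht.1.le, ht.2.le⟩ e)
  have hy0' := lt_of_le_of_ne hy.1 hy0.symm
  have hy1' := lt_of_le_of_ne hy.2 hy1
  rw [← e]
  rcases le_or_gt y (1/2) with h | h
  · rw [r1 y h]; exact f4 _ ⟨by linarith, by linarith⟩
  · rw [r2 y h]; exact g4 _ ⟨by linarith, by linarith⟩

end OArc
end Levi

namespace Levi
open Filter OnePoint

/-! ### Removing finitely many points -/

lemma ball_punct (c : ℂ) {r : ℝ} (hr : 0 < r) : IsPreconnected (Metric.ball c r \ {c}) := by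
  have h1 : IsPreconnected ({0}ᶜ : Set ℂ) :=
    (isConnected_compl_singleton_of_one_lt_rank (by rw [Complex.rank_real_complex]; norm_num) 0).isPreconnected
  have h2 := h1.image (OpenPartialHomeomorph.univBall c r)
    (OpenPartialHomeomorph.continuous_univBall c r).continuousOn
  convert h2 using 1
  set T := OpenPartialHomeomorph.univBall c r
  have hs : T.source = univ := OpenPartialHomeomorph.univBall_source c r
  have ht : T.target = Metric.ball c r := OpenPartialHomeomorph.univBall_target c hr
  have h0 : T 0 = c := OpenPartialHomeomorph.univBall_apply_zero c r
  ext z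
  constructor
  · rintro ⟨hz, hzc⟩
    rw [← ht] at hz
    refine ⟨T.symm z, fun h => hzc ?_, T.right_inv hz⟩
    have := T.right_inv hz
    rw [h, h0] at this
    exact this.symm
  · rintro ⟨w, hw, rfl⟩
    refine ⟨ht ▸ T.map_source (hs ▸ mem_univ w), fun h => hw ?_⟩
    exact T.injOn (hs ▸ mem_univ w) (hs ▸ mem_univ 0) (h.trans h0.symm)

lemma punct {W : Set Sph} (hW : IsOpen W) (hp : IsPreconnected W) (hi : ∞ ∉ W) (z : Sph) :
    IsPreconnected (W \ {z}) := by
  by_cases hz : z ∈ W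
  swap
  · rwa [sdiff_singleton_eq_self hz]
  obtain ⟨c, rfl⟩ : ∃ c : ℂ, z = c := exists_coe (K := Wᶜ) hi (by simpa using hz)
  have hpre : IsOpen ((↑) ⁻¹' W : Set ℂ) := hW.preimage continuous_coe
  obtain ⟨r, hr, hball⟩ := Metric.isOpen_iff.1 hpre c hz
  set N : Set Sph := (↑) '' Metric.ball c r with hN
  have hNo : IsOpen N := (isOpenEmbedding_coe.isOpen_iff_image_isOpen).1 Metric.isOpen_ball
  have hNW : N ⊆ W := by rintro _ ⟨w, hw, rfl⟩; exact hball hw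
  have hcN : (c : Sph) ∈ N := ⟨c, Metric.mem_ball_self hr, rfl⟩
  have hNp : IsPreconnected (N \ {(c : Sph)}) := by
    have := (ball_punct c hr).image (fun w : ℂ => (w : Sph)) continuous_coe.continuousOn
    convert this using 1
    rw [image_sdiff OnePoint.coe_injective, image_singleton]
  have hWo : IsOpen (W \ {(c : Sph)}) := hW.sdiff isClosed_singleton
  have aux : ∀ U V : Set Sph, IsOpen U → IsOpen V → W \ {(c : Sph)} ⊆ U ∪ V →
      (W \ {(c : Sph)} ∩ V).Nonempty → ¬ (W \ {(c : Sph)} ∩ (U ∩ V)).Nonempty →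
      N \ {(c : Sph)} ⊆ U → False := by
    intro U V hU hV hUV hVn hno hNU
    obtain ⟨y, hy, hyV⟩ := hVn
    obtain ⟨x, hxW, hx1, hx2⟩ := hp ((W \ {(c : Sph)} ∩ U) ∪ N) (W \ {(c : Sph)} ∩ V)
      ((hWo.inter hU).union hNo) (hWo.inter hV) (by
        intro x hx
        by_cases hxc : x = c
        · rw [hxc]; exact Or.inl (Or.inr hcN)
        · rcases hUV ⟨hx, hxc⟩ with h | h
          · exact Or.inl (Or.inl ⟨⟨hx, hxc⟩, h⟩)
          · exact Or.inr ⟨⟨hx, hxc⟩, h⟩) ⟨c, hz, Or.inr hcN⟩ ⟨y, hy.1, hy, hyV⟩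
    rcases hx1 with h | h
    · exact hno ⟨x, h.1, h.2, hx2.2⟩
    · exact hno ⟨x, hx2.1, hNU ⟨h, hx2.1.2⟩, hx2.2⟩
  intro U V hU hV hUV hUn hVn
  by_contra hno
  rcases isPreconnected_iff_subset_of_disjoint.1 hNp U V hU hV
    ((sdiff_subset_sdiff_left hNW).trans hUV) (by
      rw [← not_nonempty_iff_eq_empty]
      rintro ⟨x, hx, hx'⟩
      exact hno ⟨x, ⟨hNW hx.1, hx.2⟩, hx'⟩) with h | h
  · exact aux U V hU hV hUV hVn hno h
  · exact aux V U hV hU (by rwa [union_comm]) hUn (by rwa [inter_comm V U]) h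

lemma punct_finite {W : Set Sph} (hW : IsOpen W) (hp : IsPreconnected W) (hi : ∞ ∉ W) {Z : Set Sph}
    (hZ : Z.Finite) : IsPreconnected (W \ Z) := by
  induction Z, hZ using Set.Finite.induction_on with
  | empty => simpa
  | @insert z Z hz hZ ih =>
    have : W \ insert z Z = (W \ Z) \ {z} := by
      ext x; simp only [Set.mem_sdiff, mem_insert_iff, mem_singleton_iff]; tauto
    rw [this]
    exact punct (hW.sdiff hZ.isClosed) ih (fun h => hi h.1) z

lemma open_diff_finite {W Z : Set Sph} (hW : IsOpen W) (hn : W.Nonempty) (hZ : Z.Finite) :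
    (W \ Z).Nonempty := by
  by_contra h
  have hsub : W ⊆ Z := by
    intro x hx
    by_contra hx'
    exact h ⟨x, hx, hx'⟩
  have h1 : ((↑) ⁻¹' W : Set ℂ).Finite :=
    (hZ.subset hsub).preimage OnePoint.coe_injective.injOn
  have h2 : IsOpen ((↑) ⁻¹' W : Set ℂ) := hW.preimage continuous_coe
  have h3 : ((↑) ⁻¹' W : Set ℂ).Nonempty := by
    obtain ⟨_, hx, ⟨w, rfl⟩⟩ := (OnePoint.denseRange_coe (X := ℂ)).inter_open_nonempty W hW hn
    exact ⟨w, hx⟩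
  obtain ⟨w, hw⟩ := h3
  exact (infinite_of_mem_nhds w (h2.mem_nhds hw)) h1

lemma plane_pre : IsPreconnected ({∞}ᶜ : Set Sph) := by
  rw [OnePoint.compl_infty]
  exact isPreconnected_range continuous_coe

section
variable {ι : Type} {L : ι → PL}

/-! ### Points in closures of cells -/

lemma cl_cell_side {I : Finset ι} {s : ι → Bool} {q : Sph} (hq : q ∈ closure (cell L I s)) {i : ι}
    (hi : i ∈ I) : q ∈ closure ((L i).side (s i)) :=
  closure_mono (show cell L I s ⊆ (L i).side (s i) from fun _ hz => hz i hi) hq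

lemma near_cell {I J : Finset ι} {s : ι → Bool} {q : Sph} (hq : q ∈ closure (cell L J s))
    (h : ∀ j ∈ I, j ∉ J → q ∈ (L j).side (s j)) : q ∈ closure (cell L I s) := by
  classical
  rw [mem_closure_iff]
  intro U hU hqU
  obtain ⟨z, ⟨h1, h2⟩, h3⟩ := mem_closure_iff.1 hq _
    (hU.inter (cell_open (L := L) (I.filter (· ∉ J)) s)) ⟨hqU, fun j hj => by
      rw [Finset.mem_filter] at hj; exact h j hj.1 hj.2⟩
  refine ⟨z, h1, fun j hj => ?_⟩
  by_cases hJ : j ∈ J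
  · exact h3 j hJ
  · exact h2 j (Finset.mem_filter.2 ⟨hj, hJ⟩)

lemma edge_cell {I : Finset ι} {s : ι → Bool} {i : ι} {q : Sph} (hq : q ∈ (L i).K)
    (h : ∀ j ∈ I, j ≠ i → q ∈ (L j).side (s j)) : q ∈ closure (cell L I s) := by
  refine near_cell (J := {i}) ?_ (fun j hj hji => h j hj (by simpa using hji))
  have : cell L {i} s = (L i).side (s i) := by ext; simp [cell]
  rw [this]
  exact (L i).K_cl hq _

/-- The filter of an end of the line. -/
def endF (e : Bool) : Filter ℝ := if e then atTop else atBot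

instance (e : Bool) : (endF e).NeBot := by
  cases e
  · change (atBot : Filter ℝ).NeBot; infer_instance
  · change (atTop : Filter ℝ).NeBot; infer_instance

lemma bool_ne : ∀ a b : Bool, ¬ a = b → a = !b := by decide

lemma IsCurve.end_tendsto {γ : ℝ → Sph} (h : IsCurve γ) (e : Bool) : Tendsto γ (endF e) (𝓝 ∞) := by
  cases e
  · exact h.bot
  · exact h.top

lemma IsArr.exists_end (hL : IsArr L) {i j : ι} (hij : i ≠ j) (e : Bool) :
    ∃ b, (∀ᶠ t in endF e, (L i).γ t ∈ (L j).side b) ∧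
      ∀ᶠ t in endF (!e), (L i).γ t ∈ (L j).side (!b) := by
  obtain ⟨t, b, h⟩ := hL.cut hij
  have h1 : ∀ᶠ r in atBot, (L i).γ r ∈ (L j).side b :=
    (eventually_lt_atBot t).mono fun r hr => (h r).1.2 hr
  have h2 : ∀ᶠ r in atTop, (L i).γ r ∈ (L j).side (!b) :=
    (eventually_gt_atTop t).mono fun r hr => (h r).2.2.2 hr
  cases e
  · exact ⟨b, h1, h2⟩
  · exact ⟨!b, h2, by simpa [endF] using h1⟩

lemma IsArr.end_opp (hL : IsArr L) {i j : ι} (hij : i ≠ j) {e b : Bool}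
    (h : ∀ᶠ t in endF e, (L i).γ t ∈ (L j).side b) :
    ∀ᶠ t in endF (!e), (L i).γ t ∈ (L j).side (!b) := by
  obtain ⟨c, h1, h2⟩ := hL.exists_end hij e
  obtain ⟨t, h3, h4⟩ := (h.and h1).exists
  rw [(L j).side_eq h3 h4]; exact h2

lemma end_edge {I : Finset ι} {s : ι → Bool} {i : ι} {e : Bool}
    (h : ∀ j ∈ I, j ≠ i → ∀ᶠ t in endF e, (L i).γ t ∈ (L j).side (s j)) :
    ∀ᶠ t in endF e, (L i).γ t ∈ closure (cell L I s) := by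
  have : ∀ᶠ t in endF e, ∀ j ∈ I, j ≠ i → (L i).γ t ∈ (L j).side (s j) := by
    rw [Filter.eventually_all_finset]
    intro j hj
    by_cases hji : j = i
    · exact Eventually.of_forall fun t h' => absurd hji h'
    · exact (h j hj hji).mono fun t ht _ => ht
  exact this.mono fun t ht => edge_cell ((L i).γ_mem t) ht

lemma end_cell {I : Finset ι} {s : ι → Bool} {i : ι} {e : Bool}
    (h : ∀ j ∈ I, j ≠ i → ∀ᶠ t in endF e, (L i).γ t ∈ (L j).side (s j)) :
    ∞ ∈ closure (cell L I s) :=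
  isClosed_closure.mem_of_tendsto ((L i).curve.end_tendsto e) (end_edge h)

/-- Two curves meet in one finite point only. -/
lemma IsArr.meet (hL : IsArr L) {i j : ι} (hij : i ≠ j) {p q : Sph} (hp : p ≠ ∞) (hq : q ≠ ∞)
    (hpi : p ∈ (L i).K) (hpj : p ∈ (L j).K) (hqi : q ∈ (L i).K) (hqj : q ∈ (L j).K) : p = q := by
  obtain ⟨t, b, h⟩ := hL.cut hij
  obtain ⟨s, rfl⟩ := hpi.resolve_left hp
  obtain ⟨r, rfl⟩ := hqi.resolve_left hq
  rw [(h s).2.1.1 hpj, (h r).2.1.1 hqj]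

lemma IsArr.vert_finite [Finite ι] (hL : IsArr L) :
    {z | ∃ i j, i ≠ j ∧ z ∈ (L i).K ∧ z ∈ (L j).K}.Finite := by
  have : {z | ∃ i j, i ≠ j ∧ z ∈ (L i).K ∧ z ∈ (L j).K} ⊆
      insert ∞ (⋃ i, ⋃ j, {z | z ≠ ∞ ∧ i ≠ j ∧ z ∈ (L i).K ∧ z ∈ (L j).K}) := by
    rintro z ⟨i, j, h1, h2, h3⟩
    by_cases hz : z = ∞
    · exact Or.inl hz
    · exact Or.inr (mem_iUnion₂.2 ⟨i, j, hz, h1, h2, h3⟩)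
  refine Set.Finite.subset (Set.Finite.insert _ (finite_iUnion fun i => finite_iUnion fun j => ?_)) this
  refine Set.Subsingleton.finite ?_
  rintro p ⟨p1, p2, p3, p4⟩ q ⟨q1, q2, q3, q4⟩
  exact hL.meet p2 p1 q1 p3 p4 q3 q4

/-- A frontier point. -/
lemma exists_frontier {M F : Set Sph} (hM : IsPreconnected M) (hF : IsOpen F)
    (h1 : (M ∩ F).Nonempty) (h2 : (M ∩ (closure F)ᶜ).Nonempty) : ∃ q ∈ M, q ∈ closure F ∧ q ∉ F := by
  by_contra hno
  push Not at hno
  obtain ⟨x, -, h3, h4⟩ := hM F (closure F)ᶜ hF isClosed_closure.isOpen_compl (fun x hx => by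
    by_cases h : x ∈ closure F
    · exact Or.inl (hno x hx h)
    · exact Or.inr h) h1 h2
  exact h4 (subset_closure h3)

lemma IsArr.pencil (hL : IsArr L) {I : Finset ι} (hI : I.Nonempty) {b : Sph} (hb : b ≠ ∞)
    (hbI : ∀ i ∈ I, b ∈ (L i).K) {s : ι → Bool} (hne : (cell L I s).Nonempty) :
    b ∈ closure (cell L I s) ∧ b ∈ closure (cell L I fun i => !(s i)) := by
  have hfin : ({b, ∞} : Set Sph).Finite := by simp
  have hM : IsPreconnected ({∞}ᶜ \ {b} : Set Sph) :=
    punct isOpen_compl_singleton plane_pre (by simp) b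
  obtain ⟨i0, hi0⟩ := hI
  obtain ⟨q, hqM, hq1, hq2⟩ := exists_frontier hM (cell_open I s) (by
    obtain ⟨x, h1, h2⟩ := open_diff_finite (cell_open I s) hne hfin
    simp only [mem_insert_iff, mem_singleton_iff, not_or] at h2
    exact ⟨x, ⟨h2.2, h2.1⟩, h1⟩) (by
    obtain ⟨x, h1, h2⟩ := open_diff_finite ((L i0).side_open (!(s i0))) ((L i0).side_ne _) hfin
    simp only [mem_insert_iff, mem_singleton_iff, not_or] at h2
    exact ⟨x, ⟨h2.2, h2.1⟩, fun h => (L i0).cl_side (cl_cell_side h hi0) h1⟩)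
  have hqb : q ≠ b := hqM.2
  have hqi : q ≠ ∞ := hqM.1
  obtain ⟨i, hi, hqs⟩ : ∃ i ∈ I, q ∉ (L i).side (s i) := by
    by_contra h; push Not at h; exact hq2 h
  have hqK : q ∈ (L i).K := by
    by_contra h
    exact (L i).cl_side (cl_cell_side hq1 hi) ((L i).mem_not h hqs)
  have hqj : ∀ j ∈ I, j ≠ i → q ∈ (L j).side (s j) := by
    intro j hj hji
    have : q ∉ (L j).K := fun h => hqb (hL.meet hji.symm hqi hb hqK h (hbI i hi) (hbI j hj))
    by_contra h
    exact (L j).cl_side (cl_cell_side hq1 hj) ((L j).mem_not this h)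
  obtain ⟨t, rfl⟩ := hqK.resolve_left hqi
  obtain ⟨t0, rfl⟩ := (hbI i hi).resolve_left hb
  have htt : t ≠ t0 := fun h => hqb (by rw [h])
  have key : ∀ j ∈ I, j ≠ i → ∀ r, (0 < (r - t0) * (t - t0) → (L i).γ r ∈ (L j).side (s j)) ∧
      ((r - t0) * (t - t0) < 0 → (L i).γ r ∈ (L j).side (!(s j))) := by
    intro j hj hji r
    obtain ⟨t1, c, h⟩ := hL.cut hji.symm
    have e1 : t0 = t1 := (h t0).2.1.1 (hbI j hj)
    subst e1
    have hq := hqj j hj hji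
    rcases lt_or_gt_of_ne htt with hlt | hgt
    · have e2 : s j = c := (L j).side_eq hq ((h t).1.2 hlt)
      rw [e2]
      refine ⟨fun hr => (h r).1.2 (by nlinarith), fun hr => (h r).2.2.2 (by nlinarith)⟩
    · have e2 : s j = !c := (L j).side_eq hq ((h t).2.2.2 hgt)
      rw [e2, Bool.not_not]
      refine ⟨fun hr => (h r).2.2.2 (by nlinarith), fun hr => (h r).1.2 (by nlinarith)⟩
  have hsq : 0 < (t - t0) * (t - t0) := mul_self_pos.2 (sub_ne_zero.2 htt)
  have hten : ∀ k : ℝ, Tendsto (fun x : ℝ => (L i).γ (t0 + x * (k * (t - t0)))) (𝓝[>] 0) (𝓝 ((L i).γ t0)) := by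
    intro k
    have h1 : Continuous fun x : ℝ => (L i).γ (t0 + x * (k * (t - t0))) :=
      (L i).curve.cont.comp (by fun_prop)
    have h2 := h1.continuousAt (x := 0)
    rw [ContinuousAt] at h2
    simp only [zero_mul, add_zero] at h2
    exact h2.mono_left nhdsWithin_le_nhds
  constructor
  · refine isClosed_closure.mem_of_tendsto (hten 1) ?_
    filter_upwards [self_mem_nhdsWithin] with x hx
    refine edge_cell ((L i).γ_mem _) fun j hj hji => (key j hj hji _).1 ?_
    have : (0:ℝ) < x := hx
    have e : (t0 + x * (1 * (t - t0)) - t0) * (t - t0) = x * ((t - t0) * (t - t0)) := by ring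
    rw [e]; positivity
  · refine isClosed_closure.mem_of_tendsto (hten (-1)) ?_
    filter_upwards [self_mem_nhdsWithin] with x hx
    refine edge_cell ((L i).γ_mem _) fun j hj hji => (key j hj hji _).2 ?_
    have : (0:ℝ) < x := hx
    have e : (t0 + x * (-1 * (t - t0)) - t0) * (t - t0) = - (x * ((t - t0) * (t - t0))) := by ring
    rw [e]
    have : 0 < x * ((t - t0) * (t - t0)) := by positivity
    linarith

/-- An end of some curve of the family lies in the prescribed unbounded region. -/
lemma IsArr.unbdd (hL : IsArr L) {I : Finset ι} (hI : I.Nonempty) {s : ι → Bool}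
    (h1 : (cell L I s).Nonempty) (h2 : (cell L I fun i => !(s i)).Nonempty) :
    ∃ i ∈ I, ∃ e, ∀ j ∈ I, j ≠ i → ∀ᶠ t in endF e, (L i).γ t ∈ (L j).side (s j) := by
  classical
  induction hI using Finset.Nonempty.cons_induction with
  | singleton i =>
    refine ⟨i, by simp, true, fun j hj hji => absurd (Finset.mem_singleton.1 hj) hji⟩
  | cons τ I hτ hI ih =>
    rw [Finset.cons_eq_insert] at *
    obtain ⟨x, hx⟩ := h1
    obtain ⟨y, hy⟩ := h2
    have hx' := cell_mono (Finset.subset_insert τ I) s hx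
    have hy' := cell_mono (Finset.subset_insert τ I) _ hy
    obtain ⟨i, hi, e, he⟩ := ih ⟨x, hx'⟩ ⟨y, hy'⟩
    have hiτ : i ≠ τ := by rintro rfl; exact hτ hi
    by_cases hA : ∃ t, (L τ).γ t ∈ cell L I s
    · by_cases hB : ∃ t, (L τ).γ t ∈ cell L I fun i => !(s i)
      · obtain ⟨t1, h1⟩ := hA
        obtain ⟨t2, h2⟩ := hB
        refine ⟨τ, Finset.mem_insert_self _ _, decide (t2 < t1), fun j hj hjτ => ?_⟩
        have hjI := Finset.mem_of_mem_insert_of_ne hj hjτ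
        obtain ⟨t, b, h⟩ := hL.cut hjτ.symm
        have h1 := h1 j hjI
        have h2 : (L τ).γ t2 ∈ (L j).side (!(s j)) := h2 j hjI
        have hbb : s j = b ∨ s j = !b := by cases b <;> cases s j <;> simp
        rcases hbb with hb | hb
        · rw [hb] at h1 h2 ⊢
          have a1 := (h t1).1.1 h1
          have a2 := (h t2).2.2.1 h2
          have : ¬ t2 < t1 := by linarith
          simp only [this, decide_false, endF]
          exact (eventually_lt_atBot t).mono fun r hr => (h r).1.2 hr
        · rw [hb] at h1 h2 ⊢
          simp only [Bool.not_not] at h2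
          have a1 := (h t1).2.2.1 h1
          have a2 := (h t2).1.1 h2
          have : t2 < t1 := by linarith
          simp only [this, decide_true, endF]
          exact (eventually_gt_atTop t).mono fun r hr => (h r).2.2.2 hr
      · -- the opposite cell is missed
        refine ⟨i, Finset.mem_insert_of_mem hi, e, fun j hj hji => ?_⟩
        rcases Finset.mem_insert.1 hj with rfl | hjI
        swap
        · exact he j hjI hji
        have hd : Disjoint (cell L I fun i => !(s i)) (L j).K := by
          rw [disjoint_left]
          rintro z hz (rfl | ⟨t, rfl⟩)
          · exact inf_not_cell hI _ hz
          · exact hB ⟨t, hz⟩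
        have hsub := (L j).side_of_pre (hL.cell_pre I hI _) hd hy' (hy j (Finset.mem_insert_self _ _))
        have hev := end_edge (L := L) (I := I) (s := fun i => !(s i)) (i := i) (e := !e)
          (fun k hk hki => hL.end_opp hki.symm (he k hk hki))
        obtain ⟨c, c1, c2⟩ := hL.exists_end hiτ (!e)
        have hc : c = !(s j) := by
          obtain ⟨t, a1, a2⟩ := (hev.and c1).exists
          by_contra hne
          have : c = !(!(s j)) := bool_ne _ _ hne
          rw [this] at a2
          exact (L j).cl_side (closure_mono hsub a1) a2
        rw [hc, Bool.not_not, Bool.not_not] at c2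
        exact c2
    · refine ⟨i, Finset.mem_insert_of_mem hi, e, fun j hj hji => ?_⟩
      rcases Finset.mem_insert.1 hj with rfl | hjI
      swap
      · exact he j hjI hji
      have hd : Disjoint (cell L I s) (L j).K := by
        rw [disjoint_left]
        rintro z hz (rfl | ⟨t, rfl⟩)
        · exact inf_not_cell hI _ hz
        · exact hA ⟨t, hz⟩
      have hsub := (L j).side_of_pre (hL.cell_pre I hI _) hd hx' (hx j (Finset.mem_insert_self _ _))
      have hev := end_edge he
      obtain ⟨c, c1, c2⟩ := hL.exists_end hiτ e
      have hc : c = s j := by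
        obtain ⟨t, a1, a2⟩ := (hev.and c1).exists
        by_contra hne
        have : c = !(s j) := bool_ne _ _ hne
        rw [this] at a2
        exact (L j).cl_side (closure_mono hsub a1) a2
      rw [← hc]
      exact c1

end
end Levi

namespace Levi
open Filter OnePoint

/-! ### Monotone arcs -/

/-- The open arc `O` goes from side `s` to side `s'` of `P`, crossing `P` at most once. -/
def Mono (O : Set Sph) (P : PL) (s s' : Bool) : Prop :=
  (O ∩ P.side s).Nonempty ∧ (O ∩ P.side s').Nonempty ∧ (O ∩ P.K).Subsingleton ∧
    (s = s' → O ⊆ P.side s)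

lemma Mono.of_sub {O : Set Sph} {P : PL} {s : Bool} (h : O ⊆ P.side s) (hn : O.Nonempty) :
    Mono O P s s := by
  obtain ⟨x, hx⟩ := hn
  exact ⟨⟨x, hx, h hx⟩, ⟨x, hx, h hx⟩, fun y hy => absurd hy.2 (P.not_K (h hy.1)), fun _ => h⟩

lemma Mono.glueA {O₁ O₂ : Set Sph} {P : PL} {s s' : Bool} {v : Sph} (h₁ : Mono O₁ P s s)
    (h₂ : Mono O₂ P s' s') (hss : s ≠ s') : Mono (O₁ ∪ {v} ∪ O₂) P s s' := by
  obtain ⟨⟨x, hx, hx'⟩, -, -, h1⟩ := h₁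
  obtain ⟨⟨y, hy, hy'⟩, -, -, h2⟩ := h₂
  refine ⟨⟨x, Or.inl (Or.inl hx), hx'⟩, ⟨y, Or.inr hy, hy'⟩, ?_, fun h => absurd h hss⟩
  have : ∀ z ∈ (O₁ ∪ {v} ∪ O₂) ∩ P.K, z = v := by
    rintro z ⟨(hz | hz) | hz, hk⟩
    · exact absurd hk (P.not_K (h1 rfl hz))
    · exact hz
    · exact absurd hk (P.not_K (h2 rfl hz))
  intro z hz w hw
  rw [this z hz, this w hw]

lemma Mono.glueB1 {O₁ O₂ : Set Sph} {P : PL} {s s' : Bool} {v : Sph} (h₁ : Mono O₁ P s s)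
    (hv : v ∈ P.side s) (h₂ : Mono O₂ P s s') : Mono (O₁ ∪ {v} ∪ O₂) P s s' := by
  obtain ⟨⟨x, hx, hx'⟩, -, -, h1⟩ := h₁
  obtain ⟨-, ⟨y, hy, hy'⟩, h3, h2⟩ := h₂
  refine ⟨⟨x, Or.inl (Or.inl hx), hx'⟩, ⟨y, Or.inr hy, hy'⟩, ?_, fun h => ?_⟩
  · have : ∀ z ∈ (O₁ ∪ {v} ∪ O₂) ∩ P.K, z ∈ O₂ ∩ P.K := by
      rintro z ⟨(hz | hz) | hz, hk⟩
      · exact absurd hk (P.not_K (h1 rfl hz))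
      · rw [mem_singleton_iff.1 hz] at hk
        exact absurd hk (P.not_K hv)
      · exact ⟨hz, hk⟩
    intro z hz w hw
    exact h3 (this z hz) (this w hw)
  · rintro z ((hz | hz) | hz)
    · exact h1 rfl hz
    · rw [mem_singleton_iff.1 hz]; exact hv
    · exact h2 h hz

lemma Mono.glueB2 {O₁ O₂ : Set Sph} {P : PL} {s s' : Bool} {v : Sph} (h₁ : Mono O₁ P s s')
    (hv : v ∈ P.side s') (h₂ : Mono O₂ P s' s') : Mono (O₁ ∪ {v} ∪ O₂) P s s' := by
  obtain ⟨⟨x, hx, hx'⟩, -, h3, h1⟩ := h₁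
  obtain ⟨-, ⟨y, hy, hy'⟩, -, h2⟩ := h₂
  refine ⟨⟨x, Or.inl (Or.inl hx), hx'⟩, ⟨y, Or.inr hy, hy'⟩, ?_, fun h => ?_⟩
  · have : ∀ z ∈ (O₁ ∪ {v} ∪ O₂) ∩ P.K, z ∈ O₁ ∩ P.K := by
      rintro z ⟨(hz | hz) | hz, hk⟩
      · exact ⟨hz, hk⟩
      · rw [mem_singleton_iff.1 hz] at hk
        exact absurd hk (P.not_K hv)
      · exact absurd hk (P.not_K (h2 rfl hz))
    intro z hz w hw
    exact h3 (this z hz) (this w hw)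
  · rintro z ((hz | hz) | hz)
    · exact h1 h hz
    · rw [mem_singleton_iff.1 hz, h]; exact hv
    · rw [h]; exact h2 rfl hz

lemma OArc.nonempty {u v : Sph} {O : Set Sph} (h : OArc u v O) : O.Nonempty :=
  closure_nonempty_iff.1 ⟨u, h.left_cl⟩

section
variable {ι : Type} {L : ι → PL}

lemma IsArr.geo [Fintype ι] [Nonempty ι] (hL : IsArr L) (n : ℕ) : ∀ {s s' : ι → Bool} {u v : Sph},
    (Finset.univ.filter fun i => s i ≠ s' i).card = n →
    u ∈ closure (cell L Finset.univ s) → v ∈ closure (cell L Finset.univ s') → u ≠ v →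
    ∃ O, OArc u v O ∧ ∀ i, Mono O (L i) (s i) (s' i) := by
  classical
  induction n with
  | zero =>
    intro s s' u v hn hu hv huv
    have hss : s' = s := by
      rw [Finset.card_eq_zero, Finset.filter_eq_empty_iff] at hn
      funext i
      have := hn (Finset.mem_univ i)
      exact (not_not.1 this).symm
    subst hss
    obtain ⟨O, hO, hO'⟩ := hL.cell_arc Finset.univ_nonempty hu hv huv
    exact ⟨O, hO, fun i => Mono.of_sub (fun z hz => hO' hz i (Finset.mem_univ i)) hO.nonempty⟩
  | succ n ih =>
    intro s s' u v hn hu hv huv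
    set D := Finset.univ.filter fun i => s i ≠ s' i with hD
    have hDm : ∀ i, i ∈ D ↔ s i ≠ s' i := fun i => by simp [hD]
    obtain ⟨i1, hi1⟩ : D.Nonempty := by rw [← Finset.card_pos]; omega
    set Z : Set Sph := {z | ∃ i j, i ≠ j ∧ z ∈ (L i).K ∧ z ∈ (L j).K} ∪ {u, v, ∞} with hZ
    have hZf : Z.Finite := hL.vert_finite.union (by simp)
    set M : Set Sph := cell L Dᶜ s \ {∞} with hMdef
    have hMo : IsOpen M := (cell_open _ _).sdiff isClosed_singleton
    have hMp : IsPreconnected M := by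
      rcases Finset.eq_empty_or_nonempty Dᶜ with h | h
      · rw [hMdef, h, cell_empty, ← compl_eq_univ_sdiff]
        exact plane_pre
      · rw [hMdef, sdiff_singleton_eq_self (inf_not_cell h s)]
        exact hL.cell_pre _ h s
    have hMZ : IsPreconnected (M \ Z) := punct_finite hMo hMp (fun h => h.2 rfl) hZf
    have hinf : (∞ : Sph) ∈ Z := Or.inr (by simp)
    obtain ⟨q, ⟨hqM, hqZ⟩, hq1, hq2⟩ := exists_frontier hMZ (cell_open (L := L) Finset.univ s) (by
      obtain ⟨x, h1, h2⟩ := open_diff_finite (cell_open Finset.univ s)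
        (closure_nonempty_iff.1 ⟨u, hu⟩) hZf
      refine ⟨x, ⟨⟨cell_mono (Finset.subset_univ _) s h1, ?_⟩, h2⟩, h1⟩
      intro h
      exact h2 ((mem_singleton_iff.1 h) ▸ hinf)) (by
      obtain ⟨x, h1, h2⟩ := open_diff_finite (cell_open Finset.univ s')
        (closure_nonempty_iff.1 ⟨v, hv⟩) hZf
      refine ⟨x, ⟨⟨fun i hi => ?_, fun h => h2 ((mem_singleton_iff.1 h) ▸ hinf)⟩, h2⟩, fun h => ?_⟩
      · have : s i = s' i := by
          rw [Finset.mem_compl, hDm] at hi; exact not_not.1 hi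
        rw [this]; exact h1 i (Finset.mem_univ i)
      · refine (L i1).cl_side (cl_cell_side h (Finset.mem_univ i1)) ?_
        have : s' i1 = !(s i1) := bool_ne _ _ (fun h => (hDm i1).1 hi1 h.symm)
        rw [← this]; exact h1 i1 (Finset.mem_univ i1))
    obtain ⟨i, hqs⟩ : ∃ i, q ∉ (L i).side (s i) := by
      by_contra h; push Not at h; exact hq2 fun i _ => h i
    have hqK : q ∈ (L i).K := by
      by_contra h
      exact (L i).cl_side (cl_cell_side hq1 (Finset.mem_univ i)) ((L i).mem_not h hqs)
    have hqj : ∀ j, j ≠ i → q ∈ (L j).side (s j) := by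
      intro j hji
      have : q ∉ (L j).K := fun h => hqZ (Or.inl ⟨j, i, hji, h, hqK⟩)
      by_contra h
      exact (L j).cl_side (cl_cell_side hq1 (Finset.mem_univ j)) ((L j).mem_not this h)
    have hiD : i ∈ D := by
      by_contra h
      exact hqs (hqM.1 i (Finset.mem_compl.2 h))
    have hsi : s' i = !(s i) := bool_ne _ _ (fun h => (hDm i).1 hiD h.symm)
    have hqu : q ≠ u := fun h => hqZ (Or.inr (by simp [h]))
    have hqv : q ≠ v := fun h => hqZ (Or.inr (by simp [h]))
    set s1 : ι → Bool := Function.update s i (s' i) with hs1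
    have hs1i : s1 i = s' i := by simp [hs1]
    have hs1j : ∀ j, j ≠ i → s1 j = s j := fun j hj => by simp [hs1, hj]
    have hcard : (Finset.univ.filter fun j => s1 j ≠ s' j).card = n := by
      have : (Finset.univ.filter fun j => s1 j ≠ s' j) = D.erase i := by
        ext j
        simp only [Finset.mem_filter, Finset.mem_univ, true_and, Finset.mem_erase, hDm]
        by_cases hj : j = i
        · subst hj; simp [hs1i]
        · simp [hs1j j hj, hj]
      rw [this, Finset.card_erase_of_mem hiD, hn]; rfl
    have hq3 : q ∈ closure (cell L Finset.univ s1) :=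
      edge_cell hqK fun j _ hj => by rw [hs1j j hj]; exact hqj j hj
    obtain ⟨O1, hO1, hO1'⟩ := hL.cell_arc Finset.univ_nonempty hu hq1 hqu.symm
    obtain ⟨O2, hO2, hO2'⟩ := ih hcard hq3 hv hqv
    have hm1 : ∀ j, Mono O1 (L j) (s j) (s j) := fun j =>
      Mono.of_sub (fun z hz => hO1' hz j (Finset.mem_univ j)) hO1.nonempty
    have h1i : O1 ⊆ (L i).side (s i) := (hm1 i).2.2.2 rfl
    have h2i : O2 ⊆ (L i).side (!(s i)) := by
      have := (hO2' i).2.2.2 hs1i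
      rwa [hs1i, hsi] at this
    refine ⟨O1 ∪ {q} ∪ O2, hO1.glue hO2 ?_ ?_ ?_ huv, fun j => ?_⟩
    · rw [disjoint_left]
      exact fun z h1 h2 => (L i).not_both (h1i h1) (h2i h2)
    · exact fun h => (L i).cl_side (cl_cell_side hu (Finset.mem_univ i)) (h2i h)
    · intro h
      refine (L i).cl_side (cl_cell_side hv (Finset.mem_univ i)) ?_
      rw [hsi, Bool.not_not]; exact h1i h
    · by_cases hj : j = i
      · subst hj
        have h2 := hO2' j
        rw [hs1i] at h2
        exact (hm1 j).glueA h2 ((hDm j).1 hiD)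
      · have h2 := hO2' j
        rw [hs1j j hj] at h2
        exact (hm1 j).glueB1 (hqj j hj) h2

/-! ### Closing up to a curve -/

lemma exists_circle {b : Sph} {O₁ O₂ : Set Sph} (h₁ : OArc ∞ b O₁) (h₂ : OArc b ∞ O₂)
    (hd : Disjoint O₁ O₂) : ∃ γ, IsCurve γ ∧ range γ = O₁ ∪ {b} ∪ O₂ := by
  have hb1 := h₁.right_not
  have hb2 := h₂.left_not
  have hi1 := h₁.left_not
  have hi2 := h₂.right_not
  obtain ⟨p, p1, p2, p3, p4, p5⟩ := h₁
  obtain ⟨q, q1, q2, q3, q4, q5⟩ := h₂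
  have hbi : b ≠ ∞ := by
    rw [← p3, ← p4]
    intro h
    exact one_ne_zero (p2 (x₁ := 1) (x₂ := 0) (by simp) (by simp) h)
  set γ : ℝ → Sph := fun t => if t ≤ 0 then p (1 / (1 + |t|)) else q (t / (1 + |t|)) with hγ
  have hpos : ∀ t : ℝ, 0 < 1 + |t| := fun t => by positivity
  have g1 : ∀ t ≤ (0:ℝ), γ t = p (1 / (1 - t)) := fun t ht => by
    simp only [hγ, if_pos ht, abs_of_nonpos ht]; rfl
  have g2 : ∀ t > (0:ℝ), γ t = q (t / (1 + t)) := fun t ht => by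
    simp only [hγ, if_neg (not_le.2 ht), abs_of_pos ht]
  have g0 : γ 0 = b := by rw [g1 0 le_rfl]; simpa using p4
  have gneg : ∀ t < (0:ℝ), γ t ∈ O₁ := fun t ht => by
    rw [g1 t ht.le, p5]
    have : (0:ℝ) < 1 - t := by linarith
    exact ⟨_, ⟨by positivity, by rw [div_lt_one this]; linarith⟩, rfl⟩
  have gpos : ∀ t > (0:ℝ), γ t ∈ O₂ := fun t ht => by
    rw [g2 t ht, q5]
    have : (0:ℝ) < 1 + t := by linarith
    exact ⟨_, ⟨by positivity, by rw [div_lt_one this]; linarith⟩, rfl⟩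
  have gsub : ∀ t, γ t ∈ O₁ ∪ {b} ∪ O₂ := by
    intro t
    rcases lt_trichotomy t 0 with h | rfl | h
    · exact Or.inl (Or.inl (gneg t h))
    · exact Or.inl (Or.inr g0)
    · exact Or.inr (gpos t h)
  refine ⟨γ, ⟨?_, ?_, ?_, ?_, ?_⟩, ?_⟩
  · refine Continuous.if_le ?_ ?_ continuous_id continuous_const ?_
    · exact p1.comp (continuous_const.div (by fun_prop) fun t => (hpos t).ne')
    · exact q1.comp (continuous_id.div (by fun_prop) fun t => (hpos t).ne')
    · rintro t rfl; simp [p4, q3]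
  · have neg : ∀ t < (0:ℝ), ∀ r, γ t = γ r → r = t := by
      intro t ht r hr
      rcases lt_trichotomy r 0 with h | rfl | h
      · rw [g1 t ht.le, g1 r h.le] at hr
        have e1 : (0:ℝ) < 1 - t := by linarith
        have e2 : (0:ℝ) < 1 - r := by linarith
        have := p2 ⟨by positivity, by rw [div_le_one e1]; linarith⟩
          ⟨by positivity, by rw [div_le_one e2]; linarith⟩ hr
        rw [div_eq_div_iff e1.ne' e2.ne'] at this
        linarith
      · rw [g0] at hr
        exact absurd (hr ▸ gneg t ht) hb1
      · exact absurd (hr ▸ gneg t ht) (disjoint_right.1 hd (gpos r h))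
    have pos : ∀ t > (0:ℝ), ∀ r, γ t = γ r → r = t := by
      intro t ht r hr
      rcases lt_trichotomy r 0 with h | rfl | h
      · exact (neg r h t hr.symm).symm
      · rw [g0] at hr
        exact absurd (hr ▸ gpos t ht) hb2
      · rw [g2 t ht, g2 r h] at hr
        have e1 : (0:ℝ) < 1 + t := by linarith
        have e2 : (0:ℝ) < 1 + r := by linarith
        have := q2 ⟨by positivity, by rw [div_le_one e1]; linarith⟩
          ⟨by positivity, by rw [div_le_one e2]; linarith⟩ hr
        rw [div_eq_div_iff e1.ne' e2.ne'] at this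
        linarith
    intro t r hr
    rcases lt_trichotomy t 0 with h | rfl | h
    · exact (neg t h r hr).symm
    · rcases lt_trichotomy r 0 with h | rfl | h
      · exact neg r h _ hr.symm
      · rfl
      · exact pos r h _ hr.symm
    · exact (pos t h r hr).symm
  · intro t h
    rcases gsub t with (h' | h') | h'
    · exact hi1 (h ▸ h')
    · exact hbi (h'.symm.trans h)
    · exact hi2 (h ▸ h')
  · have h1 : Tendsto (fun t : ℝ => t / (1 + t)) atTop (𝓝 1) := by
      have : Tendsto (fun t : ℝ => 1 - (1 + t)⁻¹) atTop (𝓝 (1 - 0)) :=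
        tendsto_const_nhds.sub (tendsto_inv_atTop_zero.comp (tendsto_atTop_add_const_left _ _ tendsto_id))
      rw [sub_zero] at this
      refine this.congr' ?_
      filter_upwards [eventually_gt_atTop 0] with t ht
      field_simp; ring
    have h2 := (q1.tendsto 1).comp h1
    rw [q4] at h2
    refine h2.congr' ?_
    filter_upwards [eventually_gt_atTop 0] with t ht
    exact (g2 t ht).symm
  · have h1 : Tendsto (fun t : ℝ => 1 / (1 - t)) atBot (𝓝 0) := by
      have : Tendsto (fun t : ℝ => (1 - t)⁻¹) atBot (𝓝 0) :=
        tendsto_inv_atTop_zero.comp (tendsto_atTop_add_const_left _ _ tendsto_neg_atBot_atTop)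
      simpa using this
    have h2 := (p1.tendsto 0).comp h1
    rw [p3] at h2
    refine h2.congr' ?_
    filter_upwards [eventually_le_atBot 0] with t ht
    exact (g1 t ht).symm
  · refine Subset.antisymm (by rintro _ ⟨t, rfl⟩; exact gsub t) ?_
    rintro z ((hz | hz) | hz)
    · rw [p5] at hz
      obtain ⟨r, hr, rfl⟩ := hz
      refine ⟨1 - 1 / r, ?_⟩
      have : 1 ≤ 1 / r := by rw [le_div_iff₀ hr.1]; linarith [hr.2]
      rw [g1 _ (by linarith)]
      congr 1
      have h1 : 1 - (1 - 1 / r) = 1 / r := by ring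
      rw [h1, one_div_one_div]
    · exact ⟨0, g0.trans hz.symm⟩
    · rw [q5] at hz
      obtain ⟨r, hr, rfl⟩ := hz
      have : 0 < 1 - r := by linarith [hr.2]
      refine ⟨r / (1 - r), ?_⟩
      rw [g2 _ (div_pos hr.1 this)]
      congr 1; field_simp; ring

/-! ### Crossing -/

/-- `P` crosses `Q` exactly once. -/
def Cr (P Q : PL) : Prop :=
  ∃ (t : ℝ) (b : Bool), (∀ s < t, P.γ s ∈ Q.side b) ∧ P.γ t ∈ Q.K ∧ ∀ s > t, P.γ s ∈ Q.side (!b)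

lemma Cr.of_mono {P Q : PL} {s s' : Bool} (hss : s ≠ s') (h : Mono (range P.γ) Q s s') : Cr P Q := by
  obtain ⟨⟨_, ⟨r, rfl⟩, h1⟩, ⟨_, ⟨r', rfl⟩, h2⟩, h3, -⟩ := h
  have hss' : s' = !s := bool_ne _ _ hss.symm
  subst hss'
  obtain ⟨t, ht⟩ : ∃ t, P.γ t ∈ Q.K := by
    by_contra hno
    push Not at hno
    have := Q.side_of_pre (isPreconnected_range P.curve.cont)
      (disjoint_left.2 (by rintro _ ⟨t, rfl⟩; exact hno t)) ⟨r, rfl⟩ h1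
    exact Q.not_both (this ⟨r', rfl⟩) h2
  have huniq : ∀ t', t' ≠ t → P.γ t' ∉ Q.K := fun t' hne hK =>
    hne (P.curve.inj (h3 ⟨⟨t', rfl⟩, hK⟩ ⟨⟨t, rfl⟩, ht⟩))
  have hlt : ∀ x < t, ∀ b, P.γ x ∈ Q.side b → ∀ y < t, P.γ y ∈ Q.side b := by
    intro x hx b hb y hy
    refine Q.side_of_pre (isPreconnected_Iio.image _ P.curve.cont.continuousOn)
      (disjoint_left.2 (by rintro _ ⟨z, hz, rfl⟩; exact huniq z (ne_of_lt hz))) ⟨x, hx, rfl⟩ hb ⟨y, hy, rfl⟩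
  have hgt : ∀ x > t, ∀ b, P.γ x ∈ Q.side b → ∀ y > t, P.γ y ∈ Q.side b := by
    intro x hx b hb y hy
    refine Q.side_of_pre (isPreconnected_Ioi.image _ P.curve.cont.continuousOn)
      (disjoint_left.2 (by rintro _ ⟨z, hz, rfl⟩; exact huniq z (ne_of_gt hz))) ⟨x, hx, rfl⟩ hb ⟨y, hy, rfl⟩
  have hr : r ≠ t := fun h => Q.not_K h1 (h ▸ ht)
  have hr' : r' ≠ t := fun h => Q.not_K h2 (h ▸ ht)
  rcases lt_or_gt_of_ne hr with a | a <;> rcases lt_or_gt_of_ne hr' with a' | a'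
  · exact (Q.not_both (hlt r a s h1 r' a') h2).elim
  · exact ⟨t, s, hlt r a s h1, ht, hgt r' a' _ h2⟩
  · exact ⟨t, !s, hlt r' a' _ h2, ht, by rw [Bool.not_not]; exact hgt r a _ h1⟩
  · exact (Q.not_both (hgt r a s h1 r' a') h2).elim

lemma Cr.symm {P Q : PL} (h : Cr P Q) : Cr Q P := by
  obtain ⟨t, b, h1, h2, h3⟩ := h
  obtain ⟨r, hr⟩ := h2.resolve_left (P.curve.ne_inf t)
  have hother : ∀ r', r' ≠ r → Q.γ r' ∉ P.K := by
    rintro r' hne (h | ⟨s, hs⟩)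
    · exact Q.curve.ne_inf _ h
    · rcases lt_trichotomy s t with h | rfl | h
      · exact Q.not_K (h1 s h) (hs ▸ Q.γ_mem r')
      · exact hne (Q.curve.inj (hs.symm.trans hr.symm))
      · exact Q.not_K (h3 s h) (hs ▸ Q.γ_mem r')
  obtain ⟨c, hc⟩ := P.exists_side (hother (r - 1) (by linarith))
  obtain ⟨c', hc'⟩ := P.exists_side (hother (r + 1) (by linarith))
  have hlt : ∀ s < r, Q.γ s ∈ P.side c := fun s hs =>
    P.side_of_pre (isPreconnected_Iio.image _ Q.curve.cont.continuousOn)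
      (disjoint_left.2 (by rintro _ ⟨z, hz, rfl⟩; exact hother z (ne_of_lt hz)))
      ⟨r - 1, by simp, rfl⟩ hc ⟨s, hs, rfl⟩
  have hgt : ∀ s > r, Q.γ s ∈ P.side c' := fun s hs =>
    P.side_of_pre (isPreconnected_Ioi.image _ Q.curve.cont.continuousOn)
      (disjoint_left.2 (by rintro _ ⟨z, hz, rfl⟩; exact hother z (ne_of_gt hz)))
      ⟨r + 1, by simp, rfl⟩ hc' ⟨s, hs, rfl⟩
  have hrK : Q.γ r ∈ P.K := hr ▸ P.γ_mem t
  by_cases hcc : c' = c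
  · subst hcc
    exfalso
    have hd : Disjoint (P.side (!c')) Q.K := by
      rw [disjoint_left]
      rintro z hz (rfl | ⟨s, rfl⟩)
      · exact P.not_K hz P.inf_mem
      · rcases lt_trichotomy s r with h | rfl | h
        · exact P.not_both (hlt s h) hz
        · exact P.not_K hz hrK
        · exact P.not_both (hgt s h) hz
    obtain ⟨x, hx⟩ := P.side_ne (!c')
    obtain ⟨d, hxd⟩ := Q.exists_side (disjoint_left.1 hd hx)
    have hsub := Q.side_of_pre (P.side_pre _) hd hx hxd
    have hcl : ∀ s, P.γ s ∉ Q.side (!d) := fun s =>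
      Q.cl_side (closure_mono hsub (P.cl _ s))
    have a1 := h1 (t - 1) (by linarith)
    have a2 := h3 (t + 1) (by linarith)
    by_cases hb : b = d
    · subst hb; exact hcl _ a2
    · rw [bool_ne _ _ hb] at a1; exact hcl _ a1
  · rw [bool_ne _ _ hcc] at hgt
    exact ⟨r, c, hlt, hrK, hgt⟩

lemma isArr_iff : IsArr L ↔ ∀ i j, i ≠ j → Cr (L i) (L j) := Iff.rfl

/-! ### New pseudolines -/

lemma exists_sgn (L : ι → PL) (a : Sph) : ∃ s : ι → Bool, ∀ i, a ∉ (L i).K → a ∈ (L i).side (s i) := by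
  have : ∀ i, ∃ b, a ∉ (L i).K → a ∈ (L i).side b := fun i => by
    by_cases h : a ∈ (L i).K
    · exact ⟨true, fun h' => absurd h h'⟩
    · obtain ⟨b, hb⟩ := (L i).exists_side h
      exact ⟨b, fun _ => hb⟩
  choose s hs using this
  exact ⟨s, hs⟩

/-- An end of a curve `i` lies in an unbounded face, and the other end in the opposite one. -/
lemma IsArr.end_face [Fintype ι] (hL : IsArr L) (i : ι) (e c : Bool) : ∃ G : ι → Bool, G i = c ∧
    (∀ j, j ≠ i → ∀ᶠ t in endF e, (L i).γ t ∈ (L j).side (G j)) ∧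
    ∞ ∈ closure (cell L Finset.univ G) ∧ ∞ ∈ closure (cell L Finset.univ fun j => !(G j)) := by
  classical
  have : ∀ j, ∃ b, j ≠ i → ∀ᶠ t in endF e, (L i).γ t ∈ (L j).side b := fun j => by
    by_cases h : j = i
    · exact ⟨true, fun h' => absurd h h'⟩
    · obtain ⟨b, hb, -⟩ := hL.exists_end (Ne.symm h) e
      exact ⟨b, fun _ => hb⟩
  choose G0 hG0 using this
  have hG : ∀ j, j ≠ i → ∀ᶠ t in endF e, (L i).γ t ∈ (L j).side (Function.update G0 i c j) :=
    fun j hj => by simpa [hj] using hG0 j hj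
  refine ⟨Function.update G0 i c, by simp, hG, end_cell fun j _ hj => hG j hj, ?_⟩
  exact end_cell (e := !e) fun j _ hj => hL.end_opp (Ne.symm hj) (hG j hj)

/-- Cells near a point, with prescribed signs of the curves through it. -/
lemma IsArr.near_face [Fintype ι] (hL : IsArr L) {a : Sph} (ha : a ≠ ∞) {s : ι → Bool}
    (hs : ∀ i, a ∉ (L i).K → a ∈ (L i).side (s i)) {G : ι → Bool} {τ : ι} (hτ : a ∈ (L τ).K)
    {I J : Finset ι} (hJ : ∀ i, i ∈ J ↔ a ∈ (L i).K)
    (hne : (cell L J G).Nonempty) {F F' : ι → Bool}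
    (hF : ∀ i ∈ I, (a ∈ (L i).K → F i = G i) ∧ (a ∉ (L i).K → F i = s i))
    (hF' : ∀ i ∈ I, (a ∈ (L i).K → F' i = !(G i)) ∧ (a ∉ (L i).K → F' i = s i)) :
    a ∈ closure (cell L I F) ∧ a ∈ closure (cell L I F') := by
  classical
  obtain ⟨h1, h2⟩ := hL.pencil ⟨τ, (hJ τ).2 hτ⟩ ha (fun i hi => (hJ i).1 hi) hne
  constructor
  · refine near_cell (J := J ∩ I) ?_ fun j hj hjJ => ?_
    · refine closure_mono (fun z hz i hi => ?_) h1
      obtain ⟨hi1, hi2⟩ := Finset.mem_inter.1 hi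
      rw [(hF i hi2).1 ((hJ i).1 hi1)]
      exact hz i hi1
    · have : a ∉ (L j).K := fun h => hjJ (Finset.mem_inter.2 ⟨(hJ j).2 h, hj⟩)
      rw [(hF j hj).2 this]
      exact hs j this
  · refine near_cell (J := J ∩ I) ?_ fun j hj hjJ => ?_
    · refine closure_mono (fun z hz i hi => ?_) h2
      obtain ⟨hi1, hi2⟩ := Finset.mem_inter.1 hi
      rw [(hF' i hi2).1 ((hJ i).1 hi1)]
      exact hz i hi1
    · have : a ∉ (L j).K := fun h => hjJ (Finset.mem_inter.2 ⟨(hJ j).2 h, hj⟩)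
      rw [(hF' j hj).2 this]
      exact hs j this

lemma IsArr.enlarge_one [Fintype ι] (hL : IsArr L) {a : Sph} (ha : a ≠ ∞) {τ : ι}
    (hτ : a ∈ (L τ).K) : ∃ P : PL, a ∈ P.K ∧ ∀ i, Cr P (L i) := by
  classical
  have : Nonempty ι := ⟨τ⟩
  obtain ⟨G, -, -, hG1, hG2⟩ := hL.end_face τ true true
  obtain ⟨s, hs⟩ := exists_sgn L a
  set J : Finset ι := Finset.univ.filter fun i => a ∈ (L i).K with hJdef
  have hJ : ∀ i, i ∈ J ↔ a ∈ (L i).K := fun i => by simp [hJdef]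
  obtain ⟨h1, h2⟩ := hL.near_face ha hs (G := G) hτ (I := Finset.univ) hJ
    ((closure_nonempty_iff.1 ⟨_, hG1⟩).mono (cell_mono (Finset.subset_univ _) G))
    (F := fun i => if a ∈ (L i).K then G i else s i)
    (F' := fun i => if a ∈ (L i).K then !(G i) else s i)
    (fun i _ => ⟨fun h => if_pos h, fun h => if_neg h⟩)
    (fun i _ => ⟨fun h => if_pos h, fun h => if_neg h⟩)
  obtain ⟨O1, hO1, m1⟩ := hL.geo _ rfl hG1 h1 ha.symm
  obtain ⟨O2, hO2, m2⟩ := hL.geo _ rfl h2 hG2 ha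
  have hd : Disjoint O1 O2 := by
    have e1 := m1 τ
    have e2 := m2 τ
    simp only [if_pos hτ] at e1 e2
    rw [disjoint_left]
    exact fun z hz hz' => (L τ).not_both (e1.2.2.2 rfl hz) (e2.2.2.2 rfl hz')
  obtain ⟨γ, hγ, hr⟩ := exists_circle hO1 hO2 hd
  obtain ⟨P, rfl⟩ := hγ.exists_PL
  have har : a ∈ range P.γ := by rw [hr]; exact Or.inl (Or.inr rfl)
  refine ⟨P, Or.inr har, fun i => ?_⟩
  refine Cr.of_mono (s := G i) (s' := !(G i)) (by simp) ?_
  rw [hr]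
  have e1 := m1 i
  have e2 := m2 i
  by_cases h : a ∈ (L i).K
  · simp only [if_pos h] at e1 e2
    exact e1.glueA e2 (by simp)
  · simp only [if_neg h] at e1 e2
    have := hs i h
    by_cases hc : s i = G i
    · rw [hc] at e1 e2 this
      exact e1.glueB1 this e2
    · rw [bool_ne _ _ hc] at e1 e2 this
      exact e1.glueB2 this e2

lemma IsArr.enlarge_two [Fintype ι] (hL : IsArr L) {a b : Sph} (ha : a ≠ ∞) (hb : b ≠ ∞)
    (hab : a ≠ b) {τ τ' : ι} (hτ : a ∈ (L τ).K) (hτ' : b ∈ (L τ').K)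
    (hno : ∀ i, a ∈ (L i).K → b ∉ (L i).K) :
    ∃ P : PL, a ∈ P.K ∧ b ∈ P.K ∧ ∀ i, Cr P (L i) := by
  classical
  have : Nonempty ι := ⟨τ⟩
  obtain ⟨sa, hsa⟩ := exists_sgn L a
  obtain ⟨sb, hsb⟩ := exists_sgn L b
  have hno' : ∀ i, b ∈ (L i).K → a ∉ (L i).K := fun i h h' => hno i h' h
  set Ja : Finset ι := Finset.univ.filter fun i => a ∈ (L i).K with hJadef
  have hJa : ∀ i, i ∈ Ja ↔ a ∈ (L i).K := fun i => by simp [hJadef]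
  set Jb : Finset ι := Finset.univ.filter fun i => b ∈ (L i).K with hJbdef
  have hJb : ∀ i, i ∈ Jb ↔ b ∈ (L i).K := fun i => by simp [hJbdef]
  set I : Finset ι := Finset.univ.filter fun i => a ∈ (L i).K ∨ b ∈ (L i).K ∨ sa i ≠ sb i with hIdef
  have hI : ∀ i, i ∈ I ↔ a ∈ (L i).K ∨ b ∈ (L i).K ∨ sa i ≠ sb i := fun i => by simp [hIdef]
  set ε : ι → Bool := fun i => if a ∈ (L i).K then !(sb i) else sa i with hε
  have hεa : ∀ i, a ∈ (L i).K → ε i = !(sb i) := fun i h => if_pos h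
  have hεn : ∀ i, a ∉ (L i).K → ε i = sa i := fun i h => if_neg h
  have hεb : ∀ i ∈ I, b ∉ (L i).K → (!(ε i)) = sb i := by
    intro i hi hbi
    by_cases h : a ∈ (L i).K
    · rw [hεa i h, Bool.not_not]
    · rw [hεn i h]
      have := ((hI i).1 hi).resolve_left h |>.resolve_left hbi
      exact (bool_ne _ _ this.symm).symm
  have hc1 : (cell L I ε).Nonempty := by
    refine closure_nonempty_iff.1 ⟨a, (hL.near_face ha hsa (G := sb) hτ (I := I) hJa
      ⟨b, fun i hi => hsb i (hno i ((hJa i).1 hi))⟩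
      (F := fun i => if a ∈ (L i).K then sb i else sa i) (F' := ε)
      (fun i _ => ⟨fun h => if_pos h, fun h => if_neg h⟩)
      (fun i _ => ⟨hεa i, hεn i⟩)).2⟩
  have hc2 : (cell L I fun i => !(ε i)).Nonempty := by
    refine closure_nonempty_iff.1 ⟨b, (hL.near_face hb hsb (G := sa) hτ' (I := I) hJb
      ⟨a, fun i hi => hsa i (hno' i ((hJb i).1 hi))⟩
      (F := fun i => if b ∈ (L i).K then sa i else sb i) (F' := fun i => !(ε i))
      (fun i _ => ⟨fun h => if_pos h, fun h => if_neg h⟩)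
      (fun i hi => ⟨fun h => by simp only [hεn i (hno' i h)], fun h => hεb i hi h⟩)).2⟩
  obtain ⟨i0, hi0, e, he⟩ := hL.unbdd ⟨τ, (hI τ).2 (Or.inl hτ)⟩ hc1 hc2
  obtain ⟨G, hGi, hGe, hG1, hG2⟩ := hL.end_face i0 e (ε i0)
  have hGε : ∀ i ∈ I, G i = ε i := by
    intro i hi
    by_cases h : i = i0
    · rw [h, hGi]
    · obtain ⟨t, h1, h2⟩ := ((hGe i h).and (he i hi h)).exists
      exact (L i).side_eq h1 h2
  have ga : ∀ i, a ∈ (L i).K → sb i = !(G i) := fun i h => by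
    rw [hGε i ((hI i).2 (Or.inl h)), hεa i h, Bool.not_not]
  have gb : ∀ i, b ∈ (L i).K → sa i = G i := fun i h => by
    rw [hGε i ((hI i).2 (Or.inr (Or.inl h))), hεn i (hno' i h)]
  have gc : ∀ i, a ∉ (L i).K → sa i ≠ sb i → sa i = G i := fun i h h' => by
    rw [hGε i ((hI i).2 (Or.inr (Or.inr h'))), hεn i h]
  have hGne := closure_nonempty_iff.1 ⟨_, hG1⟩
  obtain ⟨a1, a2⟩ := hL.near_face ha hsa (G := G) hτ (I := Finset.univ) hJa
    (hGne.mono (cell_mono (Finset.subset_univ _) G))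
    (F := fun i => if a ∈ (L i).K then G i else sa i)
    (F' := fun i => if a ∈ (L i).K then !(G i) else sa i)
    (fun i _ => ⟨fun h => if_pos h, fun h => if_neg h⟩)
    (fun i _ => ⟨fun h => if_pos h, fun h => if_neg h⟩)
  obtain ⟨b1, b2⟩ := hL.near_face hb hsb (G := G) hτ' (I := Finset.univ) hJb
    (hGne.mono (cell_mono (Finset.subset_univ _) G))
    (F := fun i => if b ∈ (L i).K then G i else sb i)
    (F' := fun i => if b ∈ (L i).K then !(G i) else sb i)
    (fun i _ => ⟨fun h => if_pos h, fun h => if_neg h⟩)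
    (fun i _ => ⟨fun h => if_pos h, fun h => if_neg h⟩)
  obtain ⟨O1, hO1, m1⟩ := hL.geo _ rfl hG1 a1 ha.symm
  obtain ⟨O2, hO2, m2⟩ := hL.geo _ rfl a2 b1 hab
  obtain ⟨O3, hO3, m3⟩ := hL.geo _ rfl b2 hG2 hb
  have t1 : O1 ⊆ (L τ).side (G τ) := by
    have := m1 τ; simp only [if_pos hτ] at this; exact this.2.2.2 rfl
  have t2 : O2 ⊆ (L τ).side (!(G τ)) := by
    have := m2 τ; simp only [if_pos hτ, if_neg (hno τ hτ), ga τ hτ] at this; exact this.2.2.2 rfl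
  have r2 : O2 ⊆ (L τ').side (G τ') := by
    have := m2 τ'; simp only [if_pos hτ', if_neg (hno' τ' hτ'), gb τ' hτ'] at this; exact this.2.2.2 rfl
  have r1 : O1 ⊆ (L τ').side (G τ') := by
    have := m1 τ'; simp only [if_neg (hno' τ' hτ'), gb τ' hτ'] at this; exact this.2.2.2 rfl
  have r3 : O3 ⊆ (L τ').side (!(G τ')) := by
    have := m3 τ'; simp only [if_pos hτ'] at this; exact this.2.2.2 rfl
  have har : a ∈ (L τ').side (G τ') := gb τ' hτ' ▸ hsa τ' (hno' τ' hτ')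
  have hbr : b ∈ (L τ).side (!(G τ)) := ga τ hτ ▸ hsb τ (hno τ hτ)
  have hO12 : OArc ∞ b (O1 ∪ {a} ∪ O2) := hO1.glue hO2
    (disjoint_left.2 fun z hz hz' => (L τ).not_both (t1 hz) (t2 hz'))
    (fun h => (L τ).not_K (t2 h) (L τ).inf_mem) (fun h => (L τ).not_both (t1 h) hbr) hb.symm
  have hd : Disjoint (O1 ∪ {a} ∪ O2) O3 := by
    rw [disjoint_left]
    rintro z ((hz | hz) | hz) hz'
    · exact (L τ').not_both (r1 hz) (r3 hz')
    · rw [mem_singleton_iff.1 hz] at hz'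
      exact (L τ').not_both har (r3 hz')
    · exact (L τ').not_both (r2 hz) (r3 hz')
  obtain ⟨γ, hγ, hr⟩ := exists_circle hO12 hO3 hd
  obtain ⟨P, rfl⟩ := hγ.exists_PL
  have har' : a ∈ range P.γ := by rw [hr]; exact Or.inl (Or.inl (Or.inl (Or.inr rfl)))
  have hbr' : b ∈ range P.γ := by rw [hr]; exact Or.inl (Or.inr rfl)
  refine ⟨P, Or.inr har', Or.inr hbr', fun i => ?_⟩
  refine Cr.of_mono (s := G i) (s' := !(G i)) (by simp) ?_
  rw [hr]
  have e1 := m1 i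
  have e2 := m2 i
  have e3 := m3 i
  by_cases h : a ∈ (L i).K
  · have hbi := hno i h
    have hb' := hsb i hbi
    simp only [if_pos h, if_neg hbi, ga i h] at e1 e2 e3 hb'
    exact (e1.glueA e2 (by simp)).glueB2 hb' e3
  · have ha' := hsa i h
    by_cases hbi : b ∈ (L i).K
    · simp only [if_neg h, if_pos hbi, gb i hbi] at e1 e2 e3 ha'
      exact (e1.glueB1 ha' e2).glueA e3 (by simp)
    · have hb' := hsb i hbi
      simp only [if_neg h, if_neg hbi] at e1 e2 e3
      have h12 : Mono (O1 ∪ {a} ∪ O2) (L i) (G i) (sb i) := by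
        by_cases hc : sa i = sb i
        · rw [hc] at e1 e2 ha'
          exact e1.glueB2 ha' e2
        · rw [gc i h hc] at e1 e2 ha'
          exact e1.glueB1 ha' e2
      by_cases hc : sb i = G i
      · rw [hc] at h12 e3 hb'
        exact h12.glueB1 hb' e3
      · rw [bool_ne _ _ hc] at h12 e3 hb'
        exact h12.glueB2 hb' e3

end
end Levi

namespace Levi
open Filter OnePoint

/-! ### Moving points inside an open connected set -/

lemma exists_push (c w : ℂ) {r : ℝ} (hr : 0 < r) (hw : ‖w - c‖ < r) :
    ∃ h : ℂ ≃ₜ ℂ, h c = w ∧ ∀ z, z ∉ Metric.ball c r → h z = z := by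
  set φ : ℂ → ℝ := fun z => max 0 (1 - ‖z - c‖ / r) with hφ
  set f : ℂ → ℂ := fun z => z + (φ z : ℂ) * (w - c) with hf
  have hk0 : 0 ≤ ‖w - c‖ / r := by positivity
  set k : NNReal := ⟨‖w - c‖ / r, hk0⟩ with hk
  have hlip : ∀ x y, |φ x - φ y| ≤ ‖x - y‖ / r := by
    intro x y
    have h1 : |φ x - φ y| ≤ |(1 - ‖x - c‖ / r) - (1 - ‖y - c‖ / r)| := by
      have := abs_max_sub_max_le_abs (1 - ‖x - c‖ / r) (1 - ‖y - c‖ / r) 0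
      simp only [hφ, max_comm (0:ℝ)]
      exact this
    have h2 : (1 - ‖x - c‖ / r) - (1 - ‖y - c‖ / r) = - ((‖x - c‖ - ‖y - c‖) / r) := by ring
    rw [h2, abs_neg, abs_div, abs_of_pos hr] at h1
    refine h1.trans ?_
    gcongr
    have := abs_norm_sub_norm_le (x - c) (y - c)
    simpa using this
  have happ : ApproximatesLinearOn f ((ContinuousLinearEquiv.refl ℝ ℂ : ℂ ≃L[ℝ] ℂ) : ℂ →L[ℝ] ℂ) univ k := by
    intro x _ y _
    have e : f x - f y - ((ContinuousLinearEquiv.refl ℝ ℂ : ℂ ≃L[ℝ] ℂ) : ℂ →L[ℝ] ℂ) (x - y)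
        = ((φ x - φ y : ℝ) : ℂ) * (w - c) := by
      simp [hf]; ring
    rw [e, norm_mul, Complex.norm_real, Real.norm_eq_abs]
    calc |φ x - φ y| * ‖w - c‖ ≤ (‖x - y‖ / r) * ‖w - c‖ := by gcongr; exact hlip x y
      _ = (k : ℝ) * ‖x - y‖ := by change _ = (‖w - c‖ / r) * ‖x - y‖; ring
  have hc : k < ‖(((ContinuousLinearEquiv.refl ℝ ℂ : ℂ ≃L[ℝ] ℂ).symm : ℂ →L[ℝ] ℂ))‖₊⁻¹ := by
    have : ‖(((ContinuousLinearEquiv.refl ℝ ℂ : ℂ ≃L[ℝ] ℂ).symm : ℂ →L[ℝ] ℂ))‖₊ = 1 :=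
      ContinuousLinearMap.nnnorm_id
    rw [this, inv_one, ← NNReal.coe_lt_coe]
    change ‖w - c‖ / r < 1
    rwa [div_lt_one hr]
  refine ⟨happ.toHomeomorph f (Or.inr hc), ?_, ?_⟩
  · change f c = w
    simp [hf, hφ]
  · intro z hz
    change f z = z
    have h1 : r ≤ ‖z - c‖ := by
      rw [Metric.mem_ball, dist_eq_norm] at hz; exact not_lt.1 hz
    have h2 : φ z = 0 := by
      have : 1 ≤ ‖z - c‖ / r := by rwa [le_div_iff₀ hr, one_mul]
      exact max_eq_left (by linarith)
    simp [hf, h2]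

lemma exists_move {F : Set Sph} (hF : IsOpen F) (hp : IsPreconnected F) (hi : ∞ ∉ F) {x y : Sph}
    (hx : x ∈ F) (hy : y ∈ F) : ∃ h : Sph ≃ₜ Sph, h x = y ∧ ∀ z, z ∉ F → h z = z := by
  set R : Sph → Sph → Prop := fun x y => ∃ h : Sph ≃ₜ Sph, h x = y ∧ ∀ z, z ∉ F → h z = z with hR
  have hsymm : ∀ {x y}, R x y → R y x := by
    rintro x y ⟨h, h1, h2⟩
    exact ⟨h.symm, by rw [← h1]; simp, fun z hz => by
      have := h2 z hz
      rw [Homeomorph.symm_apply_eq, this]⟩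
  have htrans : ∀ {x y z}, R x y → R y z → R x z := by
    rintro x y z ⟨h, h1, h2⟩ ⟨g, g1, g2⟩
    exact ⟨h.trans g, by simp [h1, g1], fun w hw => by simp [h2 w hw, g2 w hw]⟩
  have hloc : ∀ p ∈ F, ∃ N, IsOpen N ∧ p ∈ N ∧ ∀ q ∈ N, R p q := by
    intro p hpF
    obtain ⟨c, rfl⟩ : ∃ c : ℂ, p = c := exists_coe (K := Fᶜ) hi (by simpa using hpF)
    have hpre : IsOpen ((↑) ⁻¹' F : Set ℂ) := hF.preimage continuous_coe
    obtain ⟨r, hr, hball⟩ := Metric.isOpen_iff.1 hpre c hpF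
    refine ⟨(↑) '' Metric.ball c r, (isOpenEmbedding_coe.isOpen_iff_image_isOpen).1 Metric.isOpen_ball,
      ⟨c, Metric.mem_ball_self hr, rfl⟩, ?_⟩
    rintro _ ⟨w, hw, rfl⟩
    obtain ⟨h, h1, h2⟩ := exists_push c w hr (by rwa [Metric.mem_ball, dist_eq_norm] at hw)
    refine ⟨h.onePointCongr, ?_, ?_⟩
    · change ((h c : ℂ) : Sph) = w
      rw [h1]
    · intro z hz
      induction z using OnePoint.rec with
      | infty => rfl
      | coe z =>
        change ((h z : ℂ) : Sph) = z
        rw [h2 z fun hz' => hz (hball hz')]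
  by_contra hno
  have hO1 : IsOpen {z | z ∈ F ∧ R x z} := by
    rw [isOpen_iff_mem_nhds]
    rintro p ⟨hpF, hxp⟩
    obtain ⟨N, hN, hpN, hq⟩ := hloc p hpF
    filter_upwards [hN.mem_nhds hpN, hF.mem_nhds hpF] with q hqN hqF
    exact ⟨hqF, htrans hxp (hq q hqN)⟩
  have hO2 : IsOpen {z | z ∈ F ∧ ¬ R x z} := by
    rw [isOpen_iff_mem_nhds]
    rintro p ⟨hpF, hxp⟩
    obtain ⟨N, hN, hpN, hq⟩ := hloc p hpF
    filter_upwards [hN.mem_nhds hpN, hF.mem_nhds hpF] with q hqN hqF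
    exact ⟨hqF, fun h => hxp (htrans h (hsymm (hq q hqN)))⟩
  obtain ⟨z, -, h1, h2⟩ := hp _ _ hO1 hO2 (fun z hz => by
    by_cases h : R x z
    · exact Or.inl ⟨hz, h⟩
    · exact Or.inr ⟨hz, h⟩) ⟨x, hx, hx, ⟨Homeomorph.refl _, rfl, fun _ _ => rfl⟩⟩ ⟨y, hy, hy, hno⟩
  exact h2.2 h1.2

section
variable {ι : Type} {L : ι → PL}

/-- A new pseudoline through an arbitrary point. -/
lemma IsArr.through [Fintype ι] [Nonempty ι] (hL : IsArr L) {a : Sph} (ha : a ≠ ∞) :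
    ∃ P : PL, a ∈ P.K ∧ ∀ i, Cr P (L i) := by
  classical
  by_cases hτ : ∃ τ, a ∈ (L τ).K
  · obtain ⟨τ, hτ⟩ := hτ
    exact hL.enlarge_one ha hτ
  push Not at hτ
  obtain ⟨s, hs'⟩ := exists_sgn L a
  have hs : ∀ i, a ∈ (L i).side (s i) := fun i => hs' i (hτ i)
  set F := cell L Finset.univ s with hF
  have haF : a ∈ F := fun i _ => hs i
  set Z : Set Sph := {z | ∃ i j, i ≠ j ∧ z ∈ (L i).K ∧ z ∈ (L j).K} ∪ {∞} with hZ
  have hZf : Z.Finite := hL.vert_finite.union (by simp)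
  have hM : IsPreconnected ({∞}ᶜ \ Z : Set Sph) :=
    punct_finite isOpen_compl_singleton plane_pre (by simp) hZf
  have hinf : (∞ : Sph) ∈ Z := Or.inr rfl
  have i0 : ι := Classical.arbitrary ι
  obtain ⟨q, ⟨hqi, hqZ⟩, hq1, hq2⟩ := exists_frontier hM (cell_open (L := L) Finset.univ s) (by
    obtain ⟨x, h1, h2⟩ := open_diff_finite (cell_open Finset.univ s) ⟨a, haF⟩ hZf
    exact ⟨x, ⟨fun h => h2 ((mem_singleton_iff.1 h) ▸ hinf), h2⟩, h1⟩) (by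
    obtain ⟨x, h1, h2⟩ := open_diff_finite ((L i0).side_open (!(s i0))) ((L i0).side_ne _) hZf
    exact ⟨x, ⟨fun h => h2 ((mem_singleton_iff.1 h) ▸ hinf), h2⟩,
      fun h => (L i0).cl_side (cl_cell_side h (Finset.mem_univ _)) h1⟩)
  obtain ⟨i, hqs⟩ : ∃ i, q ∉ (L i).side (s i) := by
    by_contra h; push Not at h; exact hq2 fun i _ => h i
  have hqK : q ∈ (L i).K := by
    by_contra h
    exact (L i).cl_side (cl_cell_side hq1 (Finset.mem_univ i)) ((L i).mem_not h hqs)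
  have hqj : ∀ j, j ≠ i → q ∈ (L j).side (s j) := by
    intro j hji
    have : q ∉ (L j).K := fun h => hqZ (Or.inl ⟨j, i, hji, h, hqK⟩)
    by_contra h
    exact (L j).cl_side (cl_cell_side hq1 (Finset.mem_univ j)) ((L j).mem_not this h)
  obtain ⟨P, hqP, hP⟩ := hL.enlarge_one hqi hqK
  obtain ⟨t0, rfl⟩ := hqP.resolve_left hqi
  have hN : IsOpen (P.γ ⁻¹' cell L (Finset.univ.erase i) s) :=
    (cell_open _ _).preimage P.curve.cont
  obtain ⟨r, hr, hball⟩ := Metric.isOpen_iff.1 hN t0 (fun j hj => hqj j (Finset.ne_of_mem_erase hj))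
  have hnear : ∀ t, |t - t0| < r → P.γ t ∈ (L i).side (s i) → P.γ t ∈ F := by
    intro t ht hti j _
    by_cases hj : j = i
    · rw [hj]; exact hti
    · exact hball (by rwa [Metric.mem_ball, Real.dist_eq] : t ∈ Metric.ball t0 r) j (by simp [hj])
  obtain ⟨a', ha'P, ha'F⟩ : ∃ a', a' ∈ P.K ∧ a' ∈ F := by
    obtain ⟨t, b, h1, h2, h3⟩ := hP i
    have ht : t0 = t := by
      rcases lt_trichotomy t0 t with h | h | h
      · exact absurd hqK ((L i).not_K (h1 t0 h))
      · exact h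
      · exact absurd hqK ((L i).not_K (h3 t0 h))
    subst ht
    by_cases hb : s i = b
    · refine ⟨_, P.γ_mem (t0 - r / 2), hnear _ ?_ (hb ▸ h1 _ (by linarith))⟩
      rw [abs_lt]; constructor <;> linarith
    · refine ⟨_, P.γ_mem (t0 + r / 2), hnear _ ?_ (bool_ne _ _ hb ▸ h3 _ (by linarith))⟩
      rw [abs_lt]; constructor <;> linarith
  obtain ⟨h, h1, h2⟩ := exists_move (cell_open _ _) (hL.cell_pre Finset.univ Finset.univ_nonempty s)
    (inf_not_cell Finset.univ_nonempty s) ha'F haF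
  have hinf' : h ∞ = ∞ := h2 _ (inf_not_cell Finset.univ_nonempty s)
  have hFF : ∀ z, h z ∈ F ↔ z ∈ F := by
    have key : ∀ z, h z ∈ F → z ∈ F := fun z hz => by
      by_contra hzF
      rw [h2 z hzF] at hz; exact hzF hz
    refine fun z => ⟨key z, fun hz => ?_⟩
    by_contra hzF
    have := h2 _ hzF
    have := h.injective this
    rw [this] at hzF; exact hzF hz
  have hside : ∀ j b z, z ∈ (L j).side b → h z ∈ (L j).side b := by
    intro j b z hz
    by_cases hzF : z ∈ F
    · have e : b = s j := (L j).side_eq hz (hzF j (Finset.mem_univ j))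
      rw [e]; exact (hFF z).2 hzF j (Finset.mem_univ j)
    · rw [h2 z hzF]; exact hz
  have hK : ∀ j z, z ∈ (L j).K → h z ∈ (L j).K := by
    intro j z hz
    rw [h2 z fun hzF => (L j).not_K (hzF j (Finset.mem_univ j)) hz]
    exact hz
  have hc : IsCurve (fun t => h (P.γ t)) := by
    refine ⟨h.continuous.comp P.curve.cont, h.injective.comp P.curve.inj, fun t e => ?_, ?_, ?_⟩
    · rw [← hinf'] at e
      exact P.curve.ne_inf t (h.injective e)
    · have := (h.continuous.tendsto ∞).comp P.curve.top
      rwa [hinf'] at this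
    · have := (h.continuous.tendsto ∞).comp P.curve.bot
      rwa [hinf'] at this
  obtain ⟨Q, hQ⟩ := hc.exists_PL
  refine ⟨Q, ?_, fun j => ?_⟩
  · obtain ⟨t, ht⟩ := ha'P.resolve_left (fun e => inf_not_cell Finset.univ_nonempty s (e ▸ ha'F))
    have : Q.γ t = a := by rw [hQ, ← h1, ← ht]
    exact this ▸ Q.γ_mem t
  · obtain ⟨t, b, k1, k2, k3⟩ := hP j
    refine ⟨t, b, fun r hr => ?_, ?_, fun r hr => ?_⟩
    · rw [hQ]; exact hside _ _ _ (k1 r hr)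
    · rw [hQ]; exact hK _ _ k2
    · rw [hQ]; exact hside _ _ _ (k3 r hr)

/-- Adding a curve to an arrangement. -/
def extL (L : ι → PL) (P : PL) : Option ι → PL
  | Option.none => P
  | Option.some i => L i

lemma IsArr.ext (hL : IsArr L) {P : PL} (hP : ∀ i, Cr P (L i)) : IsArr (extL L P) := by
  rw [isArr_iff]
  rintro (_ | i) (_ | j) hij
  · exact absurd rfl hij
  · exact hP j
  · exact (hP i).symm
  · exact hL i j fun h => hij (by rw [h])

lemma IsArr.enl1 [Fintype ι] (hL : IsArr L) {a b : Sph} (ha : a ≠ ∞) (hb : b ≠ ∞)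
    (hab : a ≠ b) {τ : ι} (hτ : a ∈ (L τ).K) (hno : ∀ i, a ∈ (L i).K → b ∉ (L i).K) :
    ∃ P : PL, a ∈ P.K ∧ b ∈ P.K ∧ ∀ i, Cr P (L i) := by
  by_cases hτ' : ∃ τ', b ∈ (L τ').K
  · obtain ⟨τ', hτ'⟩ := hτ'
    exact hL.enlarge_two ha hb hab hτ hτ' hno
  have : Nonempty ι := ⟨τ⟩
  obtain ⟨P, hbP, hP⟩ := hL.through hb
  by_cases haP : a ∈ P.K
  · exact ⟨P, haP, hbP, hP⟩
  obtain ⟨Q, h1, h2, h3⟩ := (hL.ext hP).enlarge_two ha hb hab (τ := Option.some τ) (τ' := Option.none) hτ hbP (by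
    rintro (_ | i) h
    · exact absurd h haP
    · exact hno i h)
  exact ⟨Q, h1, h2, fun i => h3 (Option.some i)⟩

lemma IsArr.enl [Fintype ι] (hL : IsArr L) {a b : Sph} (ha : a ≠ ∞) (hb : b ≠ ∞)
    (hab : a ≠ b) (hno : ∀ i, a ∈ (L i).K → b ∉ (L i).K) :
    ∃ P : PL, a ∈ P.K ∧ b ∈ P.K ∧ ∀ i, Cr P (L i) := by
  rcases isEmpty_or_nonempty ι with hι | hι
  · obtain ⟨x, rfl⟩ : ∃ x : ℂ, a = x := exists_coe (K := {∞}) rfl ha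
    obtain ⟨y, rfl⟩ : ∃ y : ℂ, b = y := exists_coe (K := {∞}) rfl hb
    have hxy : y - x ≠ 0 := sub_ne_zero.2 fun h => hab (by rw [h])
    have hten : ∀ l : Filter ℝ, Tendsto (fun t : ℝ => |t|) l atTop →
        Tendsto (fun t : ℝ => ((x + t * (y - x) : ℂ) : Sph)) l (𝓝 ∞) := by
      intro l hl
      have h1 : Tendsto (fun t : ℝ => (x + t * (y - x) : ℂ)) l (Bornology.cobounded ℂ) := by
        rw [← tendsto_norm_atTop_iff_cobounded]
        have h2 : Tendsto (fun t : ℝ => |t| * ‖y - x‖ - ‖x‖) l atTop :=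
          tendsto_atTop_add_const_right _ _ (hl.atTop_mul_const (norm_pos_iff.2 hxy))
        refine tendsto_atTop_mono (fun t => ?_) h2
        have h3 : ‖(t : ℂ) * (y - x)‖ ≤ ‖x + t * (y - x)‖ + ‖x‖ := by
          have := norm_sub_le (x + t * (y - x)) x
          simpa using this
        rw [norm_mul, Complex.norm_real, Real.norm_eq_abs] at h3
        linarith
      rw [Metric.cobounded_eq_cocompact, ← Filter.coclosedCompact_eq_cocompact] at h1
      exact OnePoint.tendsto_coe_infty.comp h1
    have hc : IsCurve (fun t : ℝ => ((x + t * (y - x) : ℂ) : Sph)) := by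
      refine ⟨continuous_coe.comp (by fun_prop), ?_, fun t => OnePoint.coe_ne_infty _,
        hten _ tendsto_abs_atTop_atTop, hten _ tendsto_abs_atBot_atTop⟩
      intro s t h
      have h1 := OnePoint.coe_injective h
      have h2 := mul_right_cancel₀ hxy (add_left_cancel h1)
      exact_mod_cast h2
    obtain ⟨P, hP⟩ := hc.exists_PL
    refine ⟨P, Or.inr ⟨0, by rw [hP]; simp⟩, Or.inr ⟨1, by rw [hP]; simp⟩, fun i => isEmptyElim i⟩
  · by_cases hτ : ∃ τ, a ∈ (L τ).K
    · obtain ⟨τ, hτ⟩ := hτ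
      exact hL.enl1 ha hb hab hτ hno
    push Not at hτ
    obtain ⟨P, haP, hP⟩ := hL.through ha
    by_cases hbP : b ∈ P.K
    · exact ⟨P, haP, hbP, hP⟩
    obtain ⟨Q, h1, h2, h3⟩ := (hL.ext hP).enl1 ha hb hab (τ := Option.none) haP (by
      rintro (_ | i) h
      · exact hbP
      · exact hno i h)
    exact ⟨Q, h1, h2, fun i => h3 (Option.some i)⟩

end
end Levi

namespace Levi
open Filter OnePoint

/-! ### Transfer to the plane -/

/-- The plane identified with the complex numbers. -/
def planeC : Plane ≃ₜ ℂ := (Complex.orthonormalBasisOneI.repr.toHomeomorph).symm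

/-- The embedding of the plane in the sphere. -/
def emb (x : Plane) : Sph := ((planeC x : ℂ) : Sph)

lemma emb_open : IsOpenEmbedding emb :=
  (OnePoint.isOpenEmbedding_coe).comp planeC.isOpenEmbedding

lemma emb_ne (x : Plane) : emb x ≠ ∞ := OnePoint.coe_ne_infty _

lemma exists_emb {z : Sph} (h : z ≠ ∞) : ∃ x, emb x = z := by
  obtain ⟨w, rfl⟩ := exists_coe (K := {∞}) rfl h
  exact ⟨planeC.symm w, by simp [emb]⟩

lemma emb_tendsto : Tendsto emb (cocompact Plane) (𝓝 ∞) := by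
  have h1 : Tendsto planeC (cocompact Plane) (cocompact ℂ) :=
    planeC.isClosedEmbedding.tendsto_cocompact
  rw [← Filter.coclosedCompact_eq_cocompact (X := ℂ)] at h1
  exact OnePoint.tendsto_coe_infty.comp h1

/-- `P` represents `σ`. -/
def Rep (σ : Set Plane) (P : PL) : Prop := ∀ x, emb x ∈ P.K ↔ x ∈ σ

lemma exists_rep {σ : Set Plane} (h : IsPseudoline σ) : ∃ P : PL, Rep σ P := by
  obtain ⟨hc, ⟨e⟩, -⟩ := h
  have hce : IsClosedEmbedding (fun t : ℝ => ((e.symm t : σ) : Plane)) :=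
    hc.isClosedEmbedding_subtypeVal.comp e.symm.isClosedEmbedding
  have ht := emb_tendsto.comp hce.tendsto_cocompact
  have hcur : IsCurve (fun t : ℝ => emb (e.symm t : σ)) :=
    ⟨emb_open.continuous.comp hce.continuous, emb_open.injective.comp hce.injective,
      fun t => emb_ne _, ht.mono_left atTop_le_cocompact, ht.mono_left atBot_le_cocompact⟩
  obtain ⟨P, hP⟩ := hcur.exists_PL
  refine ⟨P, fun x => ⟨?_, fun hx => ?_⟩⟩
  · rintro (h | ⟨t, h⟩)
    · exact absurd h (emb_ne x)
    · rw [hP] at h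
      have := emb_open.injective h
      rw [← this]
      exact (e.symm t).2
  · refine Or.inr ⟨e ⟨x, hx⟩, ?_⟩
    rw [hP]; simp

lemma cr_of_crosses {σ τ : Set Plane} {P Q : PL} (hP : Rep σ P) (hQ : Rep τ Q) {p : Plane}
    (hp : σ ∩ τ = {p}) (hc : CrossesAt σ τ p) : Cr Q P := by
  obtain ⟨hpσ, hpτ, hV⟩ := hc
  obtain ⟨V, hV, -, C₁, C₂, hu, -, h1, h2, ⟨x, hxτ, hx⟩, ⟨y, hyτ, hy⟩⟩ := hV univ univ_mem
  have hVn : emb '' V ∈ 𝓝 (emb p) := emb_open.image_mem_nhds.2 hV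
  have hdis : ∀ C : Set Plane, C ⊆ V \ σ → Disjoint (emb '' C) P.K := by
    intro C hC
    rw [disjoint_left]
    rintro _ ⟨z, hz, rfl⟩ hk
    exact (hC hz).2 ((hP z).1 hk)
  have d1 := hdis C₁ (hu ▸ subset_union_left)
  have d2 := hdis C₂ (hu ▸ subset_union_right)
  have p1 : IsPreconnected (emb '' C₁) := h1.image _ emb_open.continuous.continuousOn
  have p2 : IsPreconnected (emb '' C₂) := h2.image _ emb_open.continuous.continuousOn
  obtain ⟨b, hb⟩ := P.exists_side (disjoint_left.1 d1 (mem_image_of_mem _ hx))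
  obtain ⟨c, hc⟩ := P.exists_side (disjoint_left.1 d2 (mem_image_of_mem _ hy))
  have s1 := P.side_of_pre p1 d1 (mem_image_of_mem _ hx) hb
  have s2 := P.side_of_pre p2 d2 (mem_image_of_mem _ hy) hc
  have hbc : b ≠ c := by
    rintro rfl
    obtain ⟨_, ⟨w, hw, rfl⟩, hw'⟩ := mem_closure_iff_nhds.1 (P.K_cl ((hP p).2 hpσ) (!b)) _ hVn
    have : w ∈ V \ σ := ⟨hw, fun h => P.not_K hw' ((hP w).2 h)⟩
    rw [hu] at this
    rcases this with h | h
    · exact P.not_both (s1 (mem_image_of_mem _ h)) hw'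
    · exact P.not_both (s2 (mem_image_of_mem _ h)) hw'
  have hr : ∀ z ∈ τ, emb z ∈ range Q.γ := fun z hz => ((hQ z).2 hz).resolve_left (emb_ne z)
  refine Cr.of_mono hbc ⟨⟨emb x, hr x hxτ, hb⟩, ⟨emb y, hr y hyτ, hc⟩, ?_, fun h => absurd h hbc⟩
  have hs : ∀ z ∈ range Q.γ ∩ P.K, z = emb p := by
    rintro z ⟨⟨t, rfl⟩, hz⟩
    obtain ⟨w, hw⟩ := exists_emb (Q.curve.ne_inf t)
    rw [← hw] at hz ⊢
    have : w ∈ σ ∩ τ := ⟨(hP w).1 hz, (hQ w).1 (hw ▸ Q.γ_mem t)⟩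
    rw [hp] at this
    rw [mem_singleton_iff.1 this]
  exact fun z hz z' hz' => (hs z hz).trans (hs z' hz').symm

lemma isPseudoline (P : PL) : IsPseudoline (emb ⁻¹' P.K) := by
  refine ⟨P.K_closed.preimage emb_open.continuous, ?_, ?_⟩
  · have hg : ∀ t, ∃ x, emb x = P.γ t := fun t => exists_emb (P.curve.ne_inf t)
    choose g hg using hg
    have hemb : IsEmbedding P.γ := by
      refine ⟨isInducing_iff_nhds.2 fun t => ?_, P.curve.inj⟩
      refine le_antisymm P.curve.cont.continuousAt.le_comap ?_
      intro N hN
      obtain ⟨l, u, ⟨hl, hu⟩, hlu⟩ := mem_nhds_iff_exists_Ioo_subset.1 hN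
      refine ⟨(insert ∞ (P.γ '' Iic l) ∪ insert ∞ (P.γ '' Ici u))ᶜ, ?_, ?_⟩
      · refine ((P.curve.closed_down l).union (P.curve.closed_up u)).isOpen_compl.mem_nhds ?_
        rintro ((h | ⟨s, hs, h⟩) | (h | ⟨s, hs, h⟩))
        · exact P.curve.ne_inf _ h
        · rw [P.curve.inj h] at hs; exact absurd hl (not_lt.2 hs)
        · exact P.curve.ne_inf _ h
        · rw [P.curve.inj h] at hs; exact absurd hu (not_lt.2 hs)
      · intro s hs
        refine hlu ⟨?_, ?_⟩
        · by_contra h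
          exact hs (Or.inl (Or.inr ⟨s, not_lt.1 h, rfl⟩))
        · by_contra h
          exact hs (Or.inr (Or.inr ⟨s, not_lt.1 h, rfl⟩))
    have hge : IsEmbedding g := by
      have : emb ∘ g = P.γ := funext hg
      rw [← this] at hemb
      exact (emb_open.isEmbedding.of_comp_iff).1 hemb
    have hrg : range g = emb ⁻¹' P.K := by
      ext x
      constructor
      · rintro ⟨t, rfl⟩
        rw [mem_preimage, hg]; exact P.γ_mem t
      · intro hx
        obtain ⟨t, ht⟩ := hx.resolve_left (emb_ne x)
        exact ⟨t, emb_open.injective ((hg t).trans ht)⟩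
    rw [← hrg]
    exact ⟨hge.toHomeomorph.symm⟩
  · intro h
    have := h.image emb emb_open.continuous.continuousOn
    refine P.curve.not_pre ?_
    convert this using 1
    ext z
    constructor
    · intro hz
      obtain ⟨x, rfl⟩ := exists_emb (z := z) fun e => hz (Or.inl e)
      exact ⟨x, hz, rfl⟩
    · rintro ⟨x, hx, rfl⟩
      exact hx

lemma crosses_of_cr {σ τ : Set Plane} {P Q : PL} (hP : Rep σ P) (hQ : Rep τ Q)
    (h : Cr Q P) : ∃ p, σ ∩ τ = {p} ∧ CrossesAt σ τ p := by
  obtain ⟨t, b, k1, k2, k3⟩ := h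
  obtain ⟨p, hp⟩ := exists_emb (Q.curve.ne_inf t)
  have hpσ : p ∈ σ := (hP p).1 (hp ▸ k2)
  have hpτ : p ∈ τ := (hQ p).1 (hp ▸ Q.γ_mem t)
  refine ⟨p, ?_, hpσ, hpτ, ?_⟩
  · ext x
    constructor
    · rintro ⟨h1, h2⟩
      have h1 := (hP x).2 h1
      obtain ⟨s, hs⟩ := ((hQ x).2 h2).resolve_left (emb_ne x)
      rcases lt_trichotomy s t with h | rfl | h
      · exact absurd h1 (hs ▸ P.not_K (k1 s h))
      · exact emb_open.injective (hs.symm.trans hp.symm)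
      · exact absurd h1 (hs ▸ P.not_K (k3 s h))
    · rintro rfl; exact ⟨hpσ, hpτ⟩
  intro U hU
  have hUn : emb '' U ∈ 𝓝 (emb p) := emb_open.image_mem_nhds.2 hU
  have hA : IsArr (fun _ : Unit => P) := fun i j hij => absurd (Subsingleton.elim i j) hij
  have hcell : ∀ c : Bool, cell (fun _ : Unit => P) Finset.univ (fun _ => c) = P.side c := by
    intro c; ext z; simp [cell]
  have LC : ∀ c : Bool, ∃ V ∈ 𝓝 (emb p), V ⊆ emb '' U ∧ ∀ x ∈ V ∩ P.side c, ∀ y ∈ V ∩ P.side c,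
      Conn (emb '' U ∩ P.side c) x y := by
    intro c
    have := hA.LC Finset.univ (fun _ => c) (emb p) _ hUn
    rwa [hcell] at this
  obtain ⟨V₁, n1, u1, c1⟩ := LC b
  obtain ⟨V₂, n2, u2, c2⟩ := LC (!b)
  have hct : Tendsto Q.γ (𝓝 t) (𝓝 (emb p)) := hp ▸ Q.curve.cont.continuousAt
  obtain ⟨r, hr, hrt⟩ : ∃ r, Q.γ r ∈ V₁ ∧ r < t := by
    have h1 : ∀ᶠ r in 𝓝[<] t, Q.γ r ∈ V₁ := (hct.mono_left nhdsWithin_le_nhds).eventually n1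
    exact (h1.and self_mem_nhdsWithin).exists
  obtain ⟨q, hq, hqt⟩ : ∃ r, Q.γ r ∈ V₂ ∧ t < r := by
    have h1 : ∀ᶠ r in 𝓝[>] t, Q.γ r ∈ V₂ := (hct.mono_left nhdsWithin_le_nhds).eventually n2
    exact (h1.and self_mem_nhdsWithin).exists
  have hr' := k1 r hrt
  have hq' := k3 q hqt
  set W₁ := connectedComponentIn (emb '' U ∩ P.side b) (Q.γ r) with hW1
  set W₂ := connectedComponentIn (emb '' U ∩ P.side (!b)) (Q.γ q) with hW2
  have w1 : W₁ ⊆ emb '' U ∩ P.side b := connectedComponentIn_subset _ _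
  have w2 : W₂ ⊆ emb '' U ∩ P.side (!b) := connectedComponentIn_subset _ _
  have m1' : Q.γ r ∈ emb '' U ∩ P.side b := ⟨u1 hr, hr'⟩
  have m2' : Q.γ q ∈ emb '' U ∩ P.side (!b) := ⟨u2 hq, hq'⟩
  have m1 : Q.γ r ∈ W₁ := mem_connectedComponentIn ⟨u1 hr, hr'⟩
  have m2 : Q.γ q ∈ W₂ := mem_connectedComponentIn ⟨u2 hq, hq'⟩
  have hpre : ∀ W : Set Sph, W ⊆ emb '' U → IsPreconnected W → IsPreconnected (emb ⁻¹' W) := by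
    intro W hW hc
    rw [← emb_open.isInducing.isPreconnected_image, image_preimage_eq_of_subset
      (hW.trans (image_subset_range _ _))]
    exact hc
  obtain ⟨xr, hxr⟩ := exists_emb (Q.curve.ne_inf r)
  obtain ⟨xq, hxq⟩ := exists_emb (Q.curve.ne_inf q)
  refine ⟨emb ⁻¹' (W₁ ∪ W₂ ∪ (emb '' U ∩ P.K)), ?_, ?_, emb ⁻¹' W₁, emb ⁻¹' W₂, ?_, ?_,
    hpre _ (fun z hz => (w1 hz).1) isPreconnected_connectedComponentIn,
    hpre _ (fun z hz => (w2 hz).1) isPreconnected_connectedComponentIn,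
    ⟨xr, (hQ xr).1 (hxr ▸ Q.γ_mem r), ?_⟩, ⟨xq, (hQ xq).1 (hxq ▸ Q.γ_mem q), ?_⟩⟩
  · refine emb_open.continuous.continuousAt.preimage_mem_nhds ?_
    filter_upwards [n1, n2] with z z1 z2
    by_cases hz : z ∈ P.K
    · exact Or.inr ⟨u1 z1, hz⟩
    rcases P.mem_side hz b with h | h
    · exact Or.inl (Or.inl ((conn_iff_mem m1').1 (c1 _ ⟨hr, hr'⟩ _ ⟨z1, h⟩)))
    · exact Or.inl (Or.inr ((conn_iff_mem m2').1 (c2 _ ⟨hq, hq'⟩ _ ⟨z2, h⟩)))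
  · intro x hx
    have : emb x ∈ emb '' U := by
      rcases hx with (h | h) | h
      · exact (w1 h).1
      · exact (w2 h).1
      · exact h.1
    exact (emb_open.injective.mem_set_image).1 this
  · ext x
    constructor
    · rintro ⟨h | h, hx⟩
      · exact h
      · exact absurd ((hP x).1 h.2) hx
    · intro h
      refine ⟨Or.inl h, fun hx => ?_⟩
      have hx := (hP x).2 hx
      rcases h with h | h
      · exact P.not_K (w1 h).2 hx
      · exact P.not_K (w2 h).2 hx
  · rw [disjoint_left]
    intro x h1 h2
    exact P.not_both (w1 h1).2 (w2 h2).2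
  · rw [mem_preimage, hxr]; exact m1
  · rw [mem_preimage, hxq]; exact m2

lemma pair_of_cr {σ τ : Set Plane} {P Q : PL} (hP : Rep σ P) (hQ : Rep τ Q)
    (h : Cr P Q) : ∃ p, σ ∩ τ = {p} ∧ CrossesAt σ τ p ∧ CrossesAt τ σ p := by
  obtain ⟨p, h1, h2⟩ := crosses_of_cr hP hQ h.symm
  obtain ⟨q, h3, h4⟩ := crosses_of_cr hQ hP h
  have : p = q := by
    have : ({p} : Set Plane) = {q} := by rw [← h1, ← h3, inter_comm]
    exact singleton_injective this
  subst this
  exact ⟨p, h1, h2, h4⟩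

end Levi

open scoped Classical in
/-- **Levi's Enlargement Lemma.** Given an arrangement of pseudolines `A` and two
distinct points `a`, `b` of the plane not both on any pseudoline of `A`, there is a
pseudoline through `a` and `b` extending `A` to an arrangement of pseudolines. -/
theorem levi_enlargement (A : Finset (Set Plane)) (hA : IsArrangement A)
    (a b : Plane) (hab : a ≠ b) (h : ∀ σ ∈ A, ¬(a ∈ σ ∧ b ∈ σ)) :
    ∃ σ₀ : Set Plane, a ∈ σ₀ ∧ b ∈ σ₀ ∧ IsArrangement (insert σ₀ A) := by
  have hex : ∀ σ : A, ∃ P : Levi.PL, Levi.Rep σ.1 P := fun σ => Levi.exists_rep (hA.1 σ.1 σ.2)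
  choose L hL using hex
  have harr : Levi.IsArr L := by
    rw [Levi.isArr_iff]
    intro i j hij
    obtain ⟨p, h1, h2, -⟩ := hA.2 j.1 j.2 i.1 i.2 (fun e => hij (Subtype.ext e.symm))
    exact Levi.cr_of_crosses (hL j) (hL i) h1 h2
  obtain ⟨P, haP, hbP, hP⟩ := harr.enl (Levi.emb_ne a) (Levi.emb_ne b)
    (fun e => hab (Levi.emb_open.injective e))
    (fun i hi hi' => h i.1 i.2 ⟨(hL i a).1 hi, (hL i b).1 hi'⟩)
  have hrep : Levi.Rep (Levi.emb ⁻¹' P.K) P := fun x => Iff.rfl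
  refine ⟨Levi.emb ⁻¹' P.K, haP, hbP, ?_, ?_⟩
  · intro σ hσ
    rcases Finset.mem_insert.1 hσ with rfl | hσ
    · exact Levi.isPseudoline P
    · exact hA.1 σ hσ
  · intro σ hσ τ hτ hne
    rcases Finset.mem_insert.1 hσ with rfl | hσ
    · rcases Finset.mem_insert.1 hτ with rfl | hτ
      · exact absurd rfl hne
      · exact Levi.pair_of_cr hrep (hL ⟨τ, hτ⟩) (hP ⟨τ, hτ⟩)
    · rcases Finset.mem_insert.1 hτ with rfl | hτ
      · exact Levi.pair_of_cr (hL ⟨σ, hσ⟩) hrep (hP ⟨σ, hσ⟩).symm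
      · exact hA.2 σ hσ τ hτ hne

end
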